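/- arXiv:1908.04460 — 3 statements merged into one kernel-verified Lean document; each statement's English description precedes it below -/
import Mathlib

section
/- Let Γ be a finite simplicial graph with at least two vertices which is connected and anti-connected, and let A_Γ be its right-angled Artin group with standard generating set V(Γ)^{±1}. Then there is a partial computable function on finite lists of words over V(Γ)^{±1} whose domain is exactly the set of finite lists of words that generate a Morse subgroup of A_Γ; that is, there is a partial algorithm which, given a finite list of words, halts if the subgroup of A_Γ generated by the represented elements is Morse in A_Γ and runs forever otherwise. -/
/-!
Morseness of a finitely generated subgroup `H` of `A_Γ` is equivalent to the existence of a
finite certificate which can be verified mechanically (`RaagMorse.morse_iff_cert`), so the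
partial algorithm searches through all candidates for a certificate.

*Geometry.* Words are reduced by shuffling commuting letters and cancelling; reduced words for
the same element differ by shuffles, which solves the word problem (`wordProd_eq_one_iff`) and
shows that the Cayley graph behaves like the 1-skeleton of a CAT(0) cube complex: halfspaces
are convex (`conv_halfspace`) and convex sets have gates (`exists_gate`). If `H` lies in a convex
set `Y` at bounded distance from `H`, and the segments of `Y` in cosets of the subgroups `Lk v`
generated by links of vertices have bounded length, then points with distant gates are joined by
geodesics through the gates, because a letter `v` separating a point from its gate can only
commute past a segment of `Y` in a coset of `Lk v`. Hence the projection to `Y` is strongly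
contracting, and `H` is Morse (`morse_of_conv`).

Conversely, let `H` be Morse. Then `H` is quasiconvex, so the convex hull `Y` of a neighbourhood
of `H` is at bounded distance from `H` (`hull_bounded`). If `Y` had arbitrarily long link segments,
say `y, y k` in `Y` with `k` in `Lk v`, then the other three sides of the square spanned by `k`
and a power of `v` are a quasigeodesic near `H`, so `Y` contains a long, and by pigeonhole an
infinite, `v`-ray. The same squares spread such rays to all neighbours of `v`, and by
connectedness of `Γ` to the whole group, so that `Y` is everything and `H` has finite index
(`morse_dichotomy`).

*Certificates.* `FinIndexCert` is a finite list of cosets of `H` closed under right multiplication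
by letters. `AutCert` is a finite description of the quotient of a convex set `Y` by `H`: an
involutive deterministic automaton with complete commutation squares, whose loops at the base state
represent elements of `H` and include the generators, together with a finite list of all link
segments. Both are conditions of the form: there are finite data such that finitely many
memberships in `H` hold, and membership in `H` is semidecidable by the word problem
(`sig_finIndexCert`, `sig_autCert`).
-/

/-- The word "distance" from `g` to `h` in a group `G` with respect to a generating set `S`:
the least `n` such that `g⁻¹ * h` is a product of `n` elements of `S`. -/
noncomputable def wordDist {G : Type*} [Group G] (S : Set G) (g h : G) : ℕ :=
  sInf {n : ℕ | ∃ l : List G, l.length = n ∧ (∀ x ∈ l, x ∈ S) ∧ l.prod = g⁻¹ * h}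

/-- A discrete `(k,c)`-quasigeodesic of length `n` in `G` with the word metric of `S`. -/
noncomputable def IsQuasigeodesic {G : Type*} [Group G] (S : Set G) (k c : ℝ) (n : ℕ)
    (γ : ℕ → G) : Prop :=
  ∀ i ≤ n, ∀ j ≤ n,
    (1 / k) * |(i : ℝ) - (j : ℝ)| - c ≤ (wordDist S (γ i) (γ j) : ℝ) ∧
      (wordDist S (γ i) (γ j) : ℝ) ≤ k * |(i : ℝ) - (j : ℝ)| + c

/-- The path `γ` (of length `n`) is contained in the `L`-neighborhood of the path `γ'`
(of length `m`), with respect to the word metric of `S`. -/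
noncomputable def InNbhdOf {G : Type*} [Group G] (S : Set G) (L : ℝ) (n : ℕ) (γ : ℕ → G)
    (m : ℕ) (γ' : ℕ → G) : Prop :=
  ∀ i ≤ n, ∃ j ≤ m, (wordDist S (γ i) (γ' j) : ℝ) ≤ L

/-- The subgroup `H` of `G` is finitely generated and undistorted with respect to the word
metric of the generating set `S` of `G`. -/
noncomputable def Undistorted {G : Type*} [Group G] (S : Set G) (H : Subgroup G) : Prop :=
  ∃ T : Finset G, (T : Set G) ⊆ (H : Set G) ∧ Subgroup.closure (T : Set G) = H ∧
    ∃ k ≥ (1 : ℝ), ∃ c ≥ (0 : ℝ), ∀ h ∈ H,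
      (1 / k) * (wordDist (T : Set G) 1 h : ℝ) - c ≤ (wordDist S 1 h : ℝ) ∧
        (wordDist S 1 h : ℝ) ≤ k * (wordDist (T : Set G) 1 h : ℝ) + c

/-- The subgroup `H` of `G` is stable with respect to the word metric of the generating set
`S` of `G`: it is undistorted, and any two quasigeodesics with common endpoints on `H` fellow
travel. -/
noncomputable def IsStableSubgroup {G : Type*} [Group G] (S : Set G) (H : Subgroup G) : Prop :=
  Undistorted S H ∧
    ∀ k ≥ (1 : ℝ), ∀ c ≥ (0 : ℝ), ∃ L : ℝ, ∀ (n m : ℕ) (γ γ' : ℕ → G),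
      IsQuasigeodesic S k c n γ → IsQuasigeodesic S k c m γ' →
        γ 0 = γ' 0 → γ n = γ' m → γ 0 ∈ H → γ n ∈ H →
          InNbhdOf S L n γ m γ' ∧ InNbhdOf S L m γ' n γ

/-- The subgroup `H` of `G` is Morse with respect to the word metric of the generating set
`S` of `G`: every quasigeodesic with endpoints on `H` stays in a bounded neighborhood of `H`. -/
noncomputable def IsMorseSubgroup {G : Type*} [Group G] (S : Set G) (H : Subgroup G) : Prop :=
  ∀ k ≥ (1 : ℝ), ∀ c ≥ (0 : ℝ), ∃ M : ℝ, ∀ (n : ℕ) (γ : ℕ → G),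
    IsQuasigeodesic S k c n γ → γ 0 ∈ H → γ n ∈ H →
      ∀ i ≤ n, ∃ h ∈ H, (wordDist S (γ i) h : ℝ) ≤ M
/-- The commutation relators of the right-angled Artin group of the graph `Γ`. -/
def raagRels {V : Type*} (Γ : SimpleGraph V) : Set (FreeGroup V) :=
  {r | ∃ v w : V, Γ.Adj v w ∧
    r = FreeGroup.of v * FreeGroup.of w * (FreeGroup.of v)⁻¹ * (FreeGroup.of w)⁻¹}

/-- The right-angled Artin group `A_Γ` of the graph `Γ`. -/
abbrev RAAG {V : Type*} (Γ : SimpleGraph V) := PresentedGroup (raagRels Γ)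

/-- The element of `A_Γ` represented by a word over the alphabet `V(Γ)^{±1}`;
a letter `(v, true)` stands for the generator `v` and `(v, false)` for its inverse. -/
def wordProd {V : Type*} (Γ : SimpleGraph V) (w : List (V × Bool)) : RAAG Γ :=
  (w.map fun p => if p.2 then (PresentedGroup.of p.1 : RAAG Γ)
    else (PresentedGroup.of p.1 : RAAG Γ)⁻¹).prod

/-- The standard generating set `V(Γ)^{±1}` of `A_Γ`. -/
def raagGens {V : Type*} (Γ : SimpleGraph V) : Set (RAAG Γ) :=
  {g | ∃ v : V, g = PresentedGroup.of v ∨ g = (PresentedGroup.of v : RAAG Γ)⁻¹}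

/-- The graph `Γ` decomposes as a nontrivial join: its vertex set splits into two nonempty
parts, every vertex of one part adjacent to every vertex of the other, and the two parts
are not both singletons. -/
def IsNontrivialJoin {V : Type*} (Γ : SimpleGraph V) : Prop :=
  ∃ A B : Set V, A.Nonempty ∧ B.Nonempty ∧ Disjoint A B ∧ A ∪ B = Set.univ ∧
    (∀ a ∈ A, ∀ b ∈ B, Γ.Adj a b) ∧ ¬ ∃ a b, A = {a} ∧ B = {b}

/-- The graph `Γ` is anti-connected: it does not decompose as a nontrivial join. -/
def AntiConnected {V : Type*} (Γ : SimpleGraph V) : Prop := ¬ IsNontrivialJoin Γ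

namespace RaagMorse

/-! ### Words over `V(Γ)^{±1}`, shuffles and reduction -/

section Words

variable {V : Type}

/-- The inverse letter. -/
def linv (a : V × Bool) : V × Bool := (a.1, !a.2)

@[simp] lemma linv_fst (a : V × Bool) : (linv a).1 = a.1 := rfl
@[simp] lemma linv_linv (a : V × Bool) : linv (linv a) = a := by simp [linv]

lemma linv_ne (a : V × Bool) : linv a ≠ a := by
  intro h
  have := congrArg Prod.snd h
  simp [linv] at this

variable (Γ : SimpleGraph V)

/-- Two words are shuffle equivalent: they differ by exchanges of neighbouring letters whose
vertices are adjacent in `Γ`. -/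
inductive TEq : List (V × Bool) → List (V × Bool) → Prop
  | refl (w) : TEq w w
  | cons (a) {w w'} : TEq w w' → TEq (a :: w) (a :: w')
  | swap (a b w) : Γ.Adj a.1 b.1 → TEq (a :: b :: w) (b :: a :: w)
  | trans {u v w} : TEq u v → TEq v w → TEq u w

/-- The word rewriting relation generated by shuffles and by free cancellations
(free insertions are not allowed). -/
inductive Rw : List (V × Bool) → List (V × Bool) → Prop
  | refl (w) : Rw w w
  | cons (a) {w w'} : Rw w w' → Rw (a :: w) (a :: w')
  | swap (a b w) : Γ.Adj a.1 b.1 → Rw (a :: b :: w) (b :: a :: w)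
  | cancel (a w) : Rw (a :: linv a :: w) w
  | trans {u v w} : Rw u v → Rw v w → Rw u w

variable {Γ}

lemma TEq.symm {u v : List (V × Bool)} (h : TEq Γ u v) : TEq Γ v u := by
  induction h with
  | refl w => exact .refl w
  | cons a _ ih => exact .cons a ih
  | swap a b w h => exact .swap b a w h.symm
  | trans _ _ ih₁ ih₂ => exact ih₂.trans ih₁

lemma TEq.rw {u v : List (V × Bool)} (h : TEq Γ u v) : Rw Γ u v := by
  induction h with
  | refl w => exact .refl w
  | cons a _ ih => exact .cons a ih
  | swap a b w h => exact .swap a b w h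
  | trans _ _ ih₁ ih₂ => exact ih₁.trans ih₂

lemma TEq.perm {u v : List (V × Bool)} (h : TEq Γ u v) : u.Perm v := by
  induction h with
  | refl w => exact .refl w
  | cons a _ ih => exact .cons a ih
  | swap a b w h => exact .swap b a w
  | trans _ _ ih₁ ih₂ => exact ih₁.trans ih₂

lemma Rw.subset {u v : List (V × Bool)} (h : Rw Γ u v) : v ⊆ u := by
  induction h with
  | refl w => exact List.Subset.refl _
  | cons a _ ih => exact List.cons_subset_cons a ih
  | swap a b w h => intro x; simp; tauto
  | cancel a w => intro x; simp; tauto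
  | trans _ _ ih₁ ih₂ => exact List.Subset.trans ih₂ ih₁

lemma Rw.length_le {u v : List (V × Bool)} (h : Rw Γ u v) : v.length ≤ u.length := by
  induction h with
  | refl w => exact le_rfl
  | cons a _ ih => simpa using ih
  | swap a b w h => simp
  | cancel a w => simp; omega
  | trans _ _ ih₁ ih₂ => exact ih₂.trans ih₁

variable [DecidableEq V] (Γ) [DecidableRel Γ.Adj]

/-- `del Γ a w` removes from `w` its first letter `a` that can be shuffled to the front,
and is `none` if there is no such letter. -/
def del (a : V × Bool) : List (V × Bool) → Option (List (V × Bool))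
  | [] => none
  | b :: w => if b = a then some w else
      if Γ.Adj a.1 b.1 then (del a w).map (b :: ·) else none

/-- A word is reduced: no letter can be shuffled next to a later inverse of itself. -/
def Red : List (V × Bool) → Prop
  | [] => True
  | a :: w => del Γ (linv a) w = none ∧ Red w

/-- Left multiplication of a (reduced) word by a letter, cancelling if possible. -/
def act (a : V × Bool) (w : List (V × Bool)) : List (V × Bool) :=
  (del Γ (linv a) w).getD (a :: w)

/-- The reduced word obtained by multiplying out `w` from the right. -/
def nfw (w : List (V × Bool)) : List (V × Bool) := w.foldr (act Γ) []

variable {Γ}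

@[simp] lemma del_nil (a : V × Bool) : del Γ a [] = none := rfl

@[simp] lemma del_cons_self (a : V × Bool) (w) : del Γ a (a :: w) = some w := by simp [del]

lemma del_cons_adj {a b : V × Bool} (h : Γ.Adj a.1 b.1) (w) :
    del Γ a (b :: w) = (del Γ a w).map (b :: ·) := by
  have : b ≠ a := by rintro rfl; exact Γ.irrefl h
  simp [del, h, this]

lemma del_cons_not {a b : V × Bool} (hb : b ≠ a) (h : ¬ Γ.Adj a.1 b.1) (w) :
    del Γ a (b :: w) = none := by
  simp [del, h, hb]

lemma teq_of_del {a : V × Bool} {w x : List (V × Bool)} (h : del Γ a w = some x) :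
    TEq Γ w (a :: x) := by
  induction w generalizing x with
  | nil => simp at h
  | cons b w ih =>
    by_cases hb : b = a
    · subst hb; simp at h; subst h; exact .refl _
    by_cases hadj : Γ.Adj a.1 b.1
    · rw [del_cons_adj hadj] at h
      obtain ⟨y, hy, rfl⟩ := Option.map_eq_some_iff.1 h
      exact (TEq.cons b (ih hy)).trans (.swap _ _ _ hadj.symm)
    · simp [del_cons_not hb hadj] at h

lemma del_teq {w w' : List (V × Bool)} (h : TEq Γ w w') (a : V × Bool) :
    Option.Rel (TEq Γ) (del Γ a w) (del Γ a w') := by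
  have key : ∀ o : Option (List (V × Bool)), Option.Rel (TEq Γ) o o := by
    rintro (_ | x)
    · exact .none
    · exact .some (.refl x)
  induction h with
  | refl w => exact key _
  | @cons b w w' h ih =>
    by_cases hb : b = a
    · subst hb; simpa using Option.Rel.some h
    by_cases hadj : Γ.Adj a.1 b.1
    · rw [del_cons_adj hadj, del_cons_adj hadj]
      revert ih
      generalize del Γ a w = x, del Γ a w' = y
      rintro (h | _)
      · exact .some (.cons b h)
      · exact .none
    · rw [del_cons_not hb hadj, del_cons_not hb hadj]; exact .none
  | swap b c w hbc =>
    have hne : b ≠ c := by rintro rfl; exact Γ.irrefl hbc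
    by_cases hb : b = a
    · subst hb
      rw [del_cons_self, del_cons_adj hbc, del_cons_self]; exact .some (.refl _)
    by_cases hc : c = a
    · subst hc
      rw [del_cons_self, del_cons_adj hbc.symm, del_cons_self]; exact .some (.refl _)
    by_cases hab : Γ.Adj a.1 b.1
    · by_cases hac : Γ.Adj a.1 c.1
      · rw [del_cons_adj hab, del_cons_adj hac, del_cons_adj hac, del_cons_adj hab]
        cases del Γ a w with
        | none => exact .none
        | some x => exact .some (.swap _ _ _ hbc)
      · rw [del_cons_adj hab, del_cons_not hc hac, del_cons_not hc hac]; exact .none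
    · by_cases hac : Γ.Adj a.1 c.1
      · rw [del_cons_not hb hab, del_cons_adj hac, del_cons_not hb hab]; exact .none
      · rw [del_cons_not hb hab, del_cons_not hc hac]; exact .none
  | @trans u v w h₁ h₂ ih₁ ih₂ =>
    revert ih₁ ih₂
    generalize del Γ a u = x, del Γ a v = y, del Γ a w = z
    rintro (⟨h⟩ | _) (⟨h'⟩ | _)
    · exact .some (h.trans h')
    · exact .none

lemma del_teq_none {w w' : List (V × Bool)} (h : TEq Γ w w') (a : V × Bool) :
    del Γ a w = none ↔ del Γ a w' = none := by
  have := del_teq h a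
  revert this
  generalize del Γ a w = x, del Γ a w' = y
  rintro (_ | _) <;> simp

lemma del_teq_some {w w' x : List (V × Bool)} (h : TEq Γ w w') {a : V × Bool}
    (hx : del Γ a w = some x) : ∃ y, del Γ a w' = some y ∧ TEq Γ x y := by
  have := del_teq h a
  rw [hx] at this
  revert this
  generalize del Γ a w' = y
  rintro (h | _)
  exact ⟨_, rfl, h⟩

lemma red_teq {w w' : List (V × Bool)} (h : TEq Γ w w') : Red Γ w ↔ Red Γ w' := by
  induction h with
  | refl w => rfl
  | cons a h ih => simp only [Red, del_teq_none h, ih]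
  | swap a b w h =>
    have h1 : Γ.Adj (linv a).1 b.1 := h
    have h2 : Γ.Adj (linv b).1 a.1 := h.symm
    simp only [Red, del_cons_adj h1, del_cons_adj h2, Option.map_eq_none_iff]
    tauto
  | trans _ _ ih₁ ih₂ => exact ih₁.trans ih₂

lemma act_none {a : V × Bool} {w} (h : del Γ (linv a) w = none) : act Γ a w = a :: w := by
  simp [act, h]

lemma act_some {a : V × Bool} {w x} (h : del Γ (linv a) w = some x) : act Γ a w = x := by
  simp [act, h]

lemma act_teq {w w' : List (V × Bool)} (h : TEq Γ w w') (a : V × Bool) :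
    TEq Γ (act Γ a w) (act Γ a w') := by
  have := del_teq h (linv a)
  revert this
  unfold act
  generalize del Γ (linv a) w = x, del Γ (linv a) w' = y
  rintro (h' | _)
  · exact h'
  · exact .cons a h

lemma act_red {w : List (V × Bool)} (h : Red Γ w) (a : V × Bool) : Red Γ (act Γ a w) := by
  cases hd : del Γ (linv a) w with
  | none => rw [act_none hd]; exact ⟨hd, h⟩
  | some x => rw [act_some hd]; exact ((red_teq (teq_of_del hd)).1 h).2

lemma act_linv {w : List (V × Bool)} (h : Red Γ w) (a : V × Bool) :
    TEq Γ (act Γ a (act Γ (linv a) w)) w := by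
  cases hd : del Γ a w with
  | none =>
    rw [act_none (a := linv a) (by simpa using hd), act_some (del_cons_self _ _)]
    exact .refl w
  | some x =>
    rw [act_some (a := linv a) (by simpa using hd)]
    have h1 := ((red_teq (teq_of_del hd)).1 h).1
    rw [act_none h1]
    exact (teq_of_del hd).symm

lemma act_comm {a b : V × Bool} (hab : Γ.Adj a.1 b.1) (w : List (V × Bool)) :
    TEq Γ (act Γ a (act Γ b w)) (act Γ b (act Γ a w)) := by
  have key : ∀ {a b : V × Bool}, Γ.Adj a.1 b.1 → ∀ {x}, del Γ (linv a) w = some x →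
      del Γ (linv b) w = none → TEq Γ (act Γ a (act Γ b w)) (act Γ b (act Γ a w)) := by
    intro a b hab x ha hb
    have h1 : Γ.Adj (linv a).1 b.1 := hab
    rw [act_none hb, act_some ha, act_some (x := b :: x) (by simp [del_cons_adj h1, ha])]
    have h2 := (del_teq_none (teq_of_del ha) (linv b)).1 hb
    rw [del_cons_adj (by simpa using hab.symm)] at h2
    rw [act_none (by simpa using h2)]
    exact .refl _
  cases ha : del Γ (linv a) w with
  | none =>
    cases hb : del Γ (linv b) w with
    | none =>
      have h1 : Γ.Adj (linv a).1 b.1 := hab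
      have h2 : Γ.Adj (linv b).1 a.1 := hab.symm
      rw [act_none ha, act_none hb, act_none (by simp [del_cons_adj h1, ha]),
        act_none (by simp [del_cons_adj h2, hb])]
      exact .swap _ _ _ hab
    | some y => exact (key hab.symm hb ha).symm
  | some x =>
    cases hb : del Γ (linv b) w with
    | none => exact key hab ha hb
    | some y =>
      obtain ⟨z, hz, hyz⟩ := del_teq_some (teq_of_del ha) hb
      rw [del_cons_adj (by simpa using hab.symm)] at hz
      obtain ⟨t, ht, rfl⟩ := Option.map_eq_some_iff.1 hz
      rw [act_some ha, act_some hb, act_some ht]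
      have := act_teq hyz a
      rwa [act_some (del_cons_self _ _)] at this

lemma rw_act (a : V × Bool) (w : List (V × Bool)) : Rw Γ (a :: w) (act Γ a w) := by
  cases hd : del Γ (linv a) w with
  | none => rw [act_none hd]; exact .refl _
  | some x =>
    rw [act_some hd]
    exact (Rw.cons a (teq_of_del hd).rw).trans (.cancel a x)

lemma rw_nfw (w : List (V × Bool)) : Rw Γ w (nfw Γ w) := by
  induction w with
  | nil => exact .refl _
  | cons a w ih => exact (Rw.cons a ih).trans (rw_act a _)

lemma red_nfw (w : List (V × Bool)) : Red Γ (nfw Γ w) := by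
  induction w with
  | nil => trivial
  | cons a w ih => exact act_red ih a

end Words

/-! ### The normal form theorem -/

section NormalForm

variable {V : Type} (Γ : SimpleGraph V)

/-- The generator or inverse generator named by a letter. -/
def lt (a : V × Bool) : RAAG Γ :=
  if a.2 then (PresentedGroup.of a.1 : RAAG Γ) else (PresentedGroup.of a.1 : RAAG Γ)⁻¹

variable {Γ}

@[simp] lemma wordProd_nil : wordProd Γ ([] : List (V × Bool)) = 1 := rfl

@[simp] lemma wordProd_cons (a : V × Bool) (w) :
    wordProd Γ (a :: w) = lt Γ a * wordProd Γ w := by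
  simp [wordProd, lt]

@[simp] lemma wordProd_append (u w : List (V × Bool)) :
    wordProd Γ (u ++ w) = wordProd Γ u * wordProd Γ w := by
  simp [wordProd]

@[simp] lemma lt_linv (a : V × Bool) : lt Γ (linv a) = (lt Γ a)⁻¹ := by
  rcases a with ⟨v, _ | _⟩ <;> simp [lt, linv]

lemma lt_comm {a b : V × Bool} (h : Γ.Adj a.1 b.1) : Commute (lt Γ a) (lt Γ b) := by
  have base : Commute (PresentedGroup.of a.1 : RAAG Γ) (PresentedGroup.of b.1) := by
    have : PresentedGroup.mk (raagRels Γ) (FreeGroup.of a.1 * FreeGroup.of b.1 *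
        (FreeGroup.of a.1)⁻¹ * (FreeGroup.of b.1)⁻¹) = 1 :=
      PresentedGroup.one_of_mem ⟨a.1, b.1, h, rfl⟩
    simp only [map_mul, map_inv] at this
    change PresentedGroup.mk (raagRels Γ) (FreeGroup.of a.1) *
      PresentedGroup.mk (raagRels Γ) (FreeGroup.of b.1) = _ * _
    have h2 := mul_inv_eq_one.1 this
    exact mul_inv_eq_iff_eq_mul.1 h2
  unfold lt
  split_ifs <;> simp [base]

lemma Rw.wordProd_eq {u v : List (V × Bool)} (h : Rw Γ u v) : wordProd Γ u = wordProd Γ v := by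
  induction h with
  | refl w => rfl
  | cons a _ ih => simp [ih]
  | swap a b w h => simp [← mul_assoc, (lt_comm h).eq]
  | cancel a w => simp
  | trans _ _ ih₁ ih₂ => exact ih₁.trans ih₂

lemma exists_word (g : RAAG Γ) : ∃ w, wordProd Γ w = g := by
  let H : Subgroup (RAAG Γ) :=
    { carrier := {g | ∃ w, wordProd Γ w = g}
      one_mem' := ⟨[], rfl⟩
      mul_mem' := by
        rintro _ _ ⟨u, rfl⟩ ⟨v, rfl⟩
        exact ⟨u ++ v, by simp⟩
      inv_mem' := by
        rintro _ ⟨u, rfl⟩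
        refine ⟨(u.map linv).reverse, ?_⟩
        induction u with
        | nil => simp
        | cons a u ih => simp_all }
  exact PresentedGroup.generated_by (raagRels Γ) H (fun v => ⟨[(v, true)], by simp [lt]⟩) g

variable [DecidableEq V] (Γ) [DecidableRel Γ.Adj]

/-- Shuffle equivalence on reduced words. -/
def redSetoid : Setoid {w : List (V × Bool) // Red Γ w} where
  r u v := TEq Γ u.1 v.1
  iseqv := ⟨fun u => .refl u.1, fun h => h.symm, fun h h' => h.trans h'⟩

/-- A letter acts on the shuffle classes of reduced words. -/
def actQ (a : V × Bool) : Quotient (redSetoid Γ) → Quotient (redSetoid Γ) :=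
  Quotient.map (fun w => ⟨act Γ a w.1, act_red w.2 a⟩) fun _ _ h => act_teq h a

lemma actQ_linv (a : V × Bool) (q) : actQ Γ a (actQ Γ (linv a) q) = q := by
  induction q using Quotient.inductionOn with
  | h w => exact Quotient.sound (act_linv w.2 a)

/-- The permutation of the shuffle classes of reduced words given by a vertex. -/
def permQ (v : V) : Equiv.Perm (Quotient (redSetoid Γ)) where
  toFun := actQ Γ (v, true)
  invFun := actQ Γ (v, false)
  left_inv := actQ_linv Γ (v, false)
  right_inv := actQ_linv Γ (v, true)

/-- The action of the group on the shuffle classes of reduced words. -/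
def homQ : RAAG Γ →* Equiv.Perm (Quotient (redSetoid Γ)) :=
  PresentedGroup.toGroup (f := permQ Γ) (by
    rintro _ ⟨v, w, h, rfl⟩
    have : permQ Γ v * permQ Γ w = permQ Γ w * permQ Γ v := by
      ext q
      induction q using Quotient.inductionOn with
      | h x => exact Quotient.sound (act_comm (a := (v, true)) (b := (w, true)) h x.1)
    simp [this])

variable {Γ}

lemma homQ_lt (a : V × Bool) (q) : homQ Γ (lt Γ a) q = actQ Γ a q := by
  rcases a with ⟨v, _ | _⟩
  · simp only [lt, homQ, map_inv, Bool.false_eq_true, if_false]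
    rw [PresentedGroup.toGroup.of]; rfl
  · simp only [lt, homQ, if_true]
    rw [PresentedGroup.toGroup.of]; rfl

lemma homQ_red {w : List (V × Bool)} (h : Red Γ w) :
    homQ Γ (wordProd Γ w) (Quotient.mk (redSetoid Γ) ⟨[], trivial⟩) =
      Quotient.mk (redSetoid Γ) ⟨w, h⟩ := by
  induction w with
  | nil => simp
  | cons a w ih =>
    rw [wordProd_cons, map_mul, Equiv.Perm.mul_apply, ih h.2, homQ_lt]
    refine Quotient.sound ?_
    change TEq Γ (act Γ a w) (a :: w)
    rw [act_none h.1]; exact .refl _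

/-- Normal form theorem: reduced words representing the same element are shuffles of each
other. -/
theorem teq_of_red {u v : List (V × Bool)} (hu : Red Γ u) (hv : Red Γ v)
    (h : wordProd Γ u = wordProd Γ v) : TEq Γ u v := by
  have h1 := homQ_red hu
  rw [h, homQ_red hv] at h1
  exact (Quotient.exact h1).symm

theorem rw_of_red {u v : List (V × Bool)} (hv : Red Γ v)
    (h : wordProd Γ u = wordProd Γ v) : Rw Γ u v :=
  (rw_nfw u).trans (teq_of_red (red_nfw u) hv ((rw_nfw u).wordProd_eq.symm.trans h)).rw

lemma wordProd_eq_one_iff (w : List (V × Bool)) : wordProd Γ w = 1 ↔ nfw Γ w = [] := by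
  constructor
  · intro h
    exact List.perm_nil.1 (teq_of_red (red_nfw w) (v := []) trivial
      ((rw_nfw w).wordProd_eq.symm.trans h)).perm
  · intro h
    rw [(rw_nfw (Γ := Γ) w).wordProd_eq, h, wordProd_nil]

end NormalForm

/-! ### Word length and first letters -/

section Length

variable {V : Type} {Γ : SimpleGraph V} [DecidableEq V] [DecidableRel Γ.Adj]

/-- A reduced word representing `g`. -/
noncomputable def rword (g : RAAG Γ) : List (V × Bool) := nfw Γ (exists_word g).choose

@[simp] lemma wordProd_rword (g : RAAG Γ) : wordProd Γ (rword g) = g := by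
  rw [rword, ← (rw_nfw _).wordProd_eq, (exists_word g).choose_spec]

lemma red_rword (g : RAAG Γ) : Red Γ (rword g) := red_nfw _

/-- The word length of `g`. -/
noncomputable def len (g : RAAG Γ) : ℕ := (rword g).length

lemma len_of_red {w : List (V × Bool)} (h : Red Γ w) : len (wordProd Γ w) = w.length :=
  (teq_of_red (red_rword _) h (wordProd_rword _)).perm.length_eq

lemma len_wordProd_le (w : List (V × Bool)) : len (wordProd Γ w) ≤ w.length :=
  (rw_of_red (red_rword _) (wordProd_rword (wordProd Γ w)).symm).length_le

@[simp] lemma len_one : len (1 : RAAG Γ) = 0 := by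
  have := len_wordProd_le (Γ := Γ) []
  simpa using this

lemma eq_one_of_len {g : RAAG Γ} (h : len g = 0) : g = 1 := by
  rw [← wordProd_rword g, List.length_eq_zero_iff.1 h, wordProd_nil]

lemma len_mul_le (g h : RAAG Γ) : len (g * h) ≤ len g + len h := by
  have := len_wordProd_le (Γ := Γ) (rword g ++ rword h)
  simpa [len] using this

lemma len_lt_le (a : V × Bool) : len (lt Γ a) ≤ 1 := by
  have := len_wordProd_le (Γ := Γ) [a]
  simpa using this

/-- The formal inverse of a word. -/
def winv (w : List (V × Bool)) : List (V × Bool) := (w.map linv).reverse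

lemma wordProd_winv (w : List (V × Bool)) : wordProd Γ (winv w) = (wordProd Γ w)⁻¹ := by
  induction w with
  | nil => simp [winv]
  | cons a u ih => simp_all [winv]

@[simp] lemma len_inv (g : RAAG Γ) : len g⁻¹ = len g := by
  have key : ∀ g : RAAG Γ, len g⁻¹ ≤ len g := by
    intro g
    have := len_wordProd_le (Γ := Γ) (winv (rword g))
    rw [wordProd_winv, wordProd_rword] at this
    simpa [winv, len] using this
  apply le_antisymm (key g)
  have := key g⁻¹
  rwa [inv_inv] at this

lemma len_inv_mul_comm (g h : RAAG Γ) : len (g⁻¹ * h) = len (h⁻¹ * g) := by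
  rw [← len_inv]; simp

lemma len_tri (x y z : RAAG Γ) : len (x⁻¹ * z) ≤ len (x⁻¹ * y) + len (y⁻¹ * z) := by
  have := len_mul_le (x⁻¹ * y) (y⁻¹ * z)
  simpa [mul_assoc] using this

lemma wordDist_eq (g h : RAAG Γ) : wordDist (raagGens Γ) g h = len (g⁻¹ * h) := by
  unfold wordDist
  apply le_antisymm
  · apply Nat.sInf_le
    refine ⟨(rword (g⁻¹ * h)).map (lt Γ), by simp [len], ?_, ?_⟩
    · intro x hx
      obtain ⟨⟨v, b⟩, -, rfl⟩ := List.mem_map.1 hx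
      cases b
      · exact ⟨v, Or.inr (by simp [lt])⟩
      · exact ⟨v, Or.inl (by simp [lt])⟩
    · conv_rhs => rw [← wordProd_rword (g⁻¹ * h)]
      rfl
  · have hne : {n : ℕ | ∃ l : List (RAAG Γ), l.length = n ∧ (∀ x ∈ l, x ∈ raagGens Γ) ∧
        l.prod = g⁻¹ * h}.Nonempty := by
      refine ⟨_, (rword (g⁻¹ * h)).map (lt Γ), rfl, ?_, ?_⟩
      · intro x hx
        obtain ⟨⟨v, b⟩, -, rfl⟩ := List.mem_map.1 hx
        cases b
        · exact ⟨v, Or.inr (by simp [lt])⟩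
        · exact ⟨v, Or.inl (by simp [lt])⟩
      · conv_rhs => rw [← wordProd_rword (g⁻¹ * h)]
        rfl
    obtain ⟨l, hl, hS, hp⟩ := Nat.sInf_mem hne
    rw [← hl, ← hp]
    clear hl hp hne
    induction l with
    | nil => simp
    | cons x l ih =>
      have h1 : len x ≤ 1 := by
        obtain ⟨v, rfl | rfl⟩ := hS x (by simp)
        · simpa [lt] using len_lt_le (Γ := Γ) (v, true)
        · simpa [lt] using len_lt_le (Γ := Γ) (v, true)
      have h2 := ih fun y hy => hS y (by simp [hy])
      have h3 := len_mul_le x l.prod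
      simp only [List.prod_cons, List.length_cons]
      omega

/-- `a` is a possible first letter of a geodesic word for `g`. Equivalently, the hyperplane
dual to the edge from `1` to `a` separates `1` from `g`. -/
def Fst (a : V × Bool) (g : RAAG Γ) : Prop := len ((lt Γ a)⁻¹ * g) < len g

lemma del_length {a : V × Bool} {w x} (h : del Γ a w = some x) : w.length = x.length + 1 := by
  simpa using (teq_of_del h).perm.length_eq

lemma len_del_some {a : V × Bool} {w x} (hw : Red Γ w) (h : del Γ a w = some x) :
    len ((lt Γ a)⁻¹ * wordProd Γ w) + 1 = len (wordProd Γ w) := by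
  have h1 := teq_of_del h
  have h2 := (red_teq h1).1 hw
  rw [len_of_red hw, h1.rw.wordProd_eq, wordProd_cons, inv_mul_cancel_left, len_of_red h2.2,
    del_length h]

lemma len_del_none {a : V × Bool} {w} (hw : Red Γ w) (h : del Γ a w = none) :
    len ((lt Γ a)⁻¹ * wordProd Γ w) = len (wordProd Γ w) + 1 := by
  have h2 : Red Γ (linv a :: w) := ⟨by simpa using h, hw⟩
  have := len_of_red h2
  rw [wordProd_cons, lt_linv] at this
  rw [this, len_of_red hw]; simp

lemma fst_iff_del {a : V × Bool} {w} (hw : Red Γ w) :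
    Fst a (wordProd Γ w) ↔ del Γ a w ≠ none := by
  unfold Fst
  cases h : del Γ a w with
  | none => simp [len_del_none hw h]
  | some x => have := len_del_some hw h; simp; omega

lemma Fst.len_eq {a : V × Bool} {g : RAAG Γ} (h : Fst a g) :
    len ((lt Γ a)⁻¹ * g) + 1 = len g := by
  rw [← wordProd_rword g] at h ⊢
  cases hd : del Γ a (rword g) with
  | none => exact absurd hd ((fst_iff_del (red_rword g)).1 h)
  | some x => exact len_del_some (red_rword g) hd

lemma len_of_not_fst {a : V × Bool} {g : RAAG Γ} (h : ¬ Fst a g) :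
    len ((lt Γ a)⁻¹ * g) = len g + 1 := by
  rw [← wordProd_rword g] at h ⊢
  rw [fst_iff_del (red_rword g), not_not] at h
  exact len_del_none (red_rword g) h

lemma fst_of_len {a : V × Bool} {g : RAAG Γ} (h : len ((lt Γ a)⁻¹ * g) ≤ len g) : Fst a g := by
  by_contra h'
  have := len_of_not_fst h'
  omega

lemma fst_of_mul {a : V × Bool} {g : RAAG Γ} (h : len g < len (lt Γ a * g)) :
    Fst a (lt Γ a * g) := by
  simpa [Fst] using h

lemma red_of_len {w : List (V × Bool)} (h : len (wordProd Γ w) = w.length) : Red Γ w := by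
  induction w with
  | nil => trivial
  | cons a w ih =>
    rw [wordProd_cons, List.length_cons] at h
    have h1 := len_wordProd_le (Γ := Γ) w
    have h2 := len_mul_le (lt Γ a) (wordProd Γ w)
    have h3 := len_lt_le (Γ := Γ) a
    have hw : Red Γ w := ih (by omega)
    refine ⟨?_, hw⟩
    by_contra hd
    have := (fst_iff_del hw).2 hd
    unfold Fst at this
    rw [lt_linv, inv_inv] at this
    omega

lemma exists_first {g : RAAG Γ} (h : g ≠ 1) : ∃ a, Fst a g := by
  cases hw : rword g with
  | nil => exact absurd (by rw [← wordProd_rword g, hw, wordProd_nil]) h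
  | cons a w =>
    refine ⟨a, ?_⟩
    rw [← wordProd_rword g, fst_iff_del (red_rword g), hw]
    simp

lemma exists_last {g : RAAG Γ} (h : g ≠ 1) :
    ∃ (b : V × Bool) (g' : RAAG Γ), g = g' * lt Γ b ∧ len g = len g' + 1 := by
  obtain ⟨a, ha⟩ := exists_first (g := g⁻¹) (by simpa using h)
  refine ⟨linv a, g * lt Γ a, by simp, ?_⟩
  have := ha.len_eq
  rw [← len_inv] at this
  simp at this
  omega

lemma fst_lt {a b : V × Bool} (h : Fst a (lt Γ b)) : a = b := by
  have hr : Red Γ [b] := ⟨rfl, trivial⟩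
  have : lt Γ b = wordProd Γ [b] := by simp
  rw [this, fst_iff_del hr] at h
  by_contra hne
  apply h
  simp [del, Ne.symm hne]

lemma len_lt (a : V × Bool) : len (lt Γ a) = 1 := by
  have hr : Red Γ [a] := ⟨rfl, trivial⟩
  simpa using len_of_red hr

variable (Γ) in
/-- The subgroup generated by the link of a vertex. -/
def Lk (v : V) : Subgroup (RAAG Γ) where
  carrier := {g | ∃ w, (∀ a ∈ w, Γ.Adj v a.1) ∧ wordProd Γ w = g}
  one_mem' := ⟨[], by simp⟩
  mul_mem' := by
    rintro _ _ ⟨u, hu, rfl⟩ ⟨w, hw, rfl⟩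
    refine ⟨u ++ w, ?_, by simp⟩
    intro a ha
    rcases List.mem_append.1 ha with h | h
    exacts [hu a h, hw a h]
  inv_mem' := by
    rintro _ ⟨u, hu, rfl⟩
    refine ⟨winv u, ?_, wordProd_winv u⟩
    intro a ha
    obtain ⟨b, hb, rfl⟩ := List.mem_map.1 (List.mem_reverse.1 ha)
    exact hu b hb

lemma wordProd_mem_Lk {v : V} {w : List (V × Bool)} (h : ∀ a ∈ w, Γ.Adj v a.1) :
    wordProd Γ w ∈ Lk Γ v := ⟨w, h, rfl⟩

lemma lt_mem_Lk {v : V} {a : V × Bool} (h : Γ.Adj v a.1) : lt Γ a ∈ Lk Γ v :=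
  ⟨[a], by simpa using h, by simp⟩

lemma adj_of_mem_Lk {v : V} {g : RAAG Γ} (h : g ∈ Lk Γ v) {w : List (V × Bool)}
    (hw : Red Γ w) (hg : wordProd Γ w = g) : ∀ a ∈ w, Γ.Adj v a.1 := by
  obtain ⟨u, hu, rfl⟩ := h
  exact fun a ha => hu a ((rw_of_red hw hg.symm).subset ha)

lemma Lk_comm {a : V × Bool} {g : RAAG Γ} (h : g ∈ Lk Γ a.1) : Commute (lt Γ a) g := by
  obtain ⟨u, hu, rfl⟩ := h
  induction u with
  | nil => simp
  | cons b u ih =>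
    rw [wordProd_cons]
    exact (lt_comm (hu b (by simp))).mul_right (ih fun a ha => hu a (by simp [ha]))

lemma mem_of_del {a : V × Bool} {w x} (h : del Γ a w = some x) : a ∈ w :=
  (teq_of_del h).perm.mem_iff.2 (by simp)

lemma not_fst_of_Lk {a : V × Bool} {g : RAAG Γ} (h : g ∈ Lk Γ a.1) : ¬ Fst a g := by
  intro hf
  rw [← wordProd_rword g, fst_iff_del (red_rword g)] at hf
  obtain ⟨x, hx⟩ := Option.ne_none_iff_exists'.1 hf
  exact Γ.irrefl (adj_of_mem_Lk h (red_rword g) (wordProd_rword g) a (mem_of_del hx))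

lemma len_lt_mul_Lk {a : V × Bool} {g : RAAG Γ} (h : g ∈ Lk Γ a.1) :
    len (lt Γ a * g) = len g + 1 := by
  have := len_of_not_fst (a := linv a) (g := g) (not_fst_of_Lk (by simpa using h))
  simpa using this

lemma del_append {s : V × Bool} {u w : List (V × Bool)} (h : del Γ s (u ++ w) ≠ none) :
    del Γ s u ≠ none ∨ ((∀ a ∈ u, Γ.Adj s.1 a.1) ∧ del Γ s w ≠ none) := by
  induction u with
  | nil => right; simpa using h
  | cons b u ih =>
    by_cases hb : b = s
    · subst hb; left; simp
    by_cases hadj : Γ.Adj s.1 b.1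
    · rw [List.cons_append, del_cons_adj hadj] at h
      rw [del_cons_adj hadj]
      rcases ih (by simpa using h) with h' | ⟨h1, h2⟩
      · left; simpa using h'
      · right; exact ⟨List.forall_mem_cons.2 ⟨hadj, h1⟩, h2⟩
    · rw [List.cons_append, del_cons_not hb hadj] at h
      exact absurd rfl h

/-- A first letter of a geodesic product `g * h` is a first letter of `g`, or it commutes
with `g`, lies outside the support of `g`, and is a first letter of `h`. -/
lemma fst_mul {s : V × Bool} {g h : RAAG Γ} (hl : len (g * h) = len g + len h)
    (hs : Fst s (g * h)) : Fst s g ∨ (g ∈ Lk Γ s.1 ∧ Fst s h) := by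
  have hred : Red Γ (rword g ++ rword h) := red_of_len (by
    rw [wordProd_append, wordProd_rword, wordProd_rword, hl, List.length_append]; rfl)
  have h1 : Fst s (wordProd Γ (rword g ++ rword h)) := by simpa using hs
  rw [fst_iff_del hred] at h1
  rcases del_append h1 with h2 | ⟨h2, h3⟩
  · left
    rwa [← fst_iff_del (red_rword g), wordProd_rword] at h2
  · right
    rw [← fst_iff_del (red_rword h), wordProd_rword] at h3
    refine ⟨?_, h3⟩
    rw [← wordProd_rword g]
    exact wordProd_mem_Lk h2

/-- If `g⁻¹ * h` is not a geodesic product, then `g` and `h` share a first letter. -/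
lemma exists_common_first {g h : RAAG Γ} (hl : len (g⁻¹ * h) < len g + len h) :
    ∃ s, Fst s g ∧ Fst s h := by
  induction hn : len g generalizing g with
  | zero =>
    obtain rfl := eq_one_of_len hn
    simp at hl
  | succ n ih =>
    have hg1 : g ≠ 1 := by rintro rfl; simp at hn
    obtain ⟨b, g', rfl, hg⟩ := exists_last hg1
    by_cases hc : len (g'⁻¹ * h) < len g' + len h
    · obtain ⟨s, h1, h2⟩ := ih hc (by omega)
      refine ⟨s, ?_, h2⟩
      have h3 := h1.len_eq
      have h4 := len_mul_le ((lt Γ s)⁻¹ * g') (lt Γ b)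
      have h5 := len_lt_le (Γ := Γ) b
      unfold Fst
      rw [← mul_assoc]
      omega
    · have h1 := len_mul_le g'⁻¹ h
      rw [len_inv] at h1
      have h2 : len (g'⁻¹ * h) = len g'⁻¹ + len h := by rw [len_inv]; omega
      have h3 : Fst b (g'⁻¹ * h) := by
        apply fst_of_len
        simp only [mul_inv_rev, mul_assoc] at hl
        rw [len_inv] at h2
        omega
      rcases fst_mul h2 h3 with h4 | ⟨h4, h5⟩
      · exfalso
        have h6 := h4.len_eq
        rw [← mul_inv_rev, len_inv, len_inv] at h6
        omega
      · refine ⟨b, ?_, h5⟩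
        have hc := (Lk_comm ((Subgroup.inv_mem_iff _).1 h4)).eq
        rw [← hc] at hg ⊢
        exact fst_of_mul (by omega)

/-- The exchange property: an edge leaving the halfspace of `s` is parallel to `s`. -/
lemma exchange {s t : V × Bool} {z : RAAG Γ} (h1 : Fst s z) (h2 : ¬ Fst s (z * lt Γ t)) :
    (lt Γ s)⁻¹ * z = z * lt Γ t := by
  obtain ⟨z', rfl⟩ : ∃ z', z = lt Γ s * z' := ⟨(lt Γ s)⁻¹ * z, by simp⟩
  have e1 := h1.len_eq
  have e2 := len_of_not_fst h2
  rw [inv_mul_cancel_left] at e1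
  rw [mul_assoc, inv_mul_cancel_left] at e2
  have e3 := len_mul_le z' (lt Γ t)
  have e4 := len_lt (Γ := Γ) t
  have f1 : Fst t (lt Γ s * z')⁻¹ := by
    unfold Fst
    rw [← mul_inv_rev, len_inv, len_inv, mul_assoc]
    omega
  have e6 : len (lt Γ s * z') ≤ len (lt Γ s * (z' * lt Γ t)) + 1 := by
    have := len_mul_le (lt Γ s * (z' * lt Γ t)) (lt Γ t)⁻¹
    rw [len_inv, e4] at this
    simpa [mul_assoc] using this
  rw [mul_inv_rev] at f1
  have hadd : len (z'⁻¹ * (lt Γ s)⁻¹) = len z'⁻¹ + len (lt Γ s)⁻¹ := by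
    rw [← mul_inv_rev, len_inv, len_inv, len_inv, len_lt]; omega
  rcases fst_mul hadd f1 with f2 | ⟨f2, f3⟩
  · exfalso
    have := f2.len_eq
    rw [← mul_inv_rev, len_inv, len_inv] at this
    omega
  · rw [← lt_linv] at f3
    obtain rfl := fst_lt f3
    have hc := (Lk_comm (a := s) ((Subgroup.inv_mem_iff _).1 f2)).eq
    rw [inv_mul_cancel_left, hc, lt_linv, mul_inv_cancel_right]

/-- Any two elements have a common prefix after which their product is geodesic. -/
lemma exists_common_prefix (g h : RAAG Γ) : ∃ m g' h' : RAAG Γ, g = m * g' ∧ h = m * h' ∧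
    len g = len m + len g' ∧ len h = len m + len h' ∧ len (g'⁻¹ * h') = len g' + len h' := by
  induction hn : len g generalizing g h with
  | zero =>
    refine ⟨1, g, h, by simp, by simp, by simp [hn], by simp, ?_⟩
    obtain rfl := eq_one_of_len hn
    simp
  | succ n ih =>
    by_cases hc : len (g⁻¹ * h) < len g + len h
    · obtain ⟨s, h1, h2⟩ := exists_common_first hc
      have e1 := h1.len_eq
      have e2 := h2.len_eq
      obtain ⟨m, g', h', q1, q2, q3, q4, q5⟩ :=
        ih ((lt Γ s)⁻¹ * g) ((lt Γ s)⁻¹ * h) (by omega)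
      have r1 : g = lt Γ s * m * g' := by rw [mul_assoc, ← q1]; simp
      have r2 : h = lt Γ s * m * h' := by rw [mul_assoc, ← q2]; simp
      have t1 := len_mul_le (lt Γ s * m) g'
      have t2 := len_mul_le (lt Γ s) m
      have t3 := len_lt (Γ := Γ) s
      rw [← r1] at t1
      refine ⟨lt Γ s * m, g', h', r1, r2, by omega, by omega, q5⟩
    · refine ⟨1, g, h, by simp, by simp, by simp [hn], by simp, ?_⟩
      have := len_mul_le g⁻¹ h
      rw [len_inv] at this
      omega

end Length

/-! ### Convex sets and convex hulls -/

section Convex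

variable {V : Type} {Γ : SimpleGraph V} [DecidableEq V] [DecidableRel Γ.Adj]

/-- A set of group elements is convex: it contains all geodesics between its points. -/
def Conv (Y : Set (RAAG Γ)) : Prop :=
  ∀ x ∈ Y, ∀ y ∈ Y, ∀ z, len (x⁻¹ * z) + len (z⁻¹ * y) = len (x⁻¹ * y) → z ∈ Y

lemma fst_cross {s : V × Bool} (w : List (V × Bool)) {x : RAAG Γ} (h1 : Fst s x)
    (h2 : ¬ Fst s (x * wordProd Γ w)) :
    len (((lt Γ s)⁻¹ * x)⁻¹ * (x * wordProd Γ w)) + 1 ≤ w.length := by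
  induction w generalizing x with
  | nil => simp at h2; exact absurd h1 h2
  | cons a w ih =>
    rw [wordProd_cons] at h2 ⊢
    rw [← mul_assoc x] at h2 ⊢
    by_cases hx : Fst s (x * lt Γ a)
    · have h3 := ih hx h2
      have h4 := len_mul_le (lt Γ a)
        (((lt Γ s)⁻¹ * (x * lt Γ a))⁻¹ * (x * lt Γ a * wordProd Γ w))
      rw [len_lt] at h4
      have h5 : lt Γ a * (((lt Γ s)⁻¹ * (x * lt Γ a))⁻¹ * (x * lt Γ a * wordProd Γ w)) =
        ((lt Γ s)⁻¹ * x)⁻¹ * (x * lt Γ a * wordProd Γ w) := by group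
      rw [h5] at h4
      simp only [List.length_cons]
      omega
    · rw [exchange h1 hx, inv_mul_cancel_left]
      have := len_wordProd_le (Γ := Γ) w
      simpa using this

lemma fst_cross_dist {s : V × Bool} {x z : RAAG Γ} (h1 : Fst s x) (h2 : ¬ Fst s z) :
    len (((lt Γ s)⁻¹ * x)⁻¹ * z) + 1 ≤ len (x⁻¹ * z) := by
  have e : x * wordProd Γ (rword (x⁻¹ * z)) = z := by simp
  have := fst_cross (rword (x⁻¹ * z)) h1 (by rwa [e])
  rwa [e] at this

lemma conv_halfspace (s : V × Bool) : Conv {z : RAAG Γ | Fst s z} := by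
  intro x hx y hy z hz
  by_contra hzs
  have h1 := fst_cross_dist hx hzs
  have h2 := fst_cross_dist hy hzs
  have h3 := len_tri ((lt Γ s)⁻¹ * x) z ((lt Γ s)⁻¹ * y)
  have h4 : ((lt Γ s)⁻¹ * x)⁻¹ * ((lt Γ s)⁻¹ * y) = x⁻¹ * y := by group
  rw [h4] at h3
  rw [len_inv_mul_comm _ z, len_inv_mul_comm y z] at h2
  omega

/-- The convex hull of `A`: the intersection of all halfspaces containing `A`. -/
def Hull (A : Set (RAAG Γ)) : Set (RAAG Γ) :=
  {x | ∀ (g : RAAG Γ) (s : V × Bool), (∀ a ∈ A, Fst s (g⁻¹ * a)) → Fst s (g⁻¹ * x)}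

lemma subset_hull (A : Set (RAAG Γ)) : A ⊆ Hull A := fun x hx _ _ h => h x hx

lemma conv_hull (A : Set (RAAG Γ)) : Conv (Hull A) := by
  intro x hx y hy z hz g s h
  refine conv_halfspace s _ (hx g s h) _ (hy g s h) _ ?_
  simpa [mul_assoc] using hz

lemma hull_smul {A : Set (RAAG Γ)} {h : RAAG Γ} (hA : ∀ a ∈ A, h * a ∈ A) {x : RAAG Γ}
    (hx : x ∈ Hull A) : h * x ∈ Hull A := by
  intro g s H
  have := hx (h⁻¹ * g) s fun a ha => by simpa [mul_assoc] using H _ (hA a ha)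
  simpa [mul_assoc] using this

lemma finite_ball [Finite V] (M : ℕ) : {g : RAAG Γ | len g ≤ M}.Finite := by
  have : Finite (V × Bool) := inferInstance
  refine ((List.finite_length_le (V × Bool) M).image (wordProd Γ)).subset ?_
  intro g hg
  exact ⟨rword g, hg, by simp⟩

end Convex
/-! ### The hull of a quasiconvex set is bounded around the set -/

section HullBound

variable {V : Type} {Γ : SimpleGraph V} [DecidableEq V] [DecidableRel Γ.Adj]

/-- Every letter `s` of a geodesic from a point `a ∈ A` to a point of the hull of `A` is
dual to the last letter of a geodesic prefix `p` which lies between `a` and another point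
of `A`; when `a` is nearest to the hull point, this prefix is short. -/
lemma hull_prefix {A : Set (RAAG Γ)} {M : ℕ}
    (hM : ∀ a ∈ A, ∀ b ∈ A, ∀ z, len (a⁻¹ * z) + len (z⁻¹ * b) = len (a⁻¹ * b) →
      ∃ a' ∈ A, len (a'⁻¹ * z) ≤ M)
    {a u r : RAAG Γ} {s : V × Bool} (ha : a ∈ A) (hx : a * (u * lt Γ s * r) ∈ Hull A)
    (hmin : ∀ a' ∈ A, len (u * lt Γ s * r) ≤ len (a'⁻¹ * (a * (u * lt Γ s * r))))
    (hl : len (u * lt Γ s * r) = len u + 1 + len r) :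
    ∃ p, len p ≤ M ∧ len p + len (p⁻¹ * (u * lt Γ s)) = len u + 1 ∧
      len u < len p + len (p⁻¹ * u) := by
  have hus : len (u * lt Γ s) = len u + 1 := by
    have h1 := len_mul_le (u * lt Γ s) r
    have h2 := len_mul_le u (lt Γ s)
    rw [len_lt] at h2
    omega
  -- the hull point lies beyond the hyperplane crossed by `s`, hence so does a point of `A`
  obtain ⟨a', ha', hna⟩ : ∃ a' ∈ A, ¬ Fst (linv s) ((a * (u * lt Γ s))⁻¹ * a') := by
    by_contra! hcon
    have h1 := hx _ _ hcon
    have h2 : (a * (u * lt Γ s))⁻¹ * (a * (u * lt Γ s * r)) = r := by group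
    rw [h2] at h1
    have h3 := h1.len_eq
    have h4 := len_mul_le u (lt Γ s * r)
    rw [lt_linv, inv_inv] at h3
    rw [← mul_assoc] at h4
    omega
  set h := a⁻¹ * a' with hh
  have hz : Fst s (u⁻¹ * h) := by
    have h1 := len_of_not_fst hna
    rw [lt_linv, inv_inv] at h1
    have h2 : lt Γ s * ((a * (u * lt Γ s))⁻¹ * a') = u⁻¹ * h := by rw [hh]; group
    have h3 : (a * (u * lt Γ s))⁻¹ * a' = (lt Γ s)⁻¹ * (u⁻¹ * h) := by rw [hh]; group
    rw [h2, h3] at h1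
    unfold Fst
    omega
  obtain ⟨m, u', h', hu, hhm, hlu, hlh, hl'⟩ := exists_common_prefix u h
  have hz' : u⁻¹ * h = u'⁻¹ * h' := by rw [hu, hhm]; group
  rw [hz'] at hz
  rw [← len_inv u'] at hl'
  rcases fst_mul hl' hz with hf | ⟨hk, hf⟩
  · exfalso
    have h1 := hf.len_eq
    rw [len_inv, ← mul_inv_rev, len_inv] at h1
    have h2 := len_mul_le m (u' * lt Γ s)
    rw [← mul_assoc, ← hu] at h2
    omega
  have hk' : u' ∈ Lk Γ s.1 := by simpa using hk
  have hcomm : lt Γ s * u' = u' * lt Γ s := Lk_comm hk'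
  have hf1 := hf.len_eq
  have hms : len (m * lt Γ s) = len m + 1 := by
    have h1 := len_mul_le (m * lt Γ s) ((lt Γ s)⁻¹ * h')
    have h2 : m * lt Γ s * ((lt Γ s)⁻¹ * h') = h := by rw [hhm]; group
    have h3 := len_mul_le m (lt Γ s)
    rw [h2] at h1
    rw [len_lt] at h3
    omega
  have e1 : (m * lt Γ s)⁻¹ * (u * lt Γ s) = u' := by
    rw [hu, mul_assoc m, ← hcomm]; group
  have e2 : (m * lt Γ s)⁻¹ * u = (lt Γ s)⁻¹ * u' := by rw [hu]; group
  have e3 : (m * lt Γ s)⁻¹ * h = (lt Γ s)⁻¹ * h' := by rw [hhm]; group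
  have e4 : len ((lt Γ s)⁻¹ * u') = len u' + 1 := len_of_not_fst (not_fst_of_Lk hk')
  refine ⟨m * lt Γ s, ?_, by rw [e1, hms]; omega, by rw [e2, hms]; omega⟩
  obtain ⟨a'', ha'', hd⟩ := hM a ha a' ha' (a * (m * lt Γ s)) (by
    have : (a * (m * lt Γ s))⁻¹ * a' = (m * lt Γ s)⁻¹ * h := by rw [hh]; group
    rw [this, e3, inv_mul_cancel_left, hms, ← hh]; omega)
  have h1 := hmin a'' ha''
  have h2 := len_tri a'' (a * (m * lt Γ s)) (a * (u * lt Γ s * r))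
  have h3 : (a * (m * lt Γ s))⁻¹ * (a * (u * lt Γ s * r)) = u' * r := by
    rw [← e1]; group
  have h4 := len_mul_le u' r
  rw [h3] at h2
  omega

/-- If geodesics between points of `A` stay `M`-close to `A`, then the hull of `A` is bounded
around `A`: by `hull_prefix`, the letters of a shortest geodesic from `A` to a hull point
correspond injectively to elements of length at most `M`. -/
lemma hull_bounded [Finite V] {A : Set (RAAG Γ)} {M : ℕ} (hne : A.Nonempty)
    (hM : ∀ a ∈ A, ∀ b ∈ A, ∀ z, len (a⁻¹ * z) + len (z⁻¹ * b) = len (a⁻¹ * b) →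
      ∃ a' ∈ A, len (a'⁻¹ * z) ≤ M) :
    ∃ D, ∀ x ∈ Hull A, ∃ a ∈ A, len (a⁻¹ * x) ≤ D := by
  refine ⟨{g : RAAG Γ | len g ≤ M}.ncard, fun x hx => ?_⟩
  obtain ⟨a, ha, hmin⟩ : ∃ a ∈ A, ∀ a' ∈ A, len (a⁻¹ * x) ≤ len (a'⁻¹ * x) := by
    obtain ⟨a, ha, hmin⟩ := WellFounded.has_min
      (measure fun a : RAAG Γ => len (a⁻¹ * x)).wf A hne
    exact ⟨a, ha, fun a' ha' => not_lt.1 (hmin a' ha')⟩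
  refine ⟨a, ha, ?_⟩
  set X := a⁻¹ * x with hX
  have hxX : x = a * X := by simp [hX]
  set w := rword X with hw
  have hwl : w.length = len X := rfl
  have hpart : ∀ i ≤ len X, len (wordProd Γ (w.take i)) = i ∧
      len (wordProd Γ (w.drop i)) = len X - i := by
    intro i hi
    have h1 : X = wordProd Γ (w.take i) * wordProd Γ (w.drop i) := by
      rw [← wordProd_append, List.take_append_drop, hw, wordProd_rword]
    have h2 := len_wordProd_le (Γ := Γ) (w.take i)
    have h3 := len_wordProd_le (Γ := Γ) (w.drop i)
    have h4 := len_mul_le (wordProd Γ (w.take i)) (wordProd Γ (w.drop i))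
    rw [← h1] at h4
    rw [List.length_take, hwl] at h2
    rw [List.length_drop, hwl] at h3
    omega
  have hp : ∀ i : Fin (len X), ∃ p : RAAG Γ, len p ≤ M ∧
      len p + len (p⁻¹ * wordProd Γ (w.take (i + 1))) = i + 1 ∧
      i < len p + len (p⁻¹ * wordProd Γ (w.take i)) := by
    rintro ⟨i, hi⟩
    have hi' : i < w.length := by omega
    obtain ⟨e1, e2⟩ := hpart i hi.le
    obtain ⟨e3, e4⟩ := hpart (i + 1) hi
    have e5 : wordProd Γ (w.take (i + 1)) = wordProd Γ (w.take i) * lt Γ w[i] := by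
      rw [List.take_succ_eq_append_getElem hi', wordProd_append]; simp
    have e6 : wordProd Γ (w.take i) * lt Γ w[i] * wordProd Γ (w.drop (i + 1)) = X := by
      rw [← e5, ← wordProd_append, List.take_append_drop, hw, wordProd_rword]
    obtain ⟨p, h1, h2, h3⟩ := hull_prefix hM (a := a) (u := wordProd Γ (w.take i)) (s := w[i])
      (r := wordProd Γ (w.drop (i + 1))) ha (by rw [e6, ← hxX]; exact hx)
      (by rw [e6, ← hxX]; exact hmin) (by rw [e6]; omega)
    refine ⟨p, h1, ?_, ?_⟩
    · simp only []
      rw [e5, h2, e1]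
    · simp only []
      omega
  choose p hp1 hp2 hp3 using hp
  have hinj : Function.Injective p := by
    have key : ∀ i j : Fin (len X), i < j → p i ≠ p j := by
      intro i j hij heq
      have h1 := hp3 j
      rw [← heq] at h1
      have h2 := hp2 i
      have h3 := len_tri (p i) (wordProd Γ (w.take (i + 1))) (wordProd Γ (w.take j))
      have hj : (i : ℕ) + 1 ≤ j := hij
      have h4 : wordProd Γ (w.take j) =
          wordProd Γ (w.take (i + 1)) * wordProd Γ ((w.take j).drop (i + 1)) := by
        rw [← wordProd_append]
        congr 1
        conv_lhs => rw [← List.take_append_drop (i + 1) (w.take j)]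
        rw [List.take_take, min_eq_left hj]
      have h5 := len_wordProd_le (Γ := Γ) ((w.take j).drop (i + 1))
      rw [List.length_drop, List.length_take] at h5
      rw [h4, inv_mul_cancel_left] at h3
      rw [h4] at h1
      have := j.2
      omega
    intro i j hij
    rcases lt_trichotomy i j with h | h | h
    · exact absurd hij (key i j h)
    · exact h
    · exact absurd hij.symm (key j i h)
  have hcard : (Set.range p).ncard ≤ {g : RAAG Γ | len g ≤ M}.ncard :=
    Set.ncard_le_ncard (by rintro _ ⟨i, rfl⟩; exact hp1 i) (finite_ball M)
  rwa [← Set.image_univ, Set.ncard_image_of_injective _ hinj, Set.ncard_univ,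
    Nat.card_eq_fintype_card, Fintype.card_fin] at hcard

end HullBound
/-! ### Convex sets with short link segments are Morse -/

section Contracting

variable {V : Type} {Γ : SimpleGraph V} [DecidableEq V] [DecidableRel Γ.Adj]

/-- `p` is the gate of `x` in `Y`: the point of `Y` through which some geodesic from `x` to
any given point of `Y` passes. -/
def IsGate (Y : Set (RAAG Γ)) (x p : RAAG Γ) : Prop :=
  p ∈ Y ∧ ∀ q ∈ Y, len (x⁻¹ * q) = len (x⁻¹ * p) + len (p⁻¹ * q)

/-- A first letter of a geodesic from `p ∈ Y` to a point of the convex set `Y` moves `p`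
inside `Y`. -/
lemma Conv.mul_lt_mem {Y : Set (RAAG Γ)} (hY : Conv Y) {p q : RAAG Γ} (hp : p ∈ Y) (hq : q ∈ Y)
    {s : V × Bool} (hs : Fst s (p⁻¹ * q)) : p * lt Γ s ∈ Y := by
  refine hY p hp q hq _ ?_
  have h1 := hs.len_eq
  have h2 : (p * lt Γ s)⁻¹ * q = (lt Γ s)⁻¹ * (p⁻¹ * q) := by group
  rw [h2, inv_mul_cancel_left, len_lt]
  omega

lemma IsGate.not_fst {Y : Set (RAAG Γ)} (hY : Conv Y) {x p q : RAAG Γ} (hp : IsGate Y x p)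
    (hq : q ∈ Y) {s : V × Bool} (h1 : Fst s (p⁻¹ * x)) : ¬ Fst s (p⁻¹ * q) := by
  intro h2
  have h3 := hp.2 _ (hY.mul_lt_mem hp.1 hq h2)
  have h4 := h1.len_eq
  have h5 : (lt Γ s)⁻¹ * (p⁻¹ * x) = (p * lt Γ s)⁻¹ * x := by group
  rw [h5, len_inv_mul_comm _ x, len_inv_mul_comm p x] at h4
  omega

lemma exists_gate {Y : Set (RAAG Γ)} (hY : Conv Y) (hne : Y.Nonempty) (x : RAAG Γ) :
    ∃ p, IsGate Y x p := by
  obtain ⟨p, hp, hmin⟩ := WellFounded.has_min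
      (measure fun a : RAAG Γ => len (x⁻¹ * a)).wf Y hne
  refine ⟨p, hp, fun q hq => ?_⟩
  by_contra hne
  have h0 := len_tri x p q
  obtain ⟨s, hs1, hs2⟩ := exists_common_first (g := p⁻¹ * x) (h := p⁻¹ * q) (by
    have : (p⁻¹ * x)⁻¹ * (p⁻¹ * q) = x⁻¹ * q := by group
    rw [this, len_inv_mul_comm p x]; omega)
  refine hmin _ (hY.mul_lt_mem hp hq hs2) ?_
  have h4 := hs1.len_eq
  have h5 : (lt Γ s)⁻¹ * (p⁻¹ * x) = (p * lt Γ s)⁻¹ * x := by group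
  rw [h5, len_inv_mul_comm _ x, len_inv_mul_comm p x] at h4
  change len (x⁻¹ * (p * lt Γ s)) < len (x⁻¹ * p)
  omega

/-- Two points whose gates are far apart are joined by a geodesic through both gates. -/
lemma gate_contract {Y : Set (RAAG Γ)} (hY : Conv Y) {R : ℕ}
    (hR : ∀ y ∈ Y, ∀ v, ∀ k ∈ Lk Γ v, y * k ∈ Y → len k ≤ R)
    {x y p q : RAAG Γ} (hp : IsGate Y x p) (hq : IsGate Y y q) (hpq : R < len (p⁻¹ * q)) :
    len (x⁻¹ * y) = len (x⁻¹ * p) + len (p⁻¹ * q) + len (q⁻¹ * y) := by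
  have h1 : len (p⁻¹ * y) = len (p⁻¹ * q) + len (q⁻¹ * y) := by
    have := hq.2 p hp.1
    rw [len_inv_mul_comm y p, len_inv_mul_comm y q, len_inv_mul_comm q p] at this
    omega
  by_contra hne
  have h0 := len_tri x p y
  obtain ⟨s, hs1, hs2⟩ := exists_common_first (g := p⁻¹ * x) (h := p⁻¹ * y) (by
    have : (p⁻¹ * x)⁻¹ * (p⁻¹ * y) = x⁻¹ * y := by group
    rw [this, len_inv_mul_comm p x]; omega)
  have e : p⁻¹ * y = (p⁻¹ * q) * (q⁻¹ * y) := by group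
  rw [e] at h1 hs2
  rcases fst_mul h1 hs2 with hf | ⟨hk, -⟩
  · exact hp.not_fst hY hq.1 hs1 hf
  · have := hR p hp.1 _ _ hk (by simpa using hq.1)
    omega

/-- Chaining: if steps of size at most `m` move a point by at most `R`, then `N` steps move it
by at most `R * (N / m + 1)`. -/
lemma chain_bound {π : ℕ → RAAG Γ} {R m : ℕ} (hm : 0 < m) {a b : ℕ}
    (h : ∀ i j, a ≤ i → i ≤ j → j ≤ b → j ≤ i + m → len ((π i)⁻¹ * π j) ≤ R) :
    ∀ N i, a ≤ i → i + N ≤ b → (len ((π i)⁻¹ * π (i + N)) : ℝ) ≤ R * (N / m + 1) := by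
  have hm' : (0 : ℝ) < m := by exact_mod_cast hm
  intro N
  induction N using Nat.strong_induction_on with
  | _ N ih =>
    intro i hi hN
    by_cases hNm : N ≤ m
    · have h1 := h i (i + N) hi (by omega) hN (by omega)
      have h2 : (len ((π i)⁻¹ * π (i + N)) : ℝ) ≤ R := by exact_mod_cast h1
      refine h2.trans (le_mul_of_one_le_right (by positivity) ?_)
      have : (0 : ℝ) ≤ N / m := by positivity
      linarith
    · push Not at hNm
      have h1 := h i (i + m) hi (by omega) (by omega) le_rfl
      have h2 := ih (N - m) (by omega) (i + m) (by omega) (by omega)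
      have h3 := len_tri (π i) (π (i + m)) (π (i + N))
      have e : i + m + (N - m) = i + N := by omega
      rw [e, Nat.cast_sub hNm.le, sub_div, div_self hm'.ne'] at h2
      have h4 : (len ((π i)⁻¹ * π (i + N)) : ℝ) ≤
        len ((π i)⁻¹ * π (i + m)) + len ((π (i + m))⁻¹ * π (i + N)) := by exact_mod_cast h3
      have h5 : (len ((π i)⁻¹ * π (i + m)) : ℝ) ≤ R := by exact_mod_cast h1
      linarith

/-- A subgroup at bounded distance from a convex set containing it is Morse as soon as the
segments of the convex set inside cosets of link subgroups have bounded length. -/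
theorem morse_of_conv {H : Subgroup (RAAG Γ)} {Y : Set (RAAG Γ)} (hY : Conv Y)
    (hHY : (H : Set (RAAG Γ)) ⊆ Y) {D : ℕ} (hD : ∀ y ∈ Y, ∃ h ∈ H, len (y⁻¹ * h) ≤ D) {R : ℕ}
    (hR : ∀ y ∈ Y, ∀ v, ∀ k ∈ Lk Γ v, y * k ∈ Y → len k ≤ R) :
    IsMorseSubgroup (raagGens Γ) H := by
  intro k hk c hc
  have hne : Y.Nonempty := ⟨1, hHY H.one_mem⟩
  choose g hg using fun x => exists_gate hY hne x
  have hk0 : 0 < k := by linarith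
  obtain ⟨m, hm⟩ : ∃ m : ℕ, 2 * k * R + 1 ≤ m := exists_nat_ge _
  have hm1 : (1 : ℝ) ≤ m := le_trans (by linarith [show 0 ≤ 2 * k * R by positivity]) hm
  have hm0 : 0 < m := by exact_mod_cast (by linarith : (0 : ℝ) < m)
  set E : ℝ := k * m + c with hE
  have hE0 : 0 ≤ E := by positivity
  set L0 : ℝ := 2 * k * (c + 2 * E + 2 * (k + c) + R) with hL0
  have hL00 : 0 ≤ L0 := by positivity
  refine ⟨E + (k + c) + (k * L0 + c) + D, fun n γ hγ h0 hn i hi => ?_⟩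
  have up : ∀ i ≤ n, ∀ j ≤ n, i ≤ j →
      (len ((γ i)⁻¹ * γ j) : ℝ) ≤ k * ((j : ℝ) - i) + c := by
    intro i hi j hj hij
    have := (hγ i hi j hj).2
    have hij' : (i : ℝ) ≤ j := by exact_mod_cast hij
    rwa [wordDist_eq, abs_sub_comm, abs_of_nonneg (by linarith)] at this
  have low : ∀ i ≤ n, ∀ j ≤ n, i ≤ j →
      (1 / k) * ((j : ℝ) - i) - c ≤ (len ((γ i)⁻¹ * γ j) : ℝ) := by
    intro i hi j hj hij
    have := (hγ i hi j hj).1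
    have hij' : (i : ℝ) ≤ j := by exact_mod_cast hij
    rwa [wordDist_eq, abs_sub_comm, abs_of_nonneg (by linarith)] at this
  set d : ℕ → ℕ := fun i => len ((γ i)⁻¹ * g (γ i)) with hd
  have lip : ∀ i j, d i ≤ len ((γ i)⁻¹ * γ j) + d j := by
    intro i j
    have h1 := (hg (γ i)).2 _ (hg (γ j)).1
    have h2 := len_tri (γ i) (γ j) (g (γ j))
    simp only [hd]
    omega
  suffices hsuf : (d i : ℝ) ≤ E + (k + c) + (k * L0 + c) by
    obtain ⟨h, hh, hhD⟩ := hD _ (hg (γ i)).1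
    refine ⟨h, hh, ?_⟩
    rw [wordDist_eq]
    have h1 := len_tri (γ i) (g (γ i)) h
    have h2 : len ((γ i)⁻¹ * h) ≤ d i + D := by simp only [hd]; omega
    have h3 : (len ((γ i)⁻¹ * h) : ℝ) ≤ d i + D := by exact_mod_cast h2
    linarith
  by_cases hiE : (d i : ℝ) ≤ E
  · have : 0 ≤ k * L0 := by positivity
    linarith
  have d0 : ∀ j, γ j ∈ H → d j = 0 := by
    intro j hj
    have := (hg (γ j)).2 _ (hHY hj)
    simp only [inv_mul_cancel, len_one] at this
    simp only [hd]; omega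
  -- the maximal stretch around `i` outside the `E`-neighbourhood of `Y`
  obtain ⟨a, hai, haE, hamax⟩ : ∃ a < i, (d a : ℝ) ≤ E ∧ ∀ j, a < j → j ≤ i → E < d j := by
    classical
    have hex : ∃ t, t ≤ i ∧ (d (i - t) : ℝ) ≤ E :=
      ⟨i, le_rfl, by rw [Nat.sub_self, d0 0 h0]; simpa using hE0⟩
    have hs := Nat.find_spec hex
    have ht : Nat.find hex ≠ 0 := by
      intro h; rw [h] at hs; exact hiE hs.2
    refine ⟨i - Nat.find hex, by omega, hs.2, fun j h1 h2 => ?_⟩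
    by_contra hcon
    refine Nat.find_min hex (m := i - j) (by omega) ⟨by omega, ?_⟩
    rw [show i - (i - j) = j by omega]
    exact not_lt.1 hcon
  obtain ⟨b, hib, hbn, hbE, hbmin⟩ : ∃ b, i < b ∧ b ≤ n ∧ (d b : ℝ) ≤ E ∧
      ∀ j, i ≤ j → j < b → E < d j := by
    classical
    have hex : ∃ t, i ≤ t ∧ t ≤ n ∧ (d t : ℝ) ≤ E :=
      ⟨n, hi, le_rfl, by rw [d0 n hn]; simpa using hE0⟩
    have hs := Nat.find_spec hex
    refine ⟨Nat.find hex, lt_of_le_of_ne hs.1 ?_, hs.2.1, hs.2.2, fun j h1 h2 => ?_⟩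
    · intro h
      exact hiE (h ▸ hs.2.2)
    · by_contra hcon
      exact Nat.find_min hex h2 ⟨h1, by omega, not_lt.1 hcon⟩
  have hout : ∀ j, a < j → j < b → E < d j := fun j h1 h2 =>
    if h : j ≤ i then hamax j h1 h else hbmin j (by omega) h2
  have hstep : ∀ i j, a + 1 ≤ i → i ≤ j → j ≤ b - 1 → j ≤ i + m →
      len ((g (γ i))⁻¹ * g (γ j)) ≤ R := by
    intro i j h1 h2 h3 h4
    by_contra hcon
    have h5 := gate_contract hY hR (hg (γ i)) (hg (γ j)) (not_le.1 hcon)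
    have h6 := up i (by omega) j (by omega) h2
    have h7 := hout i (by omega) (by omega)
    have h8 : d i ≤ len ((γ i)⁻¹ * γ j) := by simp only [hd]; omega
    have h9 : (d i : ℝ) ≤ len ((γ i)⁻¹ * γ j) := by exact_mod_cast h8
    have h10 : (j : ℝ) ≤ i + m := by exact_mod_cast h4
    have h11 : k * ((j : ℝ) - i) ≤ k * m := by
      apply mul_le_mul_of_nonneg_left _ hk0.le; linarith
    linarith
  obtain ⟨L, hL⟩ : ∃ L, b = a + 2 + L := ⟨b - a - 2, by omega⟩
  have hch := chain_bound hm0 (π := fun j => g (γ j)) (a := a + 1) (b := b - 1) hstep L (a + 1)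
    le_rfl (by omega)
  have hdA : (d (a + 1) : ℝ) ≤ E + (k + c) := by
    have h1 := up a (by omega) (a + 1) (by omega) (by omega)
    have h2 := lip (a + 1) a
    rw [len_inv_mul_comm] at h2
    have h3 : (d (a + 1) : ℝ) ≤ len ((γ a)⁻¹ * γ (a + 1)) + d a := by exact_mod_cast h2
    push_cast at h1
    linarith
  have hdB : (d (a + 1 + L) : ℝ) ≤ E + (k + c) := by
    have h1 := up (a + 1 + L) (by omega) b (by omega) (by omega)
    have h2 := lip (a + 1 + L) b
    have h3 : (d (a + 1 + L) : ℝ) ≤ len ((γ (a + 1 + L))⁻¹ * γ b) + d b := by exact_mod_cast h2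
    rw [hL] at h1 h3 hbE
    push_cast at h1
    linarith
  have hLL : (L : ℝ) ≤ L0 := by
    have h1 := low (a + 1) (by omega) (a + 1 + L) (by omega) (by omega)
    have h2 := len_tri (γ (a + 1)) (g (γ (a + 1))) (γ (a + 1 + L))
    have h3 := len_tri (g (γ (a + 1))) (g (γ (a + 1 + L))) (γ (a + 1 + L))
    rw [len_inv_mul_comm (g (γ (a + 1 + L)))] at h3
    have h4 : len ((γ (a + 1))⁻¹ * γ (a + 1 + L)) ≤
      d (a + 1) + len ((g (γ (a + 1)))⁻¹ * g (γ (a + 1 + L))) + d (a + 1 + L) := by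
      simp only [hd]; omega
    have h5 : (len ((γ (a + 1))⁻¹ * γ (a + 1 + L)) : ℝ) ≤
      d (a + 1) + len ((g (γ (a + 1)))⁻¹ * g (γ (a + 1 + L))) + d (a + 1 + L) := by
      exact_mod_cast h4
    have h6 : (R : ℝ) * (L / m) ≤ L / (2 * k) := by
      rw [mul_div_assoc', div_le_div_iff₀ (by linarith) (by positivity)]
      have : (L : ℝ) * (2 * k * R) ≤ L * m := by
        apply mul_le_mul_of_nonneg_left _ (by positivity); linarith
      linarith
    have h7 : (1 / k) * (L : ℝ) = 2 * (L / (2 * k)) := by field_simp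
    push_cast at h1
    have h8 : (1 / k) * ((a : ℝ) + 1 + L - (a + 1)) = 2 * (L / (2 * k)) := by
      rw [← h7]; ring
    rw [h8] at h1
    have h9 : (L : ℝ) / (2 * k) ≤ c + 2 * E + 2 * (k + c) + R := by
      linarith
    rw [div_le_iff₀ (by positivity)] at h9
    rw [hL0]; linarith
  have h1 := up (a + 1) (by omega) i hi (by omega)
  have h2 := lip i (a + 1)
  rw [len_inv_mul_comm] at h2
  have h3 : (d i : ℝ) ≤ len ((γ (a + 1))⁻¹ * γ i) + d (a + 1) := by exact_mod_cast h2
  have h4 : (i : ℝ) ≤ a + 1 + L := by exact_mod_cast (by omega : i ≤ a + 1 + L)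
  have h5 : k * ((i : ℝ) - (a + 1)) ≤ k * L0 := by
    apply mul_le_mul_of_nonneg_left _ hk0.le; linarith
  push_cast at h1
  linarith

end Contracting
/-! ### The hull of a Morse subgroup -/

section MorseHull

variable {V : Type} {Γ : SimpleGraph V} [DecidableEq V] [DecidableRel Γ.Adj]

lemma isQuasigeodesic_of_nat {K : ℕ} (hK : 1 ≤ K) {n : ℕ} {γ : ℕ → RAAG Γ}
    (h : ∀ i j, i ≤ j → j ≤ n → j - i ≤ K * len ((γ i)⁻¹ * γ j) ∧ len ((γ i)⁻¹ * γ j) ≤ j - i) :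
    IsQuasigeodesic (raagGens Γ) K 0 n γ := by
  have hK' : (1 : ℝ) ≤ K := by exact_mod_cast hK
  have key : ∀ i j, i ≤ j → j ≤ n →
      (1 / (K : ℝ)) * |(i : ℝ) - (j : ℝ)| - 0 ≤ (len ((γ i)⁻¹ * γ j) : ℝ) ∧
      (len ((γ i)⁻¹ * γ j) : ℝ) ≤ K * |(i : ℝ) - (j : ℝ)| + 0 := by
    intro i j hij hj
    obtain ⟨h1, h2⟩ := h i j hij hj
    have hij' : (i : ℝ) ≤ j := by exact_mod_cast hij
    have e : |(i : ℝ) - j| = ((j - i : ℕ) : ℝ) := by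
      rw [abs_sub_comm, Nat.cast_sub hij, abs_of_nonneg (by linarith)]
    have h1' : ((j - i : ℕ) : ℝ) ≤ K * len ((γ i)⁻¹ * γ j) := by exact_mod_cast h1
    have h2' : (len ((γ i)⁻¹ * γ j) : ℝ) ≤ ((j - i : ℕ) : ℝ) := by exact_mod_cast h2
    rw [e]
    constructor
    · rw [sub_zero, one_div, inv_mul_le_iff₀ (by linarith)]
      exact h1'
    · have : (0 : ℝ) ≤ ((j - i : ℕ) : ℝ) := by positivity
      nlinarith
  intro i hi j hj
  rw [wordDist_eq]
  rcases le_total i j with hij | hij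
  · exact key i j hij hj
  · have := key j i hij hi
    rwa [abs_sub_comm, len_inv_mul_comm] at this

lemma len_take_take {w : List (V × Bool)} (hw : len (wordProd Γ w) = w.length) {i j : ℕ}
    (hij : i ≤ j) (hj : j ≤ w.length) :
    len ((wordProd Γ (w.take i))⁻¹ * wordProd Γ (w.take j)) = j - i := by
  have e1 : wordProd Γ (w.take j) =
      wordProd Γ (w.take i) * wordProd Γ ((w.take j).drop i) := by
    rw [← wordProd_append]
    congr 1
    conv_lhs => rw [← List.take_append_drop i (w.take j)]
    rw [List.take_take, min_eq_left hij]
  have e2 : wordProd Γ w = wordProd Γ (w.take j) * wordProd Γ (w.drop j) := by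
    rw [← wordProd_append, List.take_append_drop]
  rw [e1, inv_mul_cancel_left]
  have h1 := len_wordProd_le (Γ := Γ) ((w.take j).drop i)
  have h2 := len_wordProd_le (Γ := Γ) (w.take i)
  have h3 := len_wordProd_le (Γ := Γ) (w.drop j)
  rw [List.length_drop, List.length_take] at h1
  rw [List.length_take] at h2
  rw [List.length_drop] at h3
  have h4 := len_mul_le (wordProd Γ (w.take j)) (wordProd Γ (w.drop j))
  have h5 := len_mul_le (wordProd Γ (w.take i)) (wordProd Γ ((w.take j).drop i))
  rw [← e2, e1] at h4
  omega

/-- Every point between `a` and `b` lies on a geodesic path from `a` to `b`. -/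
lemma exists_geodesic {a b z : RAAG Γ}
    (hz : len (a⁻¹ * z) + len (z⁻¹ * b) = len (a⁻¹ * b)) :
    ∃ (n : ℕ) (γ : ℕ → RAAG Γ), IsQuasigeodesic (raagGens Γ) 1 0 n γ ∧ γ 0 = a ∧ γ n = b ∧
      ∃ i ≤ n, γ i = z := by
  set w := rword (a⁻¹ * z) ++ rword (z⁻¹ * b) with hw
  have hwp : wordProd Γ w = a⁻¹ * b := by rw [hw, wordProd_append]; simp
  have hwl : len (wordProd Γ w) = w.length := by
    rw [hwp, ← hz, hw, List.length_append]; rfl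
  refine ⟨w.length, fun i => a * wordProd Γ (w.take i), ?_, by simp, by simp [hwp],
    (rword (a⁻¹ * z)).length, by simp [hw], by simp [hw]⟩
  have := isQuasigeodesic_of_nat (K := 1) le_rfl (n := w.length)
    (γ := fun i => a * wordProd Γ (w.take i)) fun i j hij hj => by
      have e : (a * wordProd Γ (w.take i))⁻¹ * (a * wordProd Γ (w.take j)) =
        (wordProd Γ (w.take i))⁻¹ * wordProd Γ (w.take j) := by group
      simp only [e, len_take_take hwl hij hj]
      omega
  simpa using this

/-- Quasigeodesics with endpoints near a Morse subgroup stay near the subgroup. -/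
lemma morse_near {H : Subgroup (RAAG Γ)} (hH : IsMorseSubgroup (raagGens Γ) H) (B : ℕ)
    {k : ℝ} (hk : 1 ≤ k) : ∃ M : ℕ, ∀ (n : ℕ) (γ : ℕ → RAAG Γ),
      IsQuasigeodesic (raagGens Γ) k 0 n γ → (∃ h ∈ H, len (h⁻¹ * γ 0) ≤ B) →
      (∃ h ∈ H, len (h⁻¹ * γ n) ≤ B) → ∀ i ≤ n, ∃ h ∈ H, len (h⁻¹ * γ i) ≤ M := by
  obtain ⟨M, hM⟩ := hH k hk (2 * B) (by positivity)
  obtain ⟨M', hM'⟩ := exists_nat_ge M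
  refine ⟨M' + B, fun n γ hγ ⟨h0, hh0, hd0⟩ ⟨h1, hh1, hd1⟩ i hi => ?_⟩
  set γ' : ℕ → RAAG Γ := fun i => if i = 0 then h0 else if i = n then h1 else γ i with hγ'
  have hclose : ∀ i, len ((γ' i)⁻¹ * γ i) ≤ B := by
    intro i
    simp only [hγ']
    split_ifs with e1 e2
    · rwa [e1]
    · rwa [e2]
    · simp
  have hqg : IsQuasigeodesic (raagGens Γ) k (2 * B) n γ' := by
    intro i hi j hj
    have h1 := hγ i hi j hj
    rw [wordDist_eq] at h1 ⊢
    have ha := hclose i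
    have hb := hclose j
    have t1 := len_tri (γ' i) (γ i) (γ' j)
    have t2 := len_tri (γ i) (γ j) (γ' j)
    have t3 := len_tri (γ i) (γ' i) (γ j)
    have t4 := len_tri (γ' i) (γ' j) (γ j)
    rw [len_inv_mul_comm (γ j)] at t2
    rw [len_inv_mul_comm (γ i) (γ' i)] at t3
    have u1 : (len ((γ' i)⁻¹ * γ' j) : ℝ) ≤ len ((γ i)⁻¹ * γ j) + 2 * B := by
      exact_mod_cast (by omega : len ((γ' i)⁻¹ * γ' j) ≤ len ((γ i)⁻¹ * γ j) + 2 * B)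
    have u2 : (len ((γ i)⁻¹ * γ j) : ℝ) ≤ len ((γ' i)⁻¹ * γ' j) + 2 * B := by
      exact_mod_cast (by omega : len ((γ i)⁻¹ * γ j) ≤ len ((γ' i)⁻¹ * γ' j) + 2 * B)
    constructor <;> linarith [h1.1, h1.2]
  obtain ⟨h, hh, hd⟩ := hM n γ' hqg (by simpa [hγ'] using hh0)
    (by simp only [hγ']; split_ifs <;> assumption) i hi
  refine ⟨h, hh, ?_⟩
  rw [wordDist_eq] at hd
  have hd' : len ((γ' i)⁻¹ * h) ≤ M' := by exact_mod_cast hd.trans hM'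
  have t := len_tri h (γ' i) (γ i)
  rw [len_inv_mul_comm h (γ' i)] at t
  have := hclose i
  omega

lemma red_replicate (a : V × Bool) (m : ℕ) : Red Γ (List.replicate m a) := by
  induction m with
  | zero => trivial
  | succ m ih =>
    refine ⟨?_, ih⟩
    cases h : del Γ (linv a) (List.replicate m a) with
    | none => rfl
    | some x => exact absurd (List.eq_of_mem_replicate (mem_of_del h)) (linv_ne a)

lemma wordProd_replicate (a : V × Bool) (m : ℕ) :
    wordProd Γ (List.replicate m a) = lt Γ a ^ m := by
  induction m with
  | zero => simp
  | succ m ih => rw [List.replicate_succ, wordProd_cons, ih, pow_succ']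

lemma len_pow (a : V × Bool) (m : ℕ) : len (lt Γ a ^ m) = m := by
  rw [← wordProd_replicate, len_of_red (red_replicate a m), List.length_replicate]

lemma fst_pow {s a : V × Bool} {m : ℕ} (h : Fst s (lt Γ a ^ m)) : s = a := by
  rw [← wordProd_replicate, fst_iff_del (red_replicate a m)] at h
  obtain ⟨x, hx⟩ := Option.ne_none_iff_exists'.1 h
  exact List.eq_of_mem_replicate (mem_of_del hx)

lemma len_pow_mul_Lk {a : V × Bool} {k : RAAG Γ} (hk : k ∈ Lk Γ a.1) (m : ℕ) :
    len (lt Γ a ^ m * k) = m + len k := by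
  induction m with
  | zero => simp
  | succ m ih =>
    have hn : ¬ Fst (linv a) (lt Γ a ^ m * k) := by
      intro hf
      rcases fst_mul (by rw [ih, len_pow]) hf with h | ⟨-, h⟩
      · exact linv_ne a (fst_pow h)
      · exact not_fst_of_Lk (a := linv a) (by simpa using hk) h
    have := len_of_not_fst hn
    rw [lt_linv, inv_inv, ih, ← mul_assoc, ← pow_succ'] at this
    omega

/-- Three sides of the square spanned by `lt a ^ n` and an element `k` of length `n` of the
link of `a` form a quasigeodesic. -/
lemma exists_rectangle (y : RAAG Γ) {a : V × Bool} {k : RAAG Γ} (hk : k ∈ Lk Γ a.1) :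
    ∃ γ : ℕ → RAAG Γ, IsQuasigeodesic (raagGens Γ) 3 0 (3 * len k) γ ∧ γ 0 = y ∧
      γ (3 * len k) = y * k ∧ γ (len k) = y * lt Γ a ^ len k := by
  set n := len k with hn
  set w := rword k with hw
  have hwl : w.length = n := rfl
  have hwl' : len (wordProd Γ w) = w.length := by rw [hw, wordProd_rword]; rfl
  have hwk : ∀ i, wordProd Γ (w.take i) ∈ Lk Γ a.1 := fun i =>
    wordProd_mem_Lk fun b hb =>
      adj_of_mem_Lk hk (red_rword k) (wordProd_rword k) b (List.mem_of_mem_take hb)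
  set f : ℕ → ℕ := fun i => min (min i n) (3 * n - i) with hf
  set g : ℕ → ℕ := fun i => min (i - n) n with hg
  refine ⟨fun i => y * lt Γ a ^ f i * wordProd Γ (w.take (g i)), ?_, ?_, ?_, ?_⟩
  · have := isQuasigeodesic_of_nat (K := 3) (by norm_num) (n := 3 * n)
      (γ := fun i => y * lt Γ a ^ f i * wordProd Γ (w.take (g i))) fun i j hij hj => by
        have hgij : g i ≤ g j := by simp only [hg]; omega
        set κ := (wordProd Γ (w.take (g i)))⁻¹ * wordProd Γ (w.take (g j)) with hκ
        have hκl : len κ = g j - g i := len_take_take hwl' hgij (by simp only [hg]; omega)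
        have hκm : κ ∈ Lk Γ a.1 := mul_mem (inv_mem (hwk _)) (hwk _)
        have hd : len ((y * lt Γ a ^ f i * wordProd Γ (w.take (g i)))⁻¹ *
            (y * lt Γ a ^ f j * wordProd Γ (w.take (g j)))) =
            (f i - f j) + (f j - f i) + (g j - g i) := by
          have hc : Commute (lt Γ a) (wordProd Γ (w.take (g i)))⁻¹ :=
            (Lk_comm (hwk _)).inv_right
          rcases le_total (f i) (f j) with hij | hij
          · have e : (y * lt Γ a ^ f i * wordProd Γ (w.take (g i)))⁻¹ *
              (y * lt Γ a ^ f j * wordProd Γ (w.take (g j))) = lt Γ a ^ (f j - f i) * κ := by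
              obtain ⟨t, ht⟩ := Nat.exists_eq_add_of_le hij
              rw [ht, Nat.add_sub_cancel_left, hκ, ← mul_assoc (lt Γ a ^ t), (hc.pow_left t).eq, pow_add]
              group
            rw [e, len_pow_mul_Lk hκm, hκl]
            omega
          · have e : (y * lt Γ a ^ f i * wordProd Γ (w.take (g i)))⁻¹ *
              (y * lt Γ a ^ f j * wordProd Γ (w.take (g j))) =
                lt Γ (linv a) ^ (f i - f j) * κ := by
              obtain ⟨t, ht⟩ := Nat.exists_eq_add_of_le hij
              rw [ht, Nat.add_sub_cancel_left, hκ, lt_linv, ← mul_assoc ((lt Γ a)⁻¹ ^ t),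
                (hc.inv_left.pow_left t).eq, pow_add]
              group
            rw [e, len_pow_mul_Lk (a := linv a) hκm, hκl]
            omega
        simp only [hd]
        simp only [hf, hg]
        omega
    simpa using this
  · simp [hf, hg]
  · have h1 : f (3 * n) = 0 := by simp [hf]
    have h2 : g (3 * n) = n := by simp only [hg]; omega
    have h3 : w.take n = w := List.take_of_length_le hwl.le
    simp only [h1, h2, h3]
    simp [hw]
  · have h1 : f n = n := by simp only [hf]; omega
    have h2 : g n = 0 := by simp [hg]
    simp [h1, h2]

/-- A segment of powers of a letter which starts in a convex set and ends `M`-close to it lies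
in the convex set, up to its last `M` points. -/
lemma ray_of_near {Y : Set (RAAG Γ)} (hY : Conv Y) {y h : RAAG Γ} (hy : y ∈ Y) (hh : h ∈ Y)
    {a : V × Bool} {n M : ℕ} (hd : len (h⁻¹ * (y * lt Γ a ^ n)) ≤ M) :
    ∀ i, i + M ≤ n → y * lt Γ a ^ i ∈ Y := by
  intro i
  induction i with
  | zero => intro _; simpa using hy
  | succ i ih =>
    intro hi
    have hyi := ih (by omega)
    obtain ⟨s, hs1, hs2⟩ := exists_common_first (g := lt Γ a ^ (n - i))
      (h := (y * lt Γ a ^ i)⁻¹ * h) (by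
        have e : (lt Γ a ^ (n - i))⁻¹ * ((y * lt Γ a ^ i)⁻¹ * h) =
            (y * lt Γ a ^ n)⁻¹ * h := by
          conv_rhs => rw [show n = i + (n - i) by omega, pow_add]
          group
        rw [e, len_inv_mul_comm, len_pow]
        omega)
    rw [fst_pow hs1] at hs2
    have := hY.mul_lt_mem hyi hh hs2
    rwa [mul_assoc, ← pow_succ] at this

/-- The dichotomy behind the algorithm: a Morse subgroup acts coboundedly on an
invariant convex set `Y` which contains it and is either the whole group or has
link segments of bounded length. -/
theorem morse_dichotomy [Finite V] [Nontrivial V] (hconn : Γ.Connected) {H : Subgroup (RAAG Γ)}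
    (hH : IsMorseSubgroup (raagGens Γ) H) (B : ℕ) :
    ∃ Y : Set (RAAG Γ), Conv Y ∧ (∀ h ∈ H, ∀ y ∈ Y, h * y ∈ Y) ∧ (∀ g, len g ≤ B → g ∈ Y) ∧
      (∃ D, ∀ y ∈ Y, ∃ h ∈ H, len (h⁻¹ * y) ≤ D) ∧
      (Y = Set.univ ∨ ∃ R, ∀ y ∈ Y, ∀ v, ∀ k ∈ Lk Γ v, y * k ∈ Y → len k ≤ R) := by
  set A : Set (RAAG Γ) := {x | ∃ h ∈ H, len (h⁻¹ * x) ≤ B} with hA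
  have hHA : ∀ h ∈ H, h ∈ A := fun h hh => ⟨h, hh, by simp⟩
  have hAinv : ∀ h ∈ H, ∀ a ∈ A, h * a ∈ A := by
    rintro h hh a ⟨h', hh', hd⟩
    exact ⟨h * h', mul_mem hh hh', by simpa [mul_assoc] using hd⟩
  obtain ⟨M, hM⟩ := morse_near hH B (le_refl (1 : ℝ))
  obtain ⟨D, hD⟩ := hull_bounded (A := A) (M := M) ⟨1, hHA 1 H.one_mem⟩ (by
    intro a ha b hb z hz
    obtain ⟨n, γ, hγ, h0, hn, i, hi, hiz⟩ := exists_geodesic hz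
    obtain ⟨h, hh, hd⟩ := hM n γ hγ (by rw [h0]; exact ha) (by rw [hn]; exact hb) i hi
    exact ⟨h, hHA h hh, by rwa [hiz] at hd⟩)
  set Y := Hull A with hYdef
  have hY : Conv Y := conv_hull A
  have hHY : ∀ h ∈ H, h ∈ Y := fun h hh => subset_hull A (hHA h hh)
  have hYinv : ∀ h ∈ H, ∀ y ∈ Y, h * y ∈ Y := fun h hh y hy => hull_smul (hAinv h hh) hy
  have hYD : ∀ y ∈ Y, ∃ h ∈ H, len (h⁻¹ * y) ≤ B + D := by
    intro y hy
    obtain ⟨a, ⟨h, hh, hd⟩, hd'⟩ := hD y hy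
    exact ⟨h, hh, (len_tri h a y).trans (by omega)⟩
  refine ⟨Y, hY, hYinv, fun g hg => subset_hull A ⟨1, H.one_mem, by simpa using hg⟩,
    ⟨B + D, hYD⟩, ?_⟩
  by_cases hbd : ∃ R, ∀ y ∈ Y, ∀ v, ∀ k ∈ Lk Γ v, y * k ∈ Y → len k ≤ R
  · exact Or.inr hbd
  left
  obtain ⟨M', hM'⟩ := morse_near hH (B + D) (by norm_num : (1 : ℝ) ≤ 3)
  have ray : ∀ y ∈ Y, ∀ (a : V × Bool), ∀ k ∈ Lk Γ a.1, y * k ∈ Y → ∀ i, i + M' ≤ len k →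
      y * lt Γ a ^ i ∈ Y := by
    intro y hy a k hk hyk
    obtain ⟨γ, hγ, h0, h1, h2⟩ := exists_rectangle y hk
    obtain ⟨h, hh, hd⟩ := hM' _ γ hγ (by rw [h0]; exact hYD y hy)
      (by rw [h1]; exact hYD _ hyk) (len k) (by omega)
    rw [h2] at hd
    exact ray_of_near hY hy (hHY h hh) hd
  -- arbitrarily long link segments yield, by pigeonhole, an infinite ray in `Y`
  obtain ⟨z, v, hz⟩ : ∃ (z : RAAG Γ) (v : V), ∀ i, z * lt Γ (v, true) ^ i ∈ Y := by
    by_contra! hcon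
    choose f hf using hcon
    have hfin := finite_ball (Γ := Γ) (B + D)
    have : Finite {g : RAAG Γ | len g ≤ B + D} := hfin
    obtain ⟨N, hN⟩ := Set.Finite.bddAbove (Set.finite_range
      fun p : {g : RAAG Γ | len g ≤ B + D} × V => f p.1 p.2)
    apply hbd
    refine ⟨N + M', fun y hy v k hk hyk => ?_⟩
    by_contra hlt
    obtain ⟨h, hh, hd⟩ := hYD y hy
    have h1 := ray y hy (v, true) k hk hyk (f (h⁻¹ * y) v) (by
      have : f (h⁻¹ * y) v ≤ N := hN ⟨(⟨h⁻¹ * y, hd⟩, v), rfl⟩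
      omega)
    have h2 := hYinv _ (inv_mem hh) _ h1
    rw [← mul_assoc] at h2
    exact hf _ _ h2
  have hspread : ∀ (y : RAAG Γ) (a b : V × Bool), Γ.Adj a.1 b.1 →
      (∀ i, y * lt Γ a ^ i ∈ Y) → ∀ i, y * lt Γ b ^ i ∈ Y := by
    intro y a b hab hya i
    refine ray y (by simpa using hya 0) b (lt Γ a ^ (i + M')) (pow_mem (lt_mem_Lk hab.symm) _)
      (hya _) i ?_
    rw [len_pow]
  have hall : ∀ (y : RAAG Γ) (a : V × Bool), (∀ i, y * lt Γ a ^ i ∈ Y) →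
      ∀ b : V × Bool, ∀ i, y * lt Γ b ^ i ∈ Y := by
    intro y a hya b
    obtain ⟨u, hu⟩ := hconn.preconnected.exists_adj_of_nontrivial a.1
    have hr : Γ.Reachable u b.1 := hconn.preconnected u b.1
    suffices ∀ c, Γ.Reachable u c → ∀ e, ∀ i, y * lt Γ (c, e) ^ i ∈ Y from this _ hr b.2
    intro c hc
    rw [SimpleGraph.reachable_iff_reflTransGen] at hc
    induction hc with
    | refl => exact fun e => hspread y a (u, e) hu hya
    | tail _ hadj ih => exact fun e => hspread y (_, true) (_, e) hadj (ih true)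
  have hQ : ∀ w : List (V × Bool), ∀ b : V × Bool, ∀ i, z * wordProd Γ w * lt Γ b ^ i ∈ Y := by
    intro w
    induction w using List.reverseRecOn with
    | nil => simpa using hall z _ hz
    | append_singleton w a ih =>
      refine hall _ a fun i => ?_
      have := ih a (i + 1)
      rw [pow_succ', ← mul_assoc] at this
      simpa [mul_assoc] using this
  ext g
  simp only [Set.mem_univ, iff_true]
  have := hQ (rword (z⁻¹ * g)) (v, true) 0
  simpa using this

end MorseHull
/-! ### Finite certificates for Morseness -/

section Certificate

variable {V : Type} (Γ : SimpleGraph V) [DecidableEq V] [DecidableRel Γ.Adj]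

/-- The subgroup generated by the words of the list `ws`. -/
def gen (ws : List (List (V × Bool))) : Subgroup (RAAG Γ) :=
  Subgroup.closure {g : RAAG Γ | ∃ w ∈ ws, g = wordProd Γ w}

/-- The list `zs` of words of `ws` and their inverses witnesses that the word `u` represents an
element of the subgroup generated by `ws`: the concatenation of `u` and `zs` is trivial. -/
def MemWit (ws : List (List (V × Bool))) (u : List (V × Bool)) (zs : List (List (V × Bool))) :
    Prop := (∀ z ∈ zs, z ∈ ws ∨ winv z ∈ ws) ∧ nfw Γ (u ++ zs.flatten) = []

/-- The word of the loop `u * s * u'⁻¹` carried by an edge `(u, s, u')`, an edge from the coset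
of `u` to the coset of `u'` with label `s`. -/
def loopWord (t : List (V × Bool) × (V × Bool) × List (V × Bool)) : List (V × Bool) :=
  t.1 ++ t.2.1 :: winv t.2.2

/-- The certificate that the subgroup has finite index: a finite list of words whose cosets are
closed under right multiplication by letters. -/
def FinIndexCert [Fintype V] (ws : List (List (V × Bool))) : Prop :=
  ∃ L : List (List (V × Bool)), [] ∈ L ∧ ∀ u ∈ L, ∀ s ∈ (Finset.univ : Finset (V × Bool)).toList,
    ∃ u' ∈ L, ∃ zs, MemWit Γ ws (loopWord (u, s, u')) zs

/-- The path `p` of edges leads from the state `[]` to itself and is labelled by `w`. -/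
def LoopAt (T p : List (List (V × Bool) × (V × Bool) × List (V × Bool)))
    (w : List (V × Bool)) : Prop :=
  (∀ e ∈ p, e ∈ T) ∧ p.map (fun e => e.2.1) = w ∧
    p.map (fun e => e.1) ++ [[]] = [] :: p.map (fun e => e.2.2)

/-- The edges `T` form an involutive deterministic automaton with complete commutation squares,
and the finite list `P` of triples `(v, w, q)` contains every element `w` of the link subgroup
of `v` which can be read in the automaton, together with the state `q` where it ends. -/
def AutCheck [Fintype V] (T : List (List (V × Bool) × (V × Bool) × List (V × Bool)))
    (P : List (V × List (V × Bool) × List (V × Bool))) : Prop :=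
  (∀ t ∈ T, (t.2.2, linv t.2.1, t.1) ∈ T) ∧
  (∀ t ∈ T, ∀ t' ∈ T, t.1 = t'.1 → t.2.1 = t'.2.1 → t.2.2 = t'.2.2) ∧
  (∀ t ∈ T, ∀ t' ∈ T, t.1 = t'.1 → Γ.Adj t.2.1.1 t'.2.1.1 →
    ∃ r ∈ T, r.1 = t.2.2 ∧ r.2.1 = t'.2.1 ∧ (t'.2.2, t.2.1, r.2.2) ∈ T) ∧
  (∀ v ∈ (Finset.univ : Finset V).toList, (v, [], []) ∈ P ∧ ∀ t ∈ T, (v, [], t.1) ∈ P) ∧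
  (∀ x ∈ P, ∀ t ∈ T, t.1 = x.2.2 → Γ.Adj x.1 t.2.1.1 →
    ∃ x' ∈ P, x'.1 = x.1 ∧ x'.2.2 = t.2.2 ∧ nfw Γ (loopWord (x.2.1, t.2.1, x'.2.1)) = [])

/-- The certificate that the subgroup is Morse of infinite index: a finite automaton as in
`AutCheck`, whose states are words representing cosets and in which the generators are loops. -/
def AutCert [Fintype V] (ws : List (List (V × Bool))) : Prop :=
  ∃ (T : List (List (V × Bool) × (V × Bool) × List (V × Bool)))
    (P : List (V × List (V × Bool) × List (V × Bool))),
    AutCheck Γ T P ∧ (∀ t ∈ T, ∃ zs, MemWit Γ ws (loopWord t) zs) ∧ ∀ w ∈ ws, ∃ p, LoopAt T p w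

variable {Γ}

lemma wordProd_loopWord (t : List (V × Bool) × (V × Bool) × List (V × Bool)) :
    wordProd Γ (loopWord t) = wordProd Γ t.1 * lt Γ t.2.1 * (wordProd Γ t.2.2)⁻¹ := by
  rw [loopWord, wordProd_append, wordProd_cons, wordProd_winv, mul_assoc]

lemma winv_winv (w : List (V × Bool)) : winv (winv w) = w := by
  simp [winv, Function.comp_def]

lemma exists_memWit_iff {ws : List (List (V × Bool))} {u : List (V × Bool)} :
    (∃ zs, MemWit Γ ws u zs) ↔ wordProd Γ u ∈ gen Γ ws := by
  constructor
  · rintro ⟨zs, hzs, h⟩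
    rw [← wordProd_eq_one_iff, wordProd_append] at h
    rw [eq_inv_of_mul_eq_one_left h]
    apply inv_mem
    clear h
    induction zs with
    | nil => simp
    | cons z zs ih =>
      rw [List.flatten_cons, wordProd_append]
      refine mul_mem ?_ (ih fun z hz => hzs z (by simp [hz]))
      rcases hzs z (by simp) with h | h
      · exact Subgroup.subset_closure ⟨z, h, rfl⟩
      · rw [← inv_mem_iff, ← wordProd_winv]
        exact Subgroup.subset_closure ⟨_, h, rfl⟩
  · intro h
    suffices ∀ g ∈ gen Γ ws, ∃ zs : List (List (V × Bool)),
        (∀ z ∈ zs, z ∈ ws ∨ winv z ∈ ws) ∧ wordProd Γ zs.flatten = g by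
      obtain ⟨zs, h1, h2⟩ := this _ (inv_mem h)
      refine ⟨zs, h1, ?_⟩
      rw [← wordProd_eq_one_iff, wordProd_append, h2, mul_inv_cancel]
    intro g hg
    induction hg using Subgroup.closure_induction with
    | mem x hx =>
      obtain ⟨w, hw, rfl⟩ := hx
      exact ⟨[w], by simp [hw], by simp⟩
    | one => exact ⟨[], by simp, by simp⟩
    | mul x y _ _ hx hy =>
      obtain ⟨zs, h1, rfl⟩ := hx
      obtain ⟨zs', h1', rfl⟩ := hy
      refine ⟨zs ++ zs', fun z hz => ?_, by rw [List.flatten_append, wordProd_append]⟩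
      rcases List.mem_append.1 hz with h | h
      exacts [h1 z h, h1' z h]
    | inv x hxm hx =>
      clear hxm
      obtain ⟨zs, h1, rfl⟩ := hx
      refine ⟨(zs.map winv).reverse, fun z hz => ?_, ?_⟩
      · simp only [List.mem_reverse, List.mem_map] at hz
        obtain ⟨z', hz', rfl⟩ := hz
        rw [winv_winv]
        exact (h1 z' hz').symm
      · clear h1
        induction zs with
        | nil => simp
        | cons z zs ih =>
          simp only [List.map_cons, List.reverse_cons, List.flatten_append, List.flatten_cons,
            List.flatten_nil, List.append_nil, wordProd_append, wordProd_winv, mul_inv_rev, ih]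

lemma exists_list_bound {α : Type*} (f : α → ℕ) (l : List α) : ∃ D, ∀ x ∈ l, f x ≤ D := by
  induction l with
  | nil => exact ⟨0, by simp⟩
  | cons a l ih =>
    obtain ⟨D, hD⟩ := ih
    refine ⟨max (f a) D, fun x hx => ?_⟩
    rcases List.mem_cons.1 hx with rfl | h
    · exact le_max_left _ _
    · exact (hD x h).trans (le_max_right _ _)

lemma morse_of_finIndexCert [Fintype V] {ws : List (List (V × Bool))} (h : FinIndexCert Γ ws) :
    IsMorseSubgroup (raagGens Γ) (gen Γ ws) := by
  obtain ⟨L, h0, hL⟩ := h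
  have hc : ∀ w : List (V × Bool), ∃ u ∈ L, wordProd Γ w * (wordProd Γ u)⁻¹ ∈ gen Γ ws := by
    intro w
    induction w using List.reverseRecOn with
    | nil => exact ⟨[], h0, by simp⟩
    | append_singleton w s ih =>
      obtain ⟨u, hu, hm⟩ := ih
      obtain ⟨u', hu', hz⟩ := hL u hu s (by simp)
      rw [exists_memWit_iff, wordProd_loopWord] at hz
      refine ⟨u', hu', ?_⟩
      have := mul_mem hm hz
      simpa [mul_assoc] using this
  obtain ⟨D, hD⟩ := exists_list_bound List.length L
  intro k _ c _
  refine ⟨D, fun n γ _ _ _ i _ => ?_⟩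
  obtain ⟨u, hu, hm⟩ := hc (rword (γ i))
  rw [wordProd_rword] at hm
  refine ⟨_, hm, ?_⟩
  rw [wordDist_eq, inv_mul_cancel_left, len_inv]
  exact_mod_cast (len_wordProd_le u).trans (hD u hu)

/-- The word `w` can be read along the edges `T` from the state `q` to the state `q'`. -/
def Reads (T : List (List (V × Bool) × (V × Bool) × List (V × Bool))) :
    List (V × Bool) → List (V × Bool) → List (V × Bool) → Prop
  | q, [], q' => q = q'
  | q, s :: w, q' => ∃ r, (q, s, r) ∈ T ∧ Reads T r w q'

section Reads

variable {T : List (List (V × Bool) × (V × Bool) × List (V × Bool))}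

lemma reads_append {q q' : List (V × Bool)} {u w : List (V × Bool)} :
    Reads T q (u ++ w) q' ↔ ∃ r, Reads T q u r ∧ Reads T r w q' := by
  induction u generalizing q with
  | nil => simp [Reads]
  | cons s u ih =>
    simp only [List.cons_append, Reads, ih]
    constructor
    · rintro ⟨r, h1, r', h2, h3⟩; exact ⟨r', ⟨r, h1, h2⟩, h3⟩
    · rintro ⟨r', ⟨r, h1, h2⟩, h3⟩; exact ⟨r, h1, r', h2, h3⟩

lemma reads_winv (h1 : ∀ t ∈ T, (t.2.2, linv t.2.1, t.1) ∈ T) {q q' w : List (V × Bool)}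
    (h : Reads T q w q') : Reads T q' (winv w) q := by
  induction w generalizing q with
  | nil => exact Eq.symm h
  | cons s w ih =>
    obtain ⟨r, hr, h⟩ := h
    have e : winv (s :: w) = winv w ++ [linv s] := by simp [winv]
    rw [e, reads_append]
    exact ⟨r, ih h, q, h1 _ hr, rfl⟩

/-- Readability is preserved by shuffles (commutation squares) and by cancellations
(determinism). -/
lemma reads_rw (h1 : ∀ t ∈ T, (t.2.2, linv t.2.1, t.1) ∈ T)
    (h2 : ∀ t ∈ T, ∀ t' ∈ T, t.1 = t'.1 → t.2.1 = t'.2.1 → t.2.2 = t'.2.2)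
    (h3 : ∀ t ∈ T, ∀ t' ∈ T, t.1 = t'.1 → Γ.Adj t.2.1.1 t'.2.1.1 →
      ∃ r ∈ T, r.1 = t.2.2 ∧ r.2.1 = t'.2.1 ∧ (t'.2.2, t.2.1, r.2.2) ∈ T)
    {w w' : List (V × Bool)} (h : Rw Γ w w') {q q' : List (V × Bool)}
    (hr : Reads T q w q') : Reads T q w' q' := by
  induction h generalizing q with
  | refl w => exact hr
  | cons a _ ih =>
    obtain ⟨r, hr1, hr2⟩ := hr
    exact ⟨r, hr1, ih hr2⟩
  | swap a b w hab =>
    obtain ⟨r, hr1, r', hr2, hr3⟩ := hr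
    obtain ⟨⟨x1, x2, x3⟩, hx, e1, e2, hx'⟩ := h3 _ (h1 _ hr1) _ hr2 rfl hab
    simp only at e1 e2 hx'
    subst e1 e2
    refine ⟨x3, hx, r', ?_, hr3⟩
    simpa using h1 _ hx'
  | cancel a w =>
    obtain ⟨r, hr1, r', hr2, hr3⟩ := hr
    have := h2 _ (h1 _ hr1) _ hr2 rfl rfl
    simp only at this
    rwa [this]
  | trans _ _ ih1 ih2 => exact ih2 (ih1 hr)

lemma reads_of_path {p : List (List (V × Bool) × (V × Bool) × List (V × Bool))}
    (hp : ∀ e ∈ p, e ∈ T) {q q' : List (V × Bool)}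
    (h : p.map (fun e => e.1) ++ [q'] = q :: p.map (fun e => e.2.2)) :
    Reads T q (p.map fun e => e.2.1) q' := by
  induction p generalizing q with
  | nil => simpa [Reads, eq_comm] using h
  | cons e p ih =>
    simp only [List.map_cons, List.cons_append, List.cons.injEq] at h
    refine ⟨e.2.2, ?_, ih (fun e he => hp e (by simp [he])) h.2⟩
    rw [← h.1]
    exact hp e (by simp)

lemma reads_mem {H : Subgroup (RAAG Γ)}
    (hT : ∀ t ∈ T, wordProd Γ t.1 * lt Γ t.2.1 * (wordProd Γ t.2.2)⁻¹ ∈ H)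
    {q q' w : List (V × Bool)} (h : Reads T q w q') :
    wordProd Γ q * wordProd Γ w * (wordProd Γ q')⁻¹ ∈ H := by
  induction w generalizing q with
  | nil => rw [show q = q' from h]; simp
  | cons s w ih =>
    obtain ⟨r, hr, h⟩ := h
    have := mul_mem (hT _ hr) (ih h)
    simpa [mul_assoc] using this

lemma reads_state (h1 : ∀ t ∈ T, (t.2.2, linv t.2.1, t.1) ∈ T)
    {q q' w : List (V × Bool)} (h : Reads T q w q') : q' = q ∨ ∃ t ∈ T, t.1 = q' := by
  induction w generalizing q with
  | nil => exact Or.inl (Eq.symm h)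
  | cons s w ih =>
    obtain ⟨r, hr, h⟩ := h
    rcases ih h with rfl | h
    · exact Or.inr ⟨_, h1 _ hr, rfl⟩
    · exact Or.inr h

end Reads

lemma morse_of_autCert [Fintype V] {ws : List (List (V × Bool))} (h : AutCert Γ ws) :
    IsMorseSubgroup (raagGens Γ) (gen Γ ws) := by
  obtain ⟨T, P, ⟨h1, h2, h3, hP1, hP2⟩, hT, hl⟩ := h
  have hT' : ∀ t ∈ T, wordProd Γ t.1 * lt Γ t.2.1 * (wordProd Γ t.2.2)⁻¹ ∈ gen Γ ws := by
    intro t ht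
    rw [← wordProd_loopWord, ← exists_memWit_iff]
    exact hT t ht
  set Y : Set (RAAG Γ) := {g | ∃ w q, wordProd Γ w = g ∧ Reads T [] w q} with hY
  -- a reduced word between two elements of `Y` can be read between their states
  have key : ∀ x y w1 q1 w2 q2 u, wordProd Γ w1 = x → Reads T [] w1 q1 → wordProd Γ w2 = y →
      Reads T [] w2 q2 → Red Γ u → wordProd Γ u = x⁻¹ * y → Reads T q1 u q2 := by
    intro x y w1 q1 w2 q2 u hx hr1 hy hr2 hu hxy
    refine reads_rw h1 h2 h3 (w := winv w1 ++ w2) (rw_of_red hu ?_) ?_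
    · rw [wordProd_append, wordProd_winv, hx, hy, hxy]
    · rw [reads_append]
      exact ⟨[], reads_winv h1 hr1, hr2⟩
  have hconv : Conv Y := by
    rintro x ⟨w1, q1, hx, hr1⟩ y ⟨w2, q2, hy, hr2⟩ z hz
    have hp : wordProd Γ (rword (x⁻¹ * z) ++ rword (z⁻¹ * y)) = x⁻¹ * y := by
      rw [wordProd_append]; simp
    have := key x y w1 q1 w2 q2 (rword (x⁻¹ * z) ++ rword (z⁻¹ * y)) hx hr1 hy hr2
      (red_of_len (by rw [hp, ← hz, List.length_append]; rfl)) hp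
    rw [reads_append] at this
    obtain ⟨r, hr, -⟩ := this
    refine ⟨w1 ++ rword (x⁻¹ * z), r, ?_, reads_append.2 ⟨q1, hr1, hr⟩⟩
    rw [wordProd_append, hx]; simp
  have hH : ∀ g ∈ gen Γ ws, ∃ w, wordProd Γ w = g ∧ Reads T [] w [] := by
    intro g hg
    induction hg using Subgroup.closure_induction with
    | mem x hx =>
      obtain ⟨w, hw, rfl⟩ := hx
      obtain ⟨p, hp1, hp2, hp3⟩ := hl w hw
      exact ⟨w, rfl, hp2 ▸ reads_of_path hp1 hp3⟩
    | one => exact ⟨[], by simp, rfl⟩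
    | mul x y _ _ hx hy =>
      obtain ⟨u, rfl, hu⟩ := hx
      obtain ⟨w, rfl, hw⟩ := hy
      exact ⟨u ++ w, wordProd_append _ _, reads_append.2 ⟨_, hu, hw⟩⟩
    | inv x _ hx =>
      obtain ⟨u, rfl, hu⟩ := hx
      exact ⟨winv u, wordProd_winv _, reads_winv h1 hu⟩
  obtain ⟨D, hD⟩ := exists_list_bound (fun t => List.length t.1) T
  obtain ⟨R, hR⟩ := exists_list_bound (fun x => List.length x.2.1) P
  refine morse_of_conv (Y := Y) hconv ?_ (D := D) ?_ (R := R) ?_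
  · intro g hg
    obtain ⟨w, hw, hr⟩ := hH g hg
    exact ⟨w, [], hw, hr⟩
  · rintro y ⟨w, q, rfl, hr⟩
    have hm := reads_mem hT' hr
    rw [wordProd_nil, one_mul] at hm
    refine ⟨_, hm, ?_⟩
    rw [inv_mul_cancel_left, len_inv]
    rcases reads_state h1 hr with rfl | ⟨t, ht, rfl⟩
    · simp
    · exact (len_wordProd_le _).trans (hD t ht)
  · rintro y ⟨w1, q1, hy, hr1⟩ v k hk ⟨w2, q2, hyk, hr2⟩
    have hr := key y (y * k) w1 q1 w2 q2 (rword k) hy hr1 hyk hr2 (red_rword k) (by simp)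
    have hadj := adj_of_mem_Lk hk (red_rword k) (wordProd_rword k)
    have hstart : (v, [], q1) ∈ P := by
      obtain ⟨ha, hb⟩ := hP1 v (by simp)
      rcases reads_state h1 hr1 with rfl | ⟨t, ht, rfl⟩
      exacts [ha, hb t ht]
    have hrun : ∀ u w q q', (∀ a ∈ u, Γ.Adj v a.1) → (v, w, q) ∈ P → Reads T q u q' →
        ∃ w', (v, w', q') ∈ P ∧ wordProd Γ w' = wordProd Γ w * wordProd Γ u := by
      intro u
      induction u with
      | nil =>
        intro w q q' _ hw hr
        exact ⟨w, (show q = q' from hr) ▸ hw, by simp⟩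
      | cons s u ih =>
        intro w q q' ha hw hr
        obtain ⟨r, hr1, hr2⟩ := hr
        obtain ⟨⟨x1, x2, x3⟩, hx, e1, e2, e3⟩ := hP2 _ hw _ hr1 rfl (ha s (by simp))
        simp only at e1 e2 e3
        subst e1 e2
        obtain ⟨w', hw', e⟩ := ih x2 _ q' (fun a h => ha a (by simp [h])) hx hr2
        refine ⟨w', hw', ?_⟩
        rw [← wordProd_eq_one_iff, wordProd_loopWord, mul_inv_eq_one] at e3
        rw [e, ← e3, wordProd_cons, mul_assoc]
    obtain ⟨w', hw', e⟩ := hrun _ _ _ _ hadj hstart hr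
    rw [wordProd_rword, wordProd_nil, one_mul] at e
    rw [← e]
    exact (len_wordProd_le _).trans (hR _ hw')

end Certificate
/-! ### Morse subgroups have certificates -/

section Complete

variable {V : Type} {Γ : SimpleGraph V} [DecidableEq V] [DecidableRel Γ.Adj]

/-- A word representing the right coset `H * g`, the empty word for the coset `H`. -/
lemma exists_cosetWord (H : Subgroup (RAAG Γ)) : ∃ c : RAAG Γ → List (V × Bool), c 1 = [] ∧
    (∀ h ∈ H, ∀ g, c (h * g) = c g) ∧ ∀ g, ∃ h ∈ H, wordProd Γ (c g) = h * g := by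
  classical
  have hout : ∀ g, ∃ h ∈ H, (Quotient.mk (QuotientGroup.rightRel H) g).out = h * g := by
    intro g
    have := Quotient.exact (Quotient.out_eq (Quotient.mk (QuotientGroup.rightRel H) g))
    have h2 := QuotientGroup.rightRel_apply.1 this
    exact ⟨_, inv_mem h2, by group⟩
  refine ⟨fun g => if g ∈ H then [] else
    rword (Quotient.mk (QuotientGroup.rightRel H) g).out, by simp [one_mem], ?_, ?_⟩
  · intro h hh g
    have e : Quotient.mk (QuotientGroup.rightRel H) (h * g) = Quotient.mk _ g :=
      Quotient.sound (QuotientGroup.rightRel_apply.2 (by simpa using inv_mem hh))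
    simp only [e, H.mul_mem_cancel_left hh]
  · intro g
    by_cases hg : g ∈ H
    · exact ⟨g⁻¹, inv_mem hg, by simp [hg]⟩
    · obtain ⟨h, hh, e⟩ := hout g
      exact ⟨h, hh, by simp [hg, e]⟩

lemma rword_one : rword (1 : RAAG Γ) = [] := List.length_eq_zero_iff.1 len_one

theorem cert_of_morse [Fintype V] [Nontrivial V] (hconn : Γ.Connected)
    {ws : List (List (V × Bool))} (hH : IsMorseSubgroup (raagGens Γ) (gen Γ ws)) :
    FinIndexCert Γ ws ∨ AutCert Γ ws := by
  obtain ⟨B, hB⟩ := exists_list_bound List.length ws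
  obtain ⟨Y, hY, hYinv, hYB, ⟨D, hD⟩, hcase⟩ := morse_dichotomy hconn hH B
  set H := gen Γ ws with hHdef
  obtain ⟨c, c1, cinv, cH⟩ := exists_cosetWord H
  have ceq : ∀ g g', c g = c g' → ∃ h ∈ H, g' = h * g := by
    intro g g' e
    obtain ⟨h, hh, e1⟩ := cH g
    obtain ⟨h', hh', e2⟩ := cH g'
    refine ⟨h'⁻¹ * h, mul_mem (inv_mem hh') hh, ?_⟩
    rw [mul_assoc, ← e1, e, e2, inv_mul_cancel_left]
  have cfin : (c '' Y).Finite := by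
    refine ((finite_ball (Γ := Γ) D).image c).subset ?_
    rintro _ ⟨y, hy, rfl⟩
    obtain ⟨h, hh, hd⟩ := hD y hy
    exact ⟨h⁻¹ * y, hd, cinv _ (inv_mem hh) y⟩
  have hedge : ∀ g s, ∃ zs, MemWit Γ ws (loopWord (c g, s, c (g * lt Γ s))) zs := by
    intro g s
    rw [exists_memWit_iff, wordProd_loopWord]
    obtain ⟨h, hh, e1⟩ := cH g
    obtain ⟨h', hh', e2⟩ := cH (g * lt Γ s)
    simp only [e1, e2]
    have : h * g * lt Γ s * (h' * (g * lt Γ s))⁻¹ = h * h'⁻¹ := by group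
    rw [this]
    exact mul_mem hh (inv_mem hh')
  have h1Y : (1 : RAAG Γ) ∈ Y := hYB 1 (by simp)
  rcases hcase with rfl | ⟨R, hR⟩
  · left
    refine ⟨cfin.toFinset.toList, ?_, ?_⟩
    · simpa using ⟨1, c1⟩
    · intro u hu s _
      simp only [Finset.mem_toList, Set.Finite.mem_toFinset] at hu
      obtain ⟨g, -, rfl⟩ := hu
      exact ⟨c (g * lt Γ s), by simp, hedge g s⟩
  right
  set TS : Set (List (V × Bool) × (V × Bool) × List (V × Bool)) :=
    {t | ∃ y s, y ∈ Y ∧ y * lt Γ s ∈ Y ∧ t = (c y, s, c (y * lt Γ s))} with hTS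
  have hTfin : TS.Finite := by
    refine (cfin.prod (Set.finite_univ.prod cfin)).subset ?_
    rintro _ ⟨y, s, hy, hys, rfl⟩
    exact ⟨⟨y, hy, rfl⟩, trivial, ⟨_, hys, rfl⟩⟩
  set PS : Set (V × List (V × Bool) × List (V × Bool)) :=
    {x | ∃ v y k, y ∈ Y ∧ y * k ∈ Y ∧ k ∈ Lk Γ v ∧ x = (v, rword k, c (y * k))} with hPS
  have hPfin : PS.Finite := by
    refine ((Set.finite_univ (α := V)).prod
      (((finite_ball (Γ := Γ) R).image rword).prod cfin)).subset ?_
    rintro _ ⟨v, y, k, hy, hyk, hk, rfl⟩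
    exact ⟨trivial, ⟨k, hR y hy v k hk hyk, rfl⟩, ⟨_, hyk, rfl⟩⟩
  have mT : ∀ t, t ∈ hTfin.toFinset.toList ↔ t ∈ TS := fun t => by simp
  have mP : ∀ x, x ∈ hPfin.toFinset.toList ↔ x ∈ PS := fun x => by simp
  refine ⟨hTfin.toFinset.toList, hPfin.toFinset.toList, ⟨?_, ?_, ?_, ?_, ?_⟩, ?_, ?_⟩
  · intro t ht
    rw [mT] at ht ⊢
    obtain ⟨y, s, hy, hys, rfl⟩ := ht
    exact ⟨y * lt Γ s, linv s, hys, by simpa using hy, by simp⟩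
  · intro t ht t' ht' e1 e2
    rw [mT] at ht ht'
    obtain ⟨y, s, hy, hys, rfl⟩ := ht
    obtain ⟨y', s', hy', hys', rfl⟩ := ht'
    simp only at e1 e2 ⊢
    subst e2
    obtain ⟨h, hh, rfl⟩ := ceq _ _ e1
    rw [mul_assoc, cinv h hh]
  · intro t ht t' ht' e1 hadj
    rw [mT] at ht ht'
    obtain ⟨y, s, hy, hys, rfl⟩ := ht
    obtain ⟨y', s', hy', hys', rfl⟩ := ht'
    simp only at e1 hadj ⊢
    obtain ⟨h, hh, rfl⟩ := ceq _ _ e1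
    have hys2 : y * lt Γ s' ∈ Y := by
      have := hYinv _ (inv_mem hh) _ hys'
      simpa [mul_assoc] using this
    have hcomm : lt Γ s * lt Γ s' = lt Γ s' * lt Γ s := lt_comm hadj
    -- the fourth corner of a commutation square lies between two of its corners
    have hmem : y * lt Γ s * lt Γ s' ∈ Y := by
      refine hY _ hys _ hys2 _ ?_
      have e2 : (y * lt Γ s * lt Γ s')⁻¹ * (y * lt Γ s') = (lt Γ s)⁻¹ := by
        rw [mul_assoc y, hcomm]; group
      have e3 : (y * lt Γ s)⁻¹ * (y * lt Γ s') = lt Γ (linv s) * lt Γ s' := by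
        rw [lt_linv]; group
      rw [e2, e3, inv_mul_cancel_left, len_inv, len_lt, len_lt,
        len_lt_mul_Lk (a := linv s) (lt_mem_Lk hadj), len_lt]
    refine ⟨(c (y * lt Γ s), s', c (y * lt Γ s * lt Γ s')), ?_, rfl, rfl, ?_⟩
    · rw [mT]
      exact ⟨_, _, hys, hmem, rfl⟩
    · rw [mT]
      have e4 : y * lt Γ s * lt Γ s' = y * lt Γ s' * lt Γ s := by
        rw [mul_assoc, hcomm, mul_assoc]
      refine ⟨y * lt Γ s', s, hys2, e4 ▸ hmem, ?_⟩
      simp only [Prod.mk.injEq, true_and]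
      rw [mul_assoc, cinv h hh, e4]
      exact ⟨rfl, rfl⟩
  · intro v _
    constructor
    · rw [mP]
      exact ⟨v, 1, 1, h1Y, by simpa using h1Y, one_mem _, by simp [rword_one, c1]⟩
    · intro t ht
      rw [mT] at ht
      rw [mP]
      obtain ⟨y, s, hy, hys, rfl⟩ := ht
      exact ⟨v, y, 1, hy, by simpa using hy, one_mem _, by simp [rword_one]⟩
  · intro x hx t ht e1 hadj
    rw [mP] at hx
    rw [mT] at ht
    obtain ⟨v, y, k, hy, hyk, hk, rfl⟩ := hx
    obtain ⟨y', s, hy', hys', rfl⟩ := ht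
    simp only at e1 hadj ⊢
    obtain ⟨h, hh, rfl⟩ := ceq _ _ e1.symm
    rw [mul_assoc h] at hys'
    have hyks : y * (k * lt Γ s) ∈ Y := by
      have := hYinv _ (inv_mem hh) _ hys'
      simpa [mul_assoc] using this
    refine ⟨(v, rword (k * lt Γ s), c (y * (k * lt Γ s))), ?_, rfl, ?_, ?_⟩
    · rw [mP]
      exact ⟨v, y, _, hy, hyks, mul_mem hk (lt_mem_Lk hadj), rfl⟩
    · simp only
      rw [mul_assoc h, cinv h hh, mul_assoc]
    · rw [← wordProd_eq_one_iff, wordProd_loopWord]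
      simp
  · intro t ht
    rw [mT] at ht
    obtain ⟨y, s, hy, hys, rfl⟩ := ht
    exact hedge y s
  · intro w hw
    have hpath : ∀ (w : List (V × Bool)) (g : RAAG Γ), (∀ i, g * wordProd Γ (w.take i) ∈ Y) →
        ∃ p : List (List (V × Bool) × (V × Bool) × List (V × Bool)),
          (∀ e ∈ p, e ∈ TS) ∧ p.map (fun e => e.2.1) = w ∧
          p.map (fun e => e.1) ++ [c (g * wordProd Γ w)] = c g :: p.map (fun e => e.2.2) := by
      intro w
      induction w with
      | nil => intro g _; exact ⟨[], by simp, rfl, by simp⟩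
      | cons s w ih =>
        intro g hg
        obtain ⟨p, hp1, hp2, hp3⟩ := ih (g * lt Γ s) fun i => by
          simpa [mul_assoc] using hg (i + 1)
        refine ⟨(c g, s, c (g * lt Γ s)) :: p, ?_, by simp [hp2], ?_⟩
        · intro e he
          rcases List.mem_cons.1 he with rfl | he
          · exact ⟨g, s, by simpa using hg 0, by simpa using hg 1, rfl⟩
          · exact hp1 e he
        · rw [wordProd_cons, ← mul_assoc, List.map_cons, List.cons_append, hp3]
          rfl
    obtain ⟨p, hp1, hp2, hp3⟩ := hpath w 1 fun i => by
      rw [one_mul]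
      refine hYB _ ((len_wordProd_le _).trans ?_)
      rw [List.length_take]
      exact (min_le_right _ _).trans (hB w hw)
    refine ⟨p, fun e he => (mT e).2 (hp1 e he), hp2, ?_⟩
    have hwH : wordProd Γ w ∈ H := Subgroup.subset_closure ⟨w, hw, rfl⟩
    have e : c (1 * wordProd Γ w) = [] := by
      rw [one_mul, ← mul_one (wordProd Γ w), cinv _ hwH, c1]
    rwa [e, c1] at hp3

theorem morse_iff_cert [Fintype V] [Nontrivial V] (hconn : Γ.Connected)
    (ws : List (List (V × Bool))) : IsMorseSubgroup (raagGens Γ) (gen Γ ws) ↔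
      FinIndexCert Γ ws ∨ AutCert Γ ws :=
  ⟨cert_of_morse hconn, fun h => h.elim morse_of_finIndexCert morse_of_autCert⟩

end Complete
/-! ### The certificates are semidecidable -/

section Computability

/-- Semidecidable predicates: those of the form `∃ n, R a n` with `R` primitive recursive. -/
def Sig {α : Type} [Primcodable α] (p : α → Prop) : Prop :=
  ∃ R : α → ℕ → Prop, PrimrecRel R ∧ ∀ a, p a ↔ ∃ n, R a n

variable {α β γ : Type} [Primcodable α] [Primcodable β] [Primcodable γ]

lemma Sig.of_eq {p q : α → Prop} (hp : Sig p) (h : ∀ a, p a ↔ q a) : Sig q := by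
  obtain ⟨R, hR, hpR⟩ := hp
  exact ⟨R, hR, fun a => (h a).symm.trans (hpR a)⟩

lemma Sig.of_primrec {p : α → Prop} (hp : PrimrecPred p) : Sig p :=
  ⟨fun a _ => p a, hp.comp Primrec.fst, fun a => by simp⟩

lemma Sig.comp {p : β → Prop} (hp : Sig p) {f : α → β} (hf : Primrec f) :
    Sig fun a => p (f a) := by
  obtain ⟨R, hR, hpR⟩ := hp
  exact ⟨fun a n => R (f a) n, PrimrecRel.comp hR (hf.comp Primrec.fst) Primrec.snd,
    fun a => hpR _⟩

lemma Sig.ex {p : α → β → Prop} (hp : Sig fun q : α × β => p q.1 q.2) :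
    Sig fun a => ∃ b, p a b := by
  obtain ⟨R, hR, hpR⟩ := hp
  -- The number `n` codes a pair of a code of `b` and a witness for `p a b`.
  refine ⟨fun a n => ∃ b ∈ (Encodable.decode (α := β) n.unpair.1).toList,
    R (a, b) n.unpair.2, ?_, fun a => ?_⟩
  · have hu : Primrec fun q : α × ℕ => q.2.unpair := Primrec.unpair.comp Primrec.snd
    have h1 : PrimrecRel fun (b : β) (q : α × ℕ) => R (q.1, b) q.2.unpair.2 :=
      PrimrecRel.comp hR
        (Primrec.pair (Primrec.fst.comp Primrec.snd) Primrec.fst)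
        (Primrec.snd.comp (hu.comp Primrec.snd))
    have hl : Primrec fun q : α × ℕ => (Encodable.decode (α := β) q.2.unpair.1).toList := by
      have : Primrec fun o : Option β => o.toList :=
        (Primrec.option_casesOn Primrec.id (Primrec.const [])
          (Primrec.list_cons.comp Primrec.snd (Primrec.const [])).to₂).of_eq
          fun o => by cases o <;> rfl
      exact this.comp (Primrec.decode.comp (Primrec.fst.comp hu))
    exact PrimrecRel.comp h1.exists_mem_list hl Primrec.id
  · constructor
    · rintro ⟨b, hb⟩
      obtain ⟨n, hn⟩ := (hpR (a, b)).1 hb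
      exact ⟨Nat.pair (Encodable.encode b) n, b, by simp, by simpa using hn⟩
    · rintro ⟨n, b, -, hb⟩
      exact ⟨b, (hpR (a, b)).2 ⟨_, hb⟩⟩

lemma Sig.and {p q : α → Prop} (hp : Sig p) (hq : Sig q) : Sig fun a => p a ∧ q a := by
  obtain ⟨R, hR, hpR⟩ := hp
  obtain ⟨S, hS, hqS⟩ := hq
  have hu : Primrec fun q : α × ℕ => q.2.unpair := Primrec.unpair.comp Primrec.snd
  refine ⟨fun a n => R a n.unpair.1 ∧ S a n.unpair.2,
    PrimrecPred.and (PrimrecRel.comp hR Primrec.fst (Primrec.fst.comp hu))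
      (PrimrecRel.comp hS Primrec.fst (Primrec.snd.comp hu)), fun a => ?_⟩
  dsimp only
  rw [hpR, hqS]
  constructor
  · rintro ⟨⟨m, hm⟩, n, hn⟩
    exact ⟨Nat.pair m n, by simpa using ⟨hm, hn⟩⟩
  · rintro ⟨n, h1, h2⟩
    exact ⟨⟨_, h1⟩, _, h2⟩

lemma Sig.or {p q : α → Prop} (hp : Sig p) (hq : Sig q) : Sig fun a => p a ∨ q a := by
  obtain ⟨R, hR, hpR⟩ := hp
  obtain ⟨S, hS, hqS⟩ := hq
  refine ⟨fun a n => R a n ∨ S a n, PrimrecPred.or hR hS, fun a => ?_⟩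
  dsimp only
  rw [hpR, hqS, ← exists_or]

lemma Sig.imp {p q : α → Prop} (hp : PrimrecPred p) (hq : Sig q) : Sig fun a => p a → q a :=
  ((Sig.of_primrec hp.not).or hq).of_eq fun a => by tauto

lemma Sig.eq {f g : α → β} (hf : Primrec f) (hg : Primrec g) : Sig fun a => f a = g a :=
  Sig.of_primrec (Primrec.eq.comp hf hg)

/-- A list of semidecidable conditions holds as soon as all of them have a witness below a
common bound. -/
lemma Sig.ball {p : α → β → Prop} {f : α → List β} (hf : Primrec f)
    (hp : Sig fun q : α × β => p q.1 q.2) : Sig fun a => ∀ b ∈ f a, p a b := by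
  obtain ⟨R, hR, hpR⟩ := hp
  refine ⟨fun a N => ∀ b ∈ f a, ∃ n ∈ List.range N, R (a, b) n, ?_, fun a => ?_⟩
  · have h1 : PrimrecRel fun (n : ℕ) (x : β × α × ℕ) => R (x.2.1, x.1) n :=
      PrimrecRel.comp hR
        (Primrec.pair (Primrec.fst.comp (Primrec.snd.comp Primrec.snd))
          (Primrec.fst.comp Primrec.snd)) Primrec.fst
    have h2 : PrimrecRel fun (b : β) (x : α × ℕ) => ∃ n ∈ List.range x.2, R (x.1, b) n :=
      PrimrecRel.comp h1.exists_mem_list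
        (Primrec.list_range.comp (Primrec.snd.comp Primrec.snd)) Primrec.id
    exact PrimrecRel.comp h2.forall_mem_list (hf.comp Primrec.fst) Primrec.id
  · have key : ∀ l : List β, (∀ b ∈ l, p a b) ↔
        ∃ N, ∀ b ∈ l, ∃ n ∈ List.range N, R (a, b) n := by
      intro l
      constructor
      · intro h
        induction l with
        | nil => exact ⟨0, by simp⟩
        | cons b l ih =>
          obtain ⟨N, hN⟩ := ih fun b hb => h b (by simp [hb])
          obtain ⟨m, hm⟩ := (hpR (a, b)).1 (h b (by simp))
          refine ⟨N + m + 1, fun c hc => ?_⟩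
          rcases List.mem_cons.1 hc with rfl | hc
          · exact ⟨m, List.mem_range.2 (by omega), hm⟩
          · obtain ⟨n, hn, hn'⟩ := hN c hc
            exact ⟨n, List.mem_range.2 (by have := List.mem_range.1 hn; omega), hn'⟩
      · rintro ⟨N, hN⟩ b hb
        obtain ⟨n, -, hn⟩ := hN b hb
        exact (hpR (a, b)).2 ⟨n, hn⟩
    exact key (f a)

lemma primrec_mem {f : α → β} {g : α → List β} (hf : Primrec f) (hg : Primrec g) :
    PrimrecPred fun a => f a ∈ g a := by
  have h : PrimrecRel fun (x y : β) => x = y := Primrec.eq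
  exact (PrimrecRel.comp h.exists_mem_list hg hf).of_eq fun a => by simp

lemma Sig.mem {f : α → β} {g : α → List β} (hf : Primrec f) (hg : Primrec g) :
    Sig fun a => f a ∈ g a := Sig.of_primrec (primrec_mem hf hg)

lemma Sig.bex {p : α → β → Prop} {f : α → List β} (hf : Primrec f)
    (hp : Sig fun q : α × β => p q.1 q.2) : Sig fun a => ∃ b ∈ f a, p a b :=
  Sig.ex (p := fun a b => b ∈ f a ∧ p a b)
    ((Sig.mem Primrec.snd (hf.comp Primrec.fst)).and hp)

/-- A semidecidable predicate is the domain of a partial recursive function. -/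
lemma Sig.partrec {p : α → Prop} (hp : Sig p) :
    ∃ f : α →. Unit, Partrec f ∧ ∀ a, (f a).Dom ↔ p a := by
  obtain ⟨R, ⟨hd, hR⟩, hpR⟩ := hp
  have hd' : ∀ a n, Decidable (R a n) := fun a n => hd (a, n)
  have hR' : Partrec₂ fun (a : α) (n : ℕ) => (Part.some (decide (R a n)) : Part Bool) := by
    have : Computable₂ fun (a : α) (n : ℕ) => decide (R a n) :=
      (hR.to_comp).of_eq fun x => by congr
    exact this.partrec₂
  refine ⟨fun a => (Nat.rfind fun n => Part.some (decide (R a n))).map fun _ => (),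
    (Partrec.rfind hR').map (Computable.const ()).to₂, fun a => ?_⟩
  rw [hpR]
  refine (Nat.rfind_dom (p := fun n => Part.some (decide (R a n)))).trans ?_
  simp

variable {V : Type} [Fintype V] [DecidableEq V] [Primcodable V] (Γ : SimpleGraph V)
  [DecidableRel Γ.Adj]

lemma primrec_linv : Primrec (linv : V × Bool → V × Bool) := Primrec.dom_finite _

lemma primrec_adj {f g : α → V} (hf : Primrec f) (hg : Primrec g) :
    PrimrecPred fun a => Γ.Adj (f a) (g a) := by
  have h : PrimrecPred fun x : V × V => Γ.Adj x.1 x.2 := ⟨inferInstance, Primrec.dom_finite _⟩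
  exact h.comp (hf.pair hg)

lemma primrec_del : Primrec₂ (del Γ) := by
  let h : (V × Bool) × List (V × Bool) →
      (V × Bool) × List (V × Bool) × Option (List (V × Bool)) → Option (List (V × Bool)) :=
    fun x y => if y.1 = x.1 then some y.2.1 else
      if Γ.Adj x.1.1 y.1.1 then y.2.2.map (y.1 :: ·) else none
  have hh : Primrec₂ h := by
    have a1 : Primrec fun z : ((V × Bool) × List (V × Bool)) ×
        (V × Bool) × List (V × Bool) × Option (List (V × Bool)) => z.1.1 :=
      Primrec.fst.comp Primrec.fst
    have b1 : Primrec fun z : ((V × Bool) × List (V × Bool)) ×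
        (V × Bool) × List (V × Bool) × Option (List (V × Bool)) => z.2.1 :=
      Primrec.fst.comp Primrec.snd
    refine Primrec.ite (Primrec.eq.comp b1 a1)
      (Primrec.option_some.comp (Primrec.fst.comp (Primrec.snd.comp Primrec.snd)))
      (Primrec.ite (primrec_adj Γ (Primrec.fst.comp a1) (Primrec.fst.comp b1)) ?_
        (Primrec.const none))
    exact Primrec.option_map (Primrec.snd.comp (Primrec.snd.comp Primrec.snd))
      (Primrec.list_cons.comp (b1.comp Primrec.fst) Primrec.snd).to₂
  refine (Primrec.list_rec (f := fun x : (V × Bool) × List (V × Bool) => x.2)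
    (g := fun _ => none) Primrec.snd (Primrec.const none) hh).of_eq ?_
  rintro ⟨a, w⟩
  dsimp only
  have key : ∀ w' : List (V × Bool), (List.recOn w' none fun b l IH => h (a, w) (b, l, IH)) =
      del Γ a w' := by
    intro w'
    induction w' with
    | nil => rfl
    | cons b l ih =>
      change h (a, w) (b, l, List.recOn l none fun b l IH => h (a, w) (b, l, IH)) = _
      rw [ih]
      rfl
  exact key w

lemma primrec_act : Primrec₂ (act Γ) :=
  Primrec.option_getD.comp
    ((primrec_del Γ).comp (primrec_linv.comp Primrec.fst) Primrec.snd) Primrec.list_cons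

lemma primrec_nfw : Primrec (nfw Γ) :=
  Primrec.list_foldr (h := fun _ x => act Γ x.1 x.2) Primrec.id (Primrec.const [])
    ((primrec_act Γ).comp (Primrec.fst.comp Primrec.snd) (Primrec.snd.comp Primrec.snd)).to₂

lemma primrec_winv : Primrec (winv : List (V × Bool) → List (V × Bool)) :=
  Primrec.list_reverse.comp
    (Primrec.list_map Primrec.id (primrec_linv.comp Primrec.snd).to₂)

lemma primrec_loopWord : Primrec (loopWord (V := V)) :=
  Primrec.list_append.comp Primrec.fst
    (Primrec.list_cons.comp (Primrec.fst.comp Primrec.snd)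
      (primrec_winv.comp (Primrec.snd.comp Primrec.snd)))

lemma sig_memWit {f : α → List (List (V × Bool))} {g : α → List (V × Bool)}
    (hf : Primrec f) (hg : Primrec g) : Sig fun a => ∃ zs, MemWit Γ (f a) (g a) zs := by
  refine Sig.ex (Sig.and (Sig.ball Primrec.snd (Sig.or ?_ ?_)) ?_)
  · exact Sig.mem Primrec.snd (hf.comp (Primrec.fst.comp Primrec.fst))
  · exact Sig.mem (primrec_winv.comp Primrec.snd) (hf.comp (Primrec.fst.comp Primrec.fst))
  · exact Sig.eq ((primrec_nfw Γ).comp (Primrec.list_append.comp (hg.comp Primrec.fst)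
      (Primrec.list_flatten.comp Primrec.snd))) (Primrec.const [])

lemma sig_finIndexCert : Sig (FinIndexCert Γ) := by
  refine Sig.ex (Sig.and (Sig.mem (Primrec.const []) Primrec.snd)
    (Sig.ball Primrec.snd (Sig.ball (Primrec.const _) (Sig.bex ?_ (sig_memWit Γ ?_ ?_)))))
  · exact Primrec.snd.comp (Primrec.fst.comp Primrec.fst)
  · exact Primrec.fst.comp (Primrec.fst.comp (Primrec.fst.comp Primrec.fst))
  · exact primrec_loopWord.comp ((Primrec.snd.comp (Primrec.fst.comp Primrec.fst)).pair
      ((Primrec.snd.comp Primrec.fst).pair Primrec.snd))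

lemma sig_autCheck : Sig fun x : List (List (V × Bool) × (V × Bool) × List (V × Bool)) ×
    List (V × List (V × Bool) × List (V × Bool)) => AutCheck Γ x.1 x.2 := by
  -- Components of an edge that depends on parameters: source, label, target.
  have e1 {δ : Type} [Primcodable δ] {f : δ → List (V × Bool) × (V × Bool) × List (V × Bool)}
      (hf : Primrec f) : Primrec fun d => (f d).1 := Primrec.fst.comp hf
  have e2 {δ : Type} [Primcodable δ] {f : δ → List (V × Bool) × (V × Bool) × List (V × Bool)}
      (hf : Primrec f) : Primrec fun d => (f d).2.1 := Primrec.fst.comp (Primrec.snd.comp hf)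
  have e3 {δ : Type} [Primcodable δ] {f : δ → List (V × Bool) × (V × Bool) × List (V × Bool)}
      (hf : Primrec f) : Primrec fun d => (f d).2.2 := Primrec.snd.comp (Primrec.snd.comp hf)
  refine .and ?_ (.and ?_ (.and ?_ (.and ?_ ?_)))
  · refine Sig.ball Primrec.fst (Sig.mem ?_ (Primrec.fst.comp Primrec.fst))
    exact (e3 Primrec.snd).pair ((primrec_linv.comp (e2 Primrec.snd)).pair (e1 Primrec.snd))
  · refine Sig.ball Primrec.fst (Sig.ball (Primrec.fst.comp Primrec.fst) ?_)
    have t := Primrec.snd.comp (Primrec.fst (α :=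
      (List (List (V × Bool) × (V × Bool) × List (V × Bool)) ×
        List (V × List (V × Bool) × List (V × Bool))) ×
        (List (V × Bool) × (V × Bool) × List (V × Bool)))
      (β := List (V × Bool) × (V × Bool) × List (V × Bool)))
    exact Sig.imp (Primrec.eq.comp (e1 t) (e1 Primrec.snd))
      (Sig.imp (Primrec.eq.comp (e2 t) (e2 Primrec.snd)) (Sig.eq (e3 t) (e3 Primrec.snd)))
  · refine Sig.ball Primrec.fst (Sig.ball (Primrec.fst.comp Primrec.fst) ?_)
    have t := Primrec.snd.comp (Primrec.fst (α :=
      (List (List (V × Bool) × (V × Bool) × List (V × Bool)) ×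
        List (V × List (V × Bool) × List (V × Bool))) ×
        (List (V × Bool) × (V × Bool) × List (V × Bool)))
      (β := List (V × Bool) × (V × Bool) × List (V × Bool)))
    refine Sig.imp (Primrec.eq.comp (e1 t) (e1 Primrec.snd))
      (Sig.imp (primrec_adj Γ (Primrec.fst.comp (e2 t)) (Primrec.fst.comp (e2 Primrec.snd)))
      (Sig.bex (Primrec.fst.comp (Primrec.fst.comp Primrec.fst)) ?_))
    refine .and (Sig.eq (e1 Primrec.snd) (e3 (t.comp Primrec.fst))) (.and
      (Sig.eq (e2 Primrec.snd) (e2 (Primrec.snd.comp Primrec.fst))) (Sig.mem ?_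
        (Primrec.fst.comp (Primrec.fst.comp (Primrec.fst.comp Primrec.fst)))))
    exact (e3 (Primrec.snd.comp Primrec.fst)).pair
      ((e2 (t.comp Primrec.fst)).pair (e3 Primrec.snd))
  · refine Sig.ball (Primrec.const _) (.and (Sig.mem ?_ (Primrec.snd.comp Primrec.fst))
      (Sig.ball (Primrec.fst.comp Primrec.fst) (Sig.mem ?_
        (Primrec.snd.comp (Primrec.fst.comp Primrec.fst)))))
    · exact Primrec.snd.pair (Primrec.const _)
    · exact (Primrec.snd.comp Primrec.fst).pair ((Primrec.const []).pair (e1 Primrec.snd))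
  · refine Sig.ball Primrec.snd (Sig.ball (Primrec.fst.comp Primrec.fst) ?_)
    have x := Primrec.snd.comp (Primrec.fst (α :=
      (List (List (V × Bool) × (V × Bool) × List (V × Bool)) ×
        List (V × List (V × Bool) × List (V × Bool))) ×
        (V × List (V × Bool) × List (V × Bool)))
      (β := List (V × Bool) × (V × Bool) × List (V × Bool)))
    refine Sig.imp (Primrec.eq.comp (e1 Primrec.snd) (Primrec.snd.comp (Primrec.snd.comp x)))
      (Sig.imp (primrec_adj Γ (Primrec.fst.comp x) (Primrec.fst.comp (e2 Primrec.snd)))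
      (Sig.bex (Primrec.snd.comp (Primrec.fst.comp Primrec.fst)) ?_))
    refine .and (Sig.eq (Primrec.fst.comp Primrec.snd) (Primrec.fst.comp (x.comp Primrec.fst)))
      (.and (Sig.eq (Primrec.snd.comp (Primrec.snd.comp Primrec.snd))
        (e3 (Primrec.snd.comp Primrec.fst))) (Sig.eq ((primrec_nfw Γ).comp ?_)
        (Primrec.const [])))
    exact primrec_loopWord.comp
      ((Primrec.fst.comp (Primrec.snd.comp (x.comp Primrec.fst))).pair
      ((e2 (Primrec.snd.comp Primrec.fst)).pair
        (Primrec.fst.comp (Primrec.snd.comp Primrec.snd))))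

lemma sig_loopAt {f : α → List (List (V × Bool) × (V × Bool) × List (V × Bool))}
    {g : α → List (V × Bool)} (hf : Primrec f) (hg : Primrec g) :
    Sig fun a => ∃ p, LoopAt (f a) p (g a) := by
  refine Sig.ex (.and ?_ (.and ?_ ?_))
  · exact Sig.ball Primrec.snd (Sig.mem Primrec.snd (hf.comp (Primrec.fst.comp Primrec.fst)))
  · exact Sig.eq (Primrec.list_map Primrec.snd
      (Primrec.fst.comp (Primrec.snd.comp Primrec.snd)).to₂) (hg.comp Primrec.fst)
  · exact Sig.eq
      (Primrec.list_append.comp (Primrec.list_map Primrec.snd (Primrec.fst.comp Primrec.snd).to₂)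
        (Primrec.const [[]]))
      (Primrec.list_cons.comp (Primrec.const [])
        (Primrec.list_map Primrec.snd (Primrec.snd.comp (Primrec.snd.comp Primrec.snd)).to₂))

lemma sig_autCert : Sig (AutCert Γ) := by
  refine Sig.ex (Sig.ex (.and ((sig_autCheck Γ).comp
    ((Primrec.snd.comp Primrec.fst).pair Primrec.snd)) (.and ?_ ?_)))
  · exact Sig.ball (Primrec.snd.comp Primrec.fst) (sig_memWit Γ
      (Primrec.fst.comp (Primrec.fst.comp Primrec.fst)) (primrec_loopWord.comp Primrec.snd))
  · exact Sig.ball (Primrec.fst.comp Primrec.fst) (sig_loopAt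
      (Primrec.snd.comp (Primrec.fst.comp Primrec.fst)) Primrec.snd)

end Computability

end RaagMorse

/-- **Partial algorithm detecting Morseness in right-angled Artin groups.**
Let `Γ` be a finite simplicial graph with at least two vertices which is connected and
anti-connected.  Then there is a partial computable function on finite lists of words over
`V(Γ)^{±1}` whose domain is exactly the set of lists of words generating a Morse subgroup of
`A_Γ`: the algorithm halts if the generated subgroup is Morse and runs forever otherwise. -/
theorem morseness_semidecidable_in_RAAG {V : Type} [Fintype V] [DecidableEq V] [Primcodable V]
    (Γ : SimpleGraph V) [DecidableRel Γ.Adj] (hcard : 1 < Fintype.card V)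
    (hconn : Γ.Connected) (hanti : AntiConnected Γ) :
    ∃ f : List (List (V × Bool)) →. Unit, Partrec f ∧
      ∀ ws : List (List (V × Bool)),
        (f ws).Dom ↔
          IsMorseSubgroup (raagGens Γ)
            (Subgroup.closure {g : RAAG Γ | ∃ w ∈ ws, g = wordProd Γ w}) := by
  have : Nontrivial V := Fintype.one_lt_card_iff_nontrivial.1 hcard
  obtain ⟨f, hf, hdom⟩ :=
    ((RaagMorse.sig_finIndexCert Γ).or (RaagMorse.sig_autCert Γ)).partrec
  exact ⟨f, hf, fun ws => (hdom ws).trans (RaagMorse.morse_iff_cert hconn ws).symm⟩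
end

section
/- (Local-to-global principle for quasigeodesics.) For every δ ≥ 0 and all integers λ ≥ 1 and ε ≥ 0 there exist constants K, λ' ≥ 1 and ε' ≥ 0, depending only on δ, λ and ε, with the following property: for every δ-hyperbolic geodesic metric space X and every path γ : [a,b] → X, if the restriction of γ to every subinterval of [a,b] of length at most K is a (λ,ε)-quasigeodesic, then γ is a (λ',ε')-quasigeodesic. -/
/-!
The proof reduces the local-to-global principle to a statement about chains of points with long
steps and small Gromov products.

* `log_close`: by repeated bisection and thin triangles, a geodesic joining `γ u` to `γ v` stays
  within `n δ + O(1)` of the image `γ [u,v]` as soon as `|u - v| ≤ 2 ^ n`.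
* `gromov_small`: if `γ` is a quasigeodesic on `[u - L, u + L]` with `L = 2 ^ n`, then the
  Gromov product of `γ (u - L)` and `γ (u + L)` based at `γ u` is `O(n) = O(log L)`. Indeed the
  two geodesics issuing from `γ u` are still close to each other at distance equal to this Gromov
  product (`insize`); by `log_close` both are there near points of `γ`, one on each side of `u`,
  whose parameters must therefore be close to each other and hence to `u`.
* `chain_growth`: if consecutive points `x i`, `x (i+1)` are far apart compared with the Gromov
  products of `x i`, `x (i+2)` at `x (i+1)`, then `dist (x 0) (x n) ≥ n`. This is an induction
  using the four-point inequality `four_point`.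

Since the steps `γ (s + i L)`, `γ (s + (i+1) L)` are at distance at least `L / λ - ε`, which is
linear in `L`, while the Gromov products are only logarithmic, the chain lemma applies once `L` is
large. The logarithmic estimate is enough, so the full stability theorem for quasigeodesics
(Morse lemma) is not needed.
-/

/-- `f` restricted to `[a,b]` is a geodesic segment: it preserves distances of parameters. -/
def IsGeodesicSegment {X : Type*} [MetricSpace X] (f : ℝ → X) (a b : ℝ) : Prop :=
  a ≤ b ∧ ∀ s ∈ Set.Icc a b, ∀ t ∈ Set.Icc a b, dist (f s) (f t) = |s - t|

/-- A metric space is geodesic if any two points are joined by a geodesic segment. -/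
def GeodesicSpace (X : Type*) [MetricSpace X] : Prop :=
  ∀ x y : X, ∃ f : ℝ → X, f 0 = x ∧ f (dist x y) = y ∧ IsGeodesicSegment f 0 (dist x y)

/-- A geodesic metric space is `δ`-hyperbolic if for every geodesic triangle each side is
contained in the `δ`-neighborhood of the union of the two other sides. -/
def DeltaHyperbolic (X : Type*) [MetricSpace X] (δ : ℝ) : Prop :=
  ∀ x y z : X, ∀ f g h : ℝ → X,
    (f 0 = x ∧ f (dist x y) = y ∧ IsGeodesicSegment f 0 (dist x y)) →
    (g 0 = y ∧ g (dist y z) = z ∧ IsGeodesicSegment g 0 (dist y z)) →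
    (h 0 = x ∧ h (dist x z) = z ∧ IsGeodesicSegment h 0 (dist x z)) →
    ∀ s ∈ Set.Icc 0 (dist x y), ∃ p : X,
      p ∈ g '' Set.Icc 0 (dist y z) ∪ h '' Set.Icc 0 (dist x z) ∧ dist (f s) p ≤ δ

/-- The map `γ` is a `(k,c)`-quasigeodesic on the interval `[a,b]`. -/
def IsQuasigeodesicOn {X : Type*} [MetricSpace X] (k c : ℝ) (γ : ℝ → X) (a b : ℝ) : Prop :=
  ∀ s ∈ Set.Icc a b, ∀ t ∈ Set.Icc a b,
    (1 / k) * |s - t| - c ≤ dist (γ s) (γ t) ∧ dist (γ s) (γ t) ≤ k * |s - t| + c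

/-! ### Thin triangles and the four-point inequality -/

/-- The Gromov product `(x | z)_y` of `x` and `z` based at `y`. -/
noncomputable def gromovProd {X : Type*} [MetricSpace X] (x z y : X) : ℝ :=
  (dist y x + dist y z - dist x z) / 2

/-- A choice `F x y` of a unit speed geodesic from `x` to `y` for all `x`, `y`, such that all
triangles formed by chosen geodesics are `δ`-thin. No compatibility between `F x y` and `F y x` is
required. -/
structure ThinGeodesics {X : Type*} [MetricSpace X] (F : X → X → ℝ → X) (δ : ℝ) : Prop where
  source : ∀ x y, F x y 0 = x
  target : ∀ x y, F x y (dist x y) = y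
  isom : ∀ x y, ∀ s ∈ Set.Icc 0 (dist x y), ∀ t ∈ Set.Icc 0 (dist x y),
    dist (F x y s) (F x y t) = |s - t|
  thin : ∀ x y z, ∀ s ∈ Set.Icc 0 (dist x y),
    (∃ r ∈ Set.Icc 0 (dist y z), dist (F x y s) (F y z r) ≤ δ) ∨
    (∃ r ∈ Set.Icc 0 (dist x z), dist (F x y s) (F x z r) ≤ δ)

theorem exists_thinGeodesics {X : Type*} [MetricSpace X] {δ : ℝ} (hX : GeodesicSpace X)
    (hδ : DeltaHyperbolic X δ) : ∃ F : X → X → ℝ → X, ThinGeodesics F δ := by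
  choose F h0 h1 h2 using hX
  refine ⟨F, h0, h1, fun x y => (h2 x y).2, fun x y z s hs => ?_⟩
  obtain ⟨p, hp, hd⟩ := hδ x y z (F x y) (F y z) (F x z) ⟨h0 x y, h1 x y, h2 x y⟩
    ⟨h0 y z, h1 y z, h2 y z⟩ ⟨h0 x z, h1 x z, h2 x z⟩ s hs
  rcases hp with ⟨r, hr, rfl⟩ | ⟨r, hr, rfl⟩
  · exact Or.inl ⟨r, hr, hd⟩
  · exact Or.inr ⟨r, hr, hd⟩

namespace ThinGeodesics

variable {X : Type*} [MetricSpace X] {F : X → X → ℝ → X} {δ : ℝ}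

theorem dist_source (h : ThinGeodesics F δ) (x y : X) {s : ℝ} (hs : s ∈ Set.Icc 0 (dist x y)) :
    dist x (F x y s) = s := by
  have := h.isom x y 0 ⟨le_rfl, dist_nonneg⟩ s hs
  rw [h.source] at this
  rw [this, zero_sub, abs_neg, abs_of_nonneg hs.1]

theorem dist_target (h : ThinGeodesics F δ) (x y : X) {s : ℝ} (hs : s ∈ Set.Icc 0 (dist x y)) :
    dist (F x y s) y = dist x y - s := by
  have := h.isom x y s hs (dist x y) ⟨dist_nonneg, le_rfl⟩
  rw [h.target] at this
  rw [this, abs_sub_comm, abs_of_nonneg (by linarith [hs.2])]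

/-- Strictly before the Gromov product (with margin `δ`), the geodesics from `y` to `x` and to `z`
are `2δ`-close at equal times: the thin triangle cannot bring `F y x r` close to the far
side `F x z`. -/
theorem insize_aux (h : ThinGeodesics F δ) (x y z : X) {r : ℝ} (hr0 : 0 ≤ r)
    (hr : r + δ < gromovProd x z y) (hx : r ≤ dist y x) (hz : r ≤ dist y z) :
    dist (F y x r) (F y z r) ≤ 2 * δ := by
  have hrx : r ∈ Set.Icc 0 (dist y x) := ⟨hr0, hx⟩
  have hrz : r ∈ Set.Icc 0 (dist y z) := ⟨hr0, hz⟩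
  unfold gromovProd at hr
  rcases h.thin y x z r hrx with ⟨q, hq, hd⟩ | ⟨q, hq, hd⟩
  · exfalso
    have h1 := h.dist_source y x hrx
    have h2 := h.dist_target y x hrx
    have h3 := h.dist_source x z hq
    have h4 := h.dist_target x z hq
    have h5 := dist_triangle y (F y x r) z
    have h6 := dist_triangle (F y x r) (F x z q) z
    have h7 := dist_triangle (F y x r) (F x z q) x
    rw [dist_comm (F x z q) x] at h7
    linarith
  · have h1 := h.dist_source y x hrx
    have h3 := h.dist_source y z hq
    have h4 := h.isom y z q hq r hrz
    have h5 := dist_triangle y (F y x r) (F y z q)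
    have h6 := dist_triangle y (F y z q) (F y x r)
    rw [dist_comm (F y z q) (F y x r)] at h6
    have h7 : |q - r| ≤ δ := abs_le.2 ⟨by linarith, by linarith⟩
    have h8 := dist_triangle (F y x r) (F y z q) (F y z r)
    linarith

theorem insize (h : ThinGeodesics F δ) (hδ : 0 < δ) (x y z : X) {r : ℝ} (hr0 : 0 ≤ r)
    (hr : r ≤ gromovProd x z y) : dist (F y x r) (F y z r) ≤ 6 * δ := by
  have hx : r ≤ dist y x := by
    unfold gromovProd at hr
    linarith [dist_triangle y x z]
  have hz : r ≤ dist y z := by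
    unfold gromovProd at hr
    linarith [dist_triangle y z x, dist_comm x z]
  have hrx : r ∈ Set.Icc 0 (dist y x) := ⟨hr0, hx⟩
  have hrz : r ∈ Set.Icc 0 (dist y z) := ⟨hr0, hz⟩
  by_cases h2 : r < 2 * δ
  · have h1 := h.dist_source y x hrx
    have h3 := h.dist_source y z hrz
    have h4 := dist_triangle (F y x r) y (F y z r)
    rw [dist_comm (F y x r) y] at h4
    linarith
  · push Not at h2
    have h1 := h.insize_aux x y z (r := r - 2 * δ) (by linarith) (by linarith) (by linarith)
      (by linarith)
    have h3 := h.isom y x r hrx (r - 2 * δ) ⟨by linarith, by linarith⟩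
    have h4 := h.isom y z (r - 2 * δ) ⟨by linarith, by linarith⟩ r hrz
    have e1 : |r - (r - 2 * δ)| = 2 * δ := by
      rw [abs_of_nonneg (by linarith)]; ring
    have e2 : |r - 2 * δ - r| = 2 * δ := by
      rw [abs_of_nonpos (by linarith)]; ring
    have h5 := dist_triangle4 (F y x r) (F y x (r - 2 * δ)) (F y z (r - 2 * δ)) (F y z r)
    linarith

theorem four_point (h : ThinGeodesics F δ) (hδ : 0 < δ) (x y z w : X) :
    min (gromovProd x y w) (gromovProd y z w) - 6 * δ ≤ gromovProd x z w := by
  set m := min (gromovProd x y w) (gromovProd y z w) with hm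
  have m1 : m ≤ gromovProd x y w := min_le_left _ _
  have m2 : m ≤ gromovProd y z w := min_le_right _ _
  have m0 : 0 ≤ m := by
    refine le_min ?_ ?_ <;> unfold gromovProd
    · linarith [dist_triangle x w y, dist_comm x w]
    · linarith [dist_triangle y w z, dist_comm y w]
  have h1 := h.insize hδ x w y m0 m1
  have h2 := h.insize hδ y w z m0 m2
  have hx : m ∈ Set.Icc 0 (dist w x) := by
    refine ⟨m0, ?_⟩
    unfold gromovProd at m1
    linarith [dist_triangle w x y]
  have hz : m ∈ Set.Icc 0 (dist w z) := by
    refine ⟨m0, ?_⟩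
    unfold gromovProd at m2
    linarith [dist_triangle w z y, dist_comm y z]
  have h3 := h.dist_target w x hx
  have h4 := h.dist_target w z hz
  have h5 := dist_triangle (F w x m) (F w y m) (F w z m)
  have h6 := dist_triangle4 x (F w x m) (F w z m) z
  rw [dist_comm x (F w x m)] at h6
  rw [gromovProd]
  linarith

/-! ### Logarithmic bounds along quasigeodesics -/

/-- Exponential divergence: a geodesic joining two points of a path of parameter length at most
`2 ^ n` is within `n δ + c` of the path, where `c` bounds the displacement over unit time. The
path need not be continuous. -/
theorem log_close (h : ThinGeodesics F δ) {γ : ℝ → X} {a b c : ℝ}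
    (hγ : ∀ u ∈ Set.Icc a b, ∀ v ∈ Set.Icc a b, |u - v| ≤ 1 → dist (γ u) (γ v) ≤ c) (n : ℕ) :
    ∀ u ∈ Set.Icc a b, ∀ v ∈ Set.Icc a b, |u - v| ≤ 2 ^ n →
      ∀ r ∈ Set.Icc 0 (dist (γ u) (γ v)),
        ∃ w ∈ Set.uIcc u v, dist (F (γ u) (γ v) r) (γ w) ≤ n * δ + c := by
  induction n with
  | zero =>
    intro u hu v hv huv r hr
    refine ⟨u, Set.left_mem_uIcc, ?_⟩
    rw [dist_comm, h.dist_source _ _ hr]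
    have := hγ u hu v hv (by simpa using huv)
    simpa using hr.2.trans this
  | succ n ih =>
    intro u hu v hv huv r hr
    have hm : (u + v) / 2 ∈ Set.uIcc u v := by
      rw [Set.mem_uIcc]
      rcases le_total u v with h' | h'
      · left; constructor <;> linarith
      · right; constructor <;> linarith
    have hmab : (u + v) / 2 ∈ Set.Icc a b := by
      constructor <;> linarith [hu.1, hu.2, hv.1, hv.2]
    rw [pow_succ] at huv
    have hum : |u - (u + v) / 2| ≤ 2 ^ n := by
      rw [abs_le] at huv ⊢
      constructor <;> linarith [huv.1, huv.2]
    have hvm : |v - (u + v) / 2| ≤ 2 ^ n := by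
      rw [abs_le] at huv ⊢
      constructor <;> linarith [huv.1, huv.2]
    rcases h.thin (γ u) (γ v) (γ ((u + v) / 2)) r hr with ⟨q, hq, hd⟩ | ⟨q, hq, hd⟩
    · obtain ⟨w, hw, hwd⟩ := ih v hv _ hmab hvm q hq
      refine ⟨w, Set.uIcc_subset_uIcc Set.right_mem_uIcc hm hw, ?_⟩
      refine (dist_triangle _ _ _).trans ((add_le_add hd hwd).trans ?_)
      push_cast
      linarith
    · obtain ⟨w, hw, hwd⟩ := ih u hu _ hmab hum q hq
      refine ⟨w, Set.uIcc_subset_uIcc Set.left_mem_uIcc hm hw, ?_⟩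
      refine (dist_triangle _ _ _).trans ((add_le_add hd hwd).trans ?_)
      push_cast
      linarith

/-- Logarithmic bound for the Gromov product along a quasigeodesic of parameter length
`2 * 2 ^ n`; the bound is linear in `n`. -/
theorem gromov_small (h : ThinGeodesics F δ) (hδ : 0 < δ) {γ : ℝ → X} {l e D u : ℝ}
    (hl : 1 ≤ l) {n : ℕ} (hD : D = n * δ + (l + e))
    (hγ : IsQuasigeodesicOn l e γ (u - 2 ^ n) (u + 2 ^ n)) :
    gromovProd (γ (u - 2 ^ n)) (γ (u + 2 ^ n)) (γ u) ≤
      D + l * (l * (2 * D + 6 * δ + e)) + e := by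
  have hp : (0 : ℝ) < 2 ^ n := by positivity
  have hstep : ∀ v ∈ Set.Icc (u - 2 ^ n) (u + 2 ^ n), ∀ w ∈ Set.Icc (u - 2 ^ n) (u + 2 ^ n),
      |v - w| ≤ 1 → dist (γ v) (γ w) ≤ l + e := by
    intro v hv w hw hvw
    have := (hγ v hv w hw).2
    nlinarith
  have hu : u ∈ Set.Icc (u - 2 ^ n) (u + 2 ^ n) := ⟨by linarith, by linarith⟩
  have hu1 : u - 2 ^ n ∈ Set.Icc (u - 2 ^ n) (u + 2 ^ n) := ⟨by linarith, by linarith⟩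
  have hu2 : u + 2 ^ n ∈ Set.Icc (u - 2 ^ n) (u + 2 ^ n) := ⟨by linarith, by linarith⟩
  set x := γ (u - 2 ^ n)
  set z := γ (u + 2 ^ n)
  set y := γ u
  set g := gromovProd x z y with hg
  have hg' : g = (dist y x + dist y z - dist x z) / 2 := rfl
  have g0 : 0 ≤ g := by linarith [dist_triangle x y z, dist_comm x y]
  have gx : g ∈ Set.Icc 0 (dist y x) := ⟨g0, by linarith [dist_triangle y x z]⟩
  have gz : g ∈ Set.Icc 0 (dist y z) :=
    ⟨g0, by linarith [dist_triangle y z x, dist_comm x z]⟩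
  have h6 := h.insize hδ x y z g0 le_rfl
  obtain ⟨v, hv, hvd⟩ := h.log_close hstep n u hu _ hu1
    (by rw [abs_of_nonneg] <;> linarith) g gx
  obtain ⟨w, hw, hwd⟩ := h.log_close hstep n u hu _ hu2
    (by rw [abs_of_nonpos] <;> linarith) g gz
  rw [Set.uIcc_of_ge (by linarith)] at hv
  rw [Set.uIcc_of_le (by linarith)] at hw
  rw [← hD] at hvd hwd
  have hvI : v ∈ Set.Icc (u - 2 ^ n) (u + 2 ^ n) := ⟨hv.1, by linarith [hv.2]⟩
  have hwI : w ∈ Set.Icc (u - 2 ^ n) (u + 2 ^ n) := ⟨by linarith [hw.1], hw.2⟩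
  have hvw : dist (γ v) (γ w) ≤ 2 * D + 6 * δ := by
    have := dist_triangle4 (γ v) (F y x g) (F y z g) (γ w)
    rw [dist_comm (γ v) (F y x g)] at this
    change dist (F y x g) (γ v) ≤ D at hvd
    change dist (F y z g) (γ w) ≤ D at hwd
    linarith
  have q1 := (hγ v hvI w hwI).1
  have q2 := (hγ u hu v hvI).2
  have l0 : 0 < l := by linarith
  have hvw' : |v - w| ≤ l * (2 * D + 6 * δ + e) := by
    rw [← div_le_iff₀' l0]
    have : |v - w| / l = 1 / l * |v - w| := by ring
    linarith
  have huv : |u - v| ≤ |v - w| := by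
    rw [abs_of_nonneg (by linarith [hv.2]), abs_sub_comm, abs_of_nonneg (by linarith [hv.2, hw.1])]
    linarith [hw.1]
  have q3 : dist y (F y x g) = g := h.dist_source y x gx
  have q4 := dist_triangle y (γ v) (F y x g)
  rw [dist_comm (γ v)] at q4
  have q5 : l * |u - v| ≤ l * (l * (2 * D + 6 * δ + e)) :=
    mul_le_mul_of_nonneg_left (huv.trans hvw') l0.le
  have q6 : dist y (γ v) ≤ l * |u - v| + e := q2
  linarith

/-! ### Chains with small Gromov products -/

/-- A chain whose steps are longer than twice its Gromov products (up to a multiple of `δ`) makes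
linear progress. The Gromov product of `x 0` and `x (i+1)` at `x i` is carried along. -/
theorem chain_growth (h : ThinGeodesics F δ) (hδ : 0 < δ) {x : ℕ → X} {n : ℕ} {C : ℝ}
    (hC : 0 ≤ C)
    (hlong : ∀ i, i + 1 ≤ n → 2 * C + 12 * δ + 1 ≤ dist (x i) (x (i + 1)))
    (hprod : ∀ i, i + 2 ≤ n → gromovProd (x i) (x (i + 2)) (x (i + 1)) ≤ C) :
    (n : ℝ) ≤ dist (x 0) (x n) := by
  have key : ∀ i, i + 1 ≤ n → gromovProd (x 0) (x (i + 1)) (x i) ≤ C + 6 * δ ∧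
      ((i + 1 : ℕ) : ℝ) ≤ dist (x 0) (x (i + 1)) := by
    intro i
    induction i with
    | zero =>
      intro hi
      have := hlong 0 hi
      refine ⟨?_, ?_⟩
      · simp only [gromovProd, dist_self, zero_add]
        linarith
      · simp only [zero_add] at this ⊢
        push_cast
        linarith
    | succ i ih =>
      intro hi
      obtain ⟨h1, h2⟩ := ih (by omega)
      have l1 := hlong i (by omega)
      have l2 := hlong (i + 1) hi
      have p := hprod i (by omega)
      have f := h.four_point hδ (x i) (x 0) (x (i + 2)) (x (i + 1))
      have hlt : C + 6 * δ < gromovProd (x i) (x 0) (x (i + 1)) := by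
        unfold gromovProd at h1 ⊢
        rw [dist_comm (x (i + 1)) (x i), dist_comm (x (i + 1)) (x 0)]
        rw [dist_comm (x i) (x 0)] at h1 ⊢
        linarith
      have hg : gromovProd (x 0) (x (i + 2)) (x (i + 1)) ≤ C + 6 * δ := by
        rcases min_le_iff.1 (show _ ≤ C + 6 * δ by linarith) with h' | h'
        · linarith
        · exact h'
      refine ⟨hg, ?_⟩
      unfold gromovProd at hg
      rw [dist_comm (x (i + 1)) (x 0)] at hg
      have e : i + 1 + 1 = i + 2 := rfl
      rw [e] at l2 ⊢
      push_cast at h2 ⊢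
      linarith
  rcases n with _ | n
  · simp
  · exact (key n le_rfl).2

end ThinGeodesics

/-! ### From local to global -/

/-- The scale `2 ^ n` eventually dominates any affine function of `n`. -/
theorem exists_scale (A B : ℝ) : ∃ n : ℕ, A * n + B ≤ 2 ^ n := by
  have h1 : Filter.Tendsto (fun n : ℕ => (n : ℝ) ^ 1 / 2 ^ n) Filter.atTop (nhds 0) :=
    tendsto_pow_const_div_const_pow_of_one_lt 1 (by norm_num)
  have h2 : Filter.Tendsto (fun n : ℕ => (n : ℝ) ^ 0 / 2 ^ n) Filter.atTop (nhds 0) :=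
    tendsto_pow_const_div_const_pow_of_one_lt 0 (by norm_num)
  have h3 : Filter.Tendsto (fun n : ℕ => A * ((n : ℝ) ^ 1 / 2 ^ n) + B * ((n : ℝ) ^ 0 / 2 ^ n))
      Filter.atTop (nhds 0) := by
    simpa using (h1.const_mul A).add (h2.const_mul B)
  obtain ⟨n, hn⟩ := (h3.eventually_le_const (show (0 : ℝ) < 1 by norm_num)).exists
  refine ⟨n, ?_⟩
  have hp : (0 : ℝ) < 2 ^ n := by positivity
  have : A * ((n : ℝ) ^ 1 / 2 ^ n) + B * ((n : ℝ) ^ 0 / 2 ^ n) = (A * n + B) / 2 ^ n := by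
    field_simp
  rw [this, div_le_one hp] at hn
  exact hn

/-- A local quasigeodesic whose scale `L = 2 ^ n` is large compared with the logarithmic bound of
`ThinGeodesics.gromov_small` satisfies global linear bounds. -/
theorem global_bounds {X : Type*} [MetricSpace X] {F : X → X → ℝ → X} {δ : ℝ}
    (h : ThinGeodesics F δ) (hδ : 0 < δ) {γ : ℝ → X} {a b l e D C L : ℝ} (hl : 1 ≤ l) (he : 0 ≤ e)
    {n : ℕ} (hL : L = 2 ^ n) (hD : D = n * δ + (l + e))
    (hC : C = D + l * (l * (2 * D + 6 * δ + e)) + e)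
    (hbig : l * (2 * C + 12 * δ + 1 + e) ≤ L)
    (hγ : ∀ s t : ℝ, a ≤ s → s ≤ t → t ≤ b → t - s ≤ 2 * L → IsQuasigeodesicOn l e γ s t)
    {s t : ℝ} (has : a ≤ s) (hst : s ≤ t) (htb : t ≤ b) :
    (t - s) / L - (1 + l * L + e) ≤ dist (γ s) (γ t) ∧
      dist (γ s) (γ t) ≤ (l * L + e) * (t - s) + (l * L + e) := by
  have L1 : 1 ≤ L := hL ▸ one_le_pow₀ (by norm_num)
  have L0 : 0 < L := by linarith
  have l0 : 0 < l := by linarith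
  have D0 : 0 ≤ D := by rw [hD]; positivity
  have C0 : 0 ≤ C := by rw [hC]; positivity
  set N := ⌊(t - s) / L⌋₊ with hN
  have hN1 : (N : ℝ) ≤ (t - s) / L := Nat.floor_le (div_nonneg (by linarith) L0.le)
  have hN2 : (t - s) / L < N + 1 := Nat.lt_floor_add_one _
  have hN1' : N * L ≤ t - s := (le_div_iff₀ L0).1 hN1
  have hN2' : t - s < (N + 1) * L := (div_lt_iff₀ L0).1 hN2
  -- parameters of the division points
  have hpar : ∀ i : ℕ, i ≤ N → a ≤ s + i * L ∧ s + i * L ≤ t := by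
    intro i hi
    have hi' : (i : ℝ) ≤ N := by exact_mod_cast hi
    have : (0 : ℝ) ≤ i * L := by positivity
    have := mul_le_mul_of_nonneg_right hi' L0.le
    constructor <;> linarith
  have hqg : ∀ u v : ℝ, a ≤ u → u ≤ v → v ≤ b → v - u ≤ 2 * L →
      1 / l * (v - u) - e ≤ dist (γ u) (γ v) ∧ dist (γ u) (γ v) ≤ l * (v - u) + e := by
    intro u v hu huv hv hd
    have := hγ u v hu huv hv hd u ⟨le_rfl, huv⟩ v ⟨huv, le_rfl⟩
    rwa [abs_sub_comm, abs_of_nonneg (by linarith)] at this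
  have hstep : ∀ i : ℕ, i + 1 ≤ N →
      1 / l * L - e ≤ dist (γ (s + i * L)) (γ (s + (i + 1 : ℕ) * L)) ∧
        dist (γ (s + i * L)) (γ (s + (i + 1 : ℕ) * L)) ≤ l * L + e := by
    intro i hi
    have h1 := hpar i (by omega)
    have h2 := hpar (i + 1) hi
    have e1 : s + (i + 1 : ℕ) * L - (s + i * L) = L := by push_cast; ring
    have := hqg (s + i * L) (s + (i + 1 : ℕ) * L) h1.1 (by linarith) (h2.2.trans htb)
      (by linarith)
    rwa [e1] at this
  have htail : dist (γ (s + N * L)) (γ t) ≤ l * L + e := by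
    have h1 := hpar N le_rfl
    have h2 := (hqg (s + N * L) t h1.1 h1.2 htb (by linarith)).2
    have h3 : l * (t - (s + N * L)) ≤ l * L :=
      mul_le_mul_of_nonneg_left (by linarith) l0.le
    linarith
  have hup : ∀ i : ℕ, i ≤ N → dist (γ s) (γ (s + i * L)) ≤ i * (l * L + e) := by
    intro i
    induction i with
    | zero => intro _; simp
    | succ i ih =>
      intro hi
      have h1 := ih (by omega)
      have h2 := (hstep i hi).2
      have h3 := dist_triangle (γ s) (γ (s + i * L)) (γ (s + (i + 1 : ℕ) * L))
      have e1 : ((i + 1 : ℕ) : ℝ) * (l * L + e) = i * (l * L + e) + (l * L + e) := by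
        push_cast; ring
      linarith
  have hlow : (N : ℝ) ≤ dist (γ s) (γ (s + N * L)) := by
    have := h.chain_growth hδ (x := fun i : ℕ => γ (s + i * L)) (n := N) (C := C) C0 ?_ ?_
    · simpa using this
    · intro i hi
      refine le_trans ?_ (hstep i hi).1
      have : 2 * C + 12 * δ + 1 + e ≤ L / l := (le_div_iff₀' l0).2 hbig
      have e1 : L / l = 1 / l * L := by ring
      linarith
    · intro i hi
      have h1 := hpar i (by omega)
      have h2 := hpar (i + 2) hi
      have e1 : s + (i : ℝ) * L = s + (i + 1 : ℕ) * L - 2 ^ n := by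
        rw [← hL]; push_cast; ring
      have e2 : s + ((i + 2 : ℕ) : ℝ) * L = s + (i + 1 : ℕ) * L + 2 ^ n := by
        rw [← hL]; push_cast; ring
      have := h.gromov_small hδ (γ := γ) (u := s + (i + 1 : ℕ) * L) hl hD ?_
      · rw [← hC, ← e1, ← e2] at this
        exact this
      · rw [← e1, ← e2]
        have e3 : s + ((i + 2 : ℕ) : ℝ) * L - (s + i * L) = 2 * L := by push_cast; ring
        exact hγ _ _ h1.1 (by linarith) (h2.2.trans htb) e3.le
  constructor
  · have := dist_triangle (γ s) (γ t) (γ (s + N * L))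
    rw [dist_comm (γ t)] at this
    linarith
  · have h1 := dist_triangle (γ s) (γ (s + N * L)) (γ t)
    have h2 := hup N le_rfl
    have h3 : (t - s) / L ≤ t - s := div_le_self (by linarith) L1
    have h4 : (N : ℝ) * (l * L + e) ≤ (t - s) * (l * L + e) :=
      mul_le_mul_of_nonneg_right (hN1.trans h3) (by positivity)
    linarith

/-- **Local-to-global principle for quasigeodesics in hyperbolic spaces.**
For every `δ ≥ 0` and all integers `λ ≥ 1` and `ε ≥ 0` there exist constants `K`, `λ' ≥ 1`
and `ε' ≥ 0`, depending only on `δ`, `λ` and `ε`, such that in every `δ`-hyperbolic geodesic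
metric space `X`, every path `γ : [a,b] → X` whose restriction to every subinterval of length
at most `K` is a `(λ,ε)`-quasigeodesic is itself a `(λ',ε')`-quasigeodesic. -/
theorem local_to_global_quasigeodesics :
    ∀ δ : ℝ, 0 ≤ δ → ∀ lam : ℤ, 1 ≤ lam → ∀ eps : ℤ, 0 ≤ eps →
      ∃ K lam' eps' : ℝ, 1 ≤ lam' ∧ 0 ≤ eps' ∧
        ∀ (X : Type) (_ : MetricSpace X), GeodesicSpace X → DeltaHyperbolic X δ →
          ∀ (a b : ℝ) (γ : ℝ → X), a ≤ b →
            (∀ s t : ℝ, a ≤ s → s ≤ t → t ≤ b → t - s ≤ K →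
              IsQuasigeodesicOn (lam : ℝ) (eps : ℝ) γ s t) →
            IsQuasigeodesicOn lam' eps' γ a b := by
  intro δ hδ lam hlam eps heps
  have hl : (1 : ℝ) ≤ lam := by exact_mod_cast hlam
  have he : (0 : ℝ) ≤ eps := by exact_mod_cast heps
  set l : ℝ := (lam : ℝ)
  set e : ℝ := (eps : ℝ)
  have l0 : 0 < l := by linarith
  -- `insize` needs a positive constant, so `δ` is replaced by `δ + 1`
  obtain ⟨d, hd⟩ : ∃ d, d = δ + 1 := ⟨_, rfl⟩
  have d0 : 0 < d := by linarith
  -- the inequality `hbig` of `global_bounds`, with its left side sorted as an affine function of `n`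
  obtain ⟨n, hn⟩ := exists_scale (l * (2 * (d + l * (l * (2 * d)))))
    (l * (2 * ((l + e) + l * (l * (2 * (l + e) + 6 * d + e)) + e) + 12 * d + 1 + e))
  obtain ⟨L, hL⟩ : ∃ L : ℝ, L = 2 ^ n := ⟨_, rfl⟩
  have L1 : 1 ≤ L := hL ▸ one_le_pow₀ (by norm_num)
  have L0 : 0 < L := by linarith
  have lL : L ≤ l * L := le_mul_of_one_le_left L0.le hl
  have hk : 0 < l * L + e := by positivity
  refine ⟨2 * L, l * L + e, 1 + l * L + e, by linarith, by linarith, ?_⟩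
  intro X _ hX hhyp a b γ _ hγ
  obtain ⟨F, hF⟩ := exists_thinGeodesics hX (δ := d) (by
    intro x y z f g h hf hg hh s hs
    obtain ⟨p, hp, hpd⟩ := hhyp x y z f g h hf hg hh s hs
    exact ⟨p, hp, by linarith⟩)
  have main : ∀ s t : ℝ, a ≤ s → s ≤ t → t ≤ b →
      1 / (l * L + e) * (t - s) - (1 + l * L + e) ≤ dist (γ s) (γ t) ∧
        dist (γ s) (γ t) ≤ (l * L + e) * (t - s) + (1 + l * L + e) := by
    intro s t has hst htb
    obtain ⟨h1, h2⟩ := global_bounds hF d0 hl he hL rfl rfl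
      (by rw [hL]; refine le_trans (le_of_eq ?_) hn; ring) hγ has hst htb
    have h3 : 1 / (l * L + e) * (t - s) ≤ (t - s) / L := by
      rw [one_div_mul_eq_div]
      exact div_le_div_of_nonneg_left (by linarith) L0 (by linarith)
    constructor <;> linarith
  intro s hs t ht
  rcases le_total s t with hst | hst
  · rw [abs_sub_comm, abs_of_nonneg (by linarith)]
    exact main s t hs.1 hst ht.2
  · rw [abs_of_nonneg (by linarith), dist_comm]
    exact main t s ht.1 hst hs.2
end

section
/- Let Γ be a finite simplicial graph which is connected and anti-connected, and let A_Γ be its right-angled Artin group. For every nontrivial element g of A_Γ, the star length |g|_* is equal to the smallest k such that there exists a word w = w₁⋯w_k over the alphabet V(Γ)^{±1} representing g such that each wᵢ is a nontrivial star-block and w is in normal form for A_Γ. -/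
/-- The star of the vertex `v` in the graph `Γ`: `v` together with its neighbors. -/
def vertexStar {V : Type*} (Γ : SimpleGraph V) (v : V) : Set V :=
  insert v {u | Γ.Adj v u}

/-- The subgroup `⟨St(v)⟩` of `A_Γ` generated by the star of the vertex `v`. -/
def starSubgroup {V : Type*} (Γ : SimpleGraph V) (v : V) : Subgroup (RAAG Γ) :=
  Subgroup.closure (PresentedGroup.of '' vertexStar Γ v)

/-- The star length `|g|_*` of an element `g` of `A_Γ`: the least `l` such that `g` is a
product of `l` elements of `⋃_{v ∈ V(Γ)} ⟨St(v)⟩`. -/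
noncomputable def starLength {V : Type*} (Γ : SimpleGraph V) (g : RAAG Γ) : ℕ :=
  sInf {l : ℕ | ∃ factors : List (RAAG Γ), factors.length = l ∧
    (∀ x ∈ factors, ∃ v : V, x ∈ starSubgroup Γ v) ∧ factors.prod = g}

/-- A word over `V(Γ)^{±1}` is a star-block if all its letters lie in the star of a single
vertex. -/
def IsStarBlock {V : Type*} (Γ : SimpleGraph V) (w : List (V × Bool)) : Prop :=
  ∃ v : V, ∀ p ∈ w, p.1 ∈ vertexStar Γ v

/-- A word over `V(Γ)^{±1}` is in normal form for `A_Γ` if it is freely reduced and contains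
no subword `x^ε u x^{-ε}` where `x` commutes in `A_Γ` with every letter of `u` (the case of an
empty `u` expresses free reducedness). -/
def IsNormalForm {V : Type*} (Γ : SimpleGraph V) (w : List (V × Bool)) : Prop :=
  ¬ ∃ (p u s : List (V × Bool)) (x : V) (ε : Bool),
      w = p ++ (x, ε) :: (u ++ (x, !ε) :: s) ∧
      ∀ q ∈ u, x = q.1 ∨ Γ.Adj x q.1

section StarLength

variable {V : Type*} (Γ : SimpleGraph V)

/-- The element of `A_Γ` represented by a single letter. -/
def letterVal (p : V × Bool) : RAAG Γ :=
  if p.2 then PresentedGroup.of p.1 else (PresentedGroup.of p.1)⁻¹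

lemma wordProd_nil : wordProd Γ [] = 1 := rfl

lemma wordProd_cons (p : V × Bool) (w : List (V × Bool)) :
    wordProd Γ (p :: w) = letterVal Γ p * wordProd Γ w := by
  simp [wordProd, letterVal]

lemma wordProd_append (w₁ w₂ : List (V × Bool)) :
    wordProd Γ (w₁ ++ w₂) = wordProd Γ w₁ * wordProd Γ w₂ := by
  simp [wordProd]

lemma wordProd_flatten (ws : List (List (V × Bool))) :
    wordProd Γ ws.flatten = (ws.map (wordProd Γ)).prod := by
  induction ws with
  | nil => rfl
  | cons w ws ih => simp [wordProd_append, ih]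

lemma letterVal_not (x : V) (ε : Bool) : letterVal Γ (x, !ε) = (letterVal Γ (x, ε))⁻¹ := by
  cases ε <;> simp [letterVal]

lemma commute_of_adj {x y : V} (h : Γ.Adj x y) :
    Commute (PresentedGroup.of x : RAAG Γ) (PresentedGroup.of y) := by
  have h1 : (PresentedGroup.mk (raagRels Γ)) (FreeGroup.of x * FreeGroup.of y *
      (FreeGroup.of x)⁻¹ * (FreeGroup.of y)⁻¹) = 1 :=
    PresentedGroup.one_of_mem ⟨x, y, h, rfl⟩
  simp only [map_mul, map_inv] at h1
  have h2 := mul_inv_eq_one.mp h1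
  exact mul_inv_eq_iff_eq_mul.mp h2

lemma commute_letterVal {p q : V × Bool} (h : p.1 = q.1 ∨ Γ.Adj p.1 q.1) :
    Commute (letterVal Γ p) (letterVal Γ q) := by
  have hc : Commute (PresentedGroup.of p.1 : RAAG Γ) (PresentedGroup.of q.1) := by
    rcases h with h | h
    · rw [h]
    · exact commute_of_adj Γ h
  unfold letterVal
  split_ifs <;> simp [hc]

lemma commute_letterVal_wordProd {p : V × Bool} {u : List (V × Bool)}
    (h : ∀ q ∈ u, p.1 = q.1 ∨ Γ.Adj p.1 q.1) :
    Commute (letterVal Γ p) (wordProd Γ u) := by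
  induction u with
  | nil => exact Commute.one_right _
  | cons q u ih =>
    rw [wordProd_cons]
    exact (commute_letterVal Γ (h q (by simp))).mul_right
      (ih fun r hr => h r (List.mem_cons_of_mem _ hr))

/-- Every word has a subword in normal form representing the same element. -/
lemma exists_normalForm_sublist (w : List (V × Bool)) :
    ∃ t, t.Sublist w ∧ IsNormalForm Γ t ∧ wordProd Γ t = wordProd Γ w := by
  induction hn : w.length using Nat.strong_induction_on generalizing w with
  | _ n ih =>
    by_cases hw : IsNormalForm Γ w
    · exact ⟨w, List.Sublist.refl w, hw, rfl⟩
    · obtain ⟨p, u, s, x, ε, rfl, hu⟩ := not_not.mp hw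
      obtain ⟨t, ht, hnf, hprod⟩ := ih (p ++ (u ++ s)).length
        (by subst hn; simp only [List.length_append, List.length_cons]; omega) _ rfl
      refine ⟨t, ht.trans ?_, hnf, hprod.trans ?_⟩
      · exact (List.Sublist.refl p).append
          ((((List.Sublist.refl u).append (List.sublist_cons_self _ s))).cons _)
      · have hc := (commute_letterVal_wordProd Γ (p := (x, ε)) hu).eq
        simp only [wordProd_append, wordProd_cons, letterVal_not]
        rw [← mul_assoc (letterVal Γ (x, ε)), hc]
        group

/-- A subword of a concatenation of star-blocks is a concatenation of at most as many nonempty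
star-blocks. -/
lemma exists_starBlocks_of_sublist (ws : List (List (V × Bool)))
    (hws : ∀ w ∈ ws, IsStarBlock Γ w) (t : List (V × Bool)) (ht : t.Sublist ws.flatten) :
    ∃ ws' : List (List (V × Bool)), ws'.length ≤ ws.length ∧
      (∀ w ∈ ws', w ≠ [] ∧ IsStarBlock Γ w) ∧ ws'.flatten = t := by
  induction ws generalizing t with
  | nil => exact ⟨[], le_rfl, by simp, by simpa [eq_comm] using ht⟩
  | cons w ws ih =>
    obtain ⟨t₁, t₂, rfl, h₁, h₂⟩ := List.sublist_append_iff.mp (List.flatten_cons ▸ ht)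
    obtain ⟨ws', hlen, hblock, rfl⟩ := ih (fun v hv => hws v (List.mem_cons_of_mem _ hv)) t₂ h₂
    by_cases h : t₁ = []
    · exact ⟨ws', by simp only [List.length_cons]; omega, hblock, by simp [h]⟩
    · obtain ⟨v, hv⟩ := hws w (by simp)
      refine ⟨t₁ :: ws', by simpa using hlen, ?_, by simp⟩
      intro y hy
      rcases List.mem_cons.mp hy with rfl | hy
      · exact ⟨h, v, fun p hp => hv p (h₁.subset hp)⟩
      · exact hblock y hy

lemma wordProd_mem_starSubgroup {v : V} {w : List (V × Bool)}
    (hw : ∀ p ∈ w, p.1 ∈ vertexStar Γ v) : wordProd Γ w ∈ starSubgroup Γ v := by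
  induction w with
  | nil => exact Subgroup.one_mem _
  | cons p w ih =>
    rw [wordProd_cons]
    refine Subgroup.mul_mem _ ?_ (ih fun q hq => hw q (List.mem_cons_of_mem _ hq))
    have hp : (PresentedGroup.of p.1 : RAAG Γ) ∈ starSubgroup Γ v :=
      Subgroup.subset_closure ⟨p.1, hw p (by simp), rfl⟩
    unfold letterVal
    split_ifs
    · exact hp
    · exact Subgroup.inv_mem _ hp

lemma exists_word_of_mem_starSubgroup {v : V} {x : RAAG Γ} (hx : x ∈ starSubgroup Γ v) :
    ∃ w : List (V × Bool), (∀ p ∈ w, p.1 ∈ vertexStar Γ v) ∧ wordProd Γ w = x := by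
  induction hx using Subgroup.closure_induction_left with
  | one => exact ⟨[], by simp, rfl⟩
  | mul_left x hx y hy ih =>
    obtain ⟨a, ha, rfl⟩ := hx
    obtain ⟨w, hw, rfl⟩ := ih
    exact ⟨(a, true) :: w, List.forall_mem_cons.mpr ⟨ha, hw⟩, by simp [wordProd_cons, letterVal]⟩
  | inv_mul_cancel x hx y hy ih =>
    obtain ⟨a, ha, rfl⟩ := hx
    obtain ⟨w, hw, rfl⟩ := ih
    exact ⟨(a, false) :: w, List.forall_mem_cons.mpr ⟨ha, hw⟩, by simp [wordProd_cons, letterVal]⟩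

lemma exists_starBlocks_of_factors (factors : List (RAAG Γ))
    (h : ∀ x ∈ factors, ∃ v : V, x ∈ starSubgroup Γ v) :
    ∃ ws : List (List (V × Bool)), ws.length = factors.length ∧
      (∀ w ∈ ws, IsStarBlock Γ w) ∧ wordProd Γ ws.flatten = factors.prod := by
  induction factors with
  | nil => exact ⟨[], rfl, by simp, rfl⟩
  | cons x l ih =>
    obtain ⟨ws, hlen, hb, hprod⟩ := ih fun z hz => h z (List.mem_cons_of_mem _ hz)
    obtain ⟨v, hv⟩ := h x (by simp)
    obtain ⟨w, hw, rfl⟩ := exists_word_of_mem_starSubgroup Γ hv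
    refine ⟨w :: ws, by simp [hlen], ?_, by
      rw [List.flatten_cons, wordProd_append, hprod, List.prod_cons]⟩
    intro y hy
    rcases List.mem_cons.mp hy with rfl | hy
    · exact ⟨v, hw⟩
    · exact hb y hy

end StarLength

/-- **Star length via normal forms.**
Let `Γ` be a finite simplicial graph which is connected and anti-connected.  For every
nontrivial element `g` of `A_Γ`, the star length `|g|_*` equals the smallest `k` such that
there is a word `w = w₁ ⋯ w_k` representing `g` with each `wᵢ` a nontrivial star-block and
`w` in normal form for `A_Γ`. -/
theorem starLength_eq_min_starBlock_normalForm {V : Type} [Fintype V] [DecidableEq V]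
    (Γ : SimpleGraph V) (hconn : Γ.Connected) (hanti : AntiConnected Γ)
    (g : RAAG Γ) (hg : g ≠ 1) :
    starLength Γ g =
      sInf {k : ℕ | ∃ ws : List (List (V × Bool)), ws.length = k ∧
        (∀ wi ∈ ws, wi ≠ [] ∧ IsStarBlock Γ wi) ∧
        IsNormalForm Γ ws.flatten ∧ wordProd Γ ws.flatten = g} := by
  unfold starLength
  set S := {l : ℕ | ∃ factors : List (RAAG Γ), factors.length = l ∧
    (∀ x ∈ factors, ∃ v : V, x ∈ starSubgroup Γ v) ∧ factors.prod = g}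
  set T := {k : ℕ | ∃ ws : List (List (V × Bool)), ws.length = k ∧
    (∀ wi ∈ ws, wi ≠ [] ∧ IsStarBlock Γ wi) ∧
    IsNormalForm Γ ws.flatten ∧ wordProd Γ ws.flatten = g}
  have hTS : T ⊆ S := by
    rintro k ⟨ws, rfl, hb, -, hprod⟩
    refine ⟨ws.map (wordProd Γ), by simp, ?_, by rw [← wordProd_flatten, hprod]⟩
    intro x hx
    obtain ⟨w, hw, rfl⟩ := List.mem_map.mp hx
    obtain ⟨v, hv⟩ := (hb w hw).2
    exact ⟨v, wordProd_mem_starSubgroup Γ hv⟩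
  have hST : ∀ l ∈ S, ∃ k ∈ T, k ≤ l := by
    rintro l ⟨factors, rfl, hf, hprod⟩
    obtain ⟨ws, hlen, hb, hwp⟩ := exists_starBlocks_of_factors Γ factors hf
    obtain ⟨t, ht, hnf, htp⟩ := exists_normalForm_sublist Γ ws.flatten
    obtain ⟨ws', hlen', hb', rfl⟩ := exists_starBlocks_of_sublist Γ ws hb t ht
    exact ⟨ws'.length, ⟨ws', rfl, hb', hnf, by rw [htp, hwp, hprod]⟩, hlen ▸ hlen'⟩
  rcases S.eq_empty_or_nonempty with hS | hS
  · rw [Set.subset_eq_empty hTS hS, hS]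
  · obtain ⟨k, hk, hkS⟩ := hST _ (Nat.sInf_mem hS)
    exact le_antisymm (Nat.sInf_le (hTS (Nat.sInf_mem ⟨k, hk⟩))) ((Nat.sInf_le hk).trans hkS)
end
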